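/- arXiv:1003.3852 — 5 statements merged into one kernel-verified Lean document; each statement's English description precedes it below -/
import Mathlib

section
/- (Subadditivity of transport costs under disintegration) Let 𝒳₁, 𝒳₂ be Polish spaces with lower semicontinuous cost functions c₁ on 𝒳₁×𝒳₁ and c₂ on 𝒳₂×𝒳₂. Let ν ∈ P(𝒳₁×𝒳₂) with disintegration dν(x₁,x₂) = dν₁(x₁) dν₂^{x₁}(x₂) with respect to the first coordinate (ν₁ being the first marginal of ν and (ν₂^{x₁})_{x₁} a regular conditional distribution of the second coordinate given the first), and let μ₁ ∈ P(𝒳₁), μ₂ ∈ P(𝒳₂). Then 𝒯_{c₁⊕c₂}(ν, μ₁⊗μ₂) ≤ 𝒯_{c₁}(ν₁, μ₁) + ∫_{𝒳₁} 𝒯_{c₂}(ν₂^{x₁}, μ₂) dν₁(x₁). -/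
open MeasureTheory ENNReal

/-- The optimal transport cost `𝒯_c(ν, μ)` associated with the cost function `c`:
the infimum of `∫ c dπ` over all couplings `π` of `ν` and `μ`. -/
noncomputable def optCost {X : Type*} [MeasurableSpace X] (c : X → X → ℝ)
    (ν μ : Measure X) : ℝ≥0∞ :=
  ⨅ (π : Measure (X × X)) (_ : π.map Prod.fst = ν ∧ π.map Prod.snd = μ),
    ∫⁻ p, ENNReal.ofReal (c p.1 p.2) ∂π

open Classical in
/-- The relative entropy `H(ν|μ)`: it equals `∫ h(dν/dμ) dμ` with
`h(t) = t log t - t + 1 ≥ 0` if `ν ≪ μ`, and `+∞` otherwise.  For probability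
measures `ν ≪ μ` this coincides with `∫ log (dν/dμ) dν`. -/
noncomputable def relEntropy {X : Type*} [MeasurableSpace X] (ν μ : Measure X) : ℝ≥0∞ :=
  if ν ≪ μ then
    ∫⁻ x, ENNReal.ofReal ((ν.rnDeriv μ x).toReal * Real.log (ν.rnDeriv μ x).toReal
      - (ν.rnDeriv μ x).toReal + 1) ∂μ
  else ∞

section Helpers

open ProbabilityTheory Filter Topology

lemma glue {X₁ X₂ : Type*} [MeasurableSpace X₁] [MeasurableSpace X₂]
    (ν : Measure (X₁ × X₂)) [IsProbabilityMeasure ν]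
    (κ : Kernel X₁ X₂) [IsMarkovKernel κ] (hκ : ν = ν.fst.compProd κ)
    (μ₁ : Measure X₁) [IsProbabilityMeasure μ₁] (μ₂ : Measure X₂) [IsProbabilityMeasure μ₂]
    (π₁ : Measure (X₁ × X₁)) [IsProbabilityMeasure π₁]
    (h1 : π₁.map Prod.fst = ν.fst) (h2 : π₁.map Prod.snd = μ₁)
    (γ : Kernel X₁ (X₂ × X₂)) [IsMarkovKernel γ] (hf : ∀ x, (γ x).map Prod.fst = κ x)
    (hs : ∀ x, (γ x).map Prod.snd = μ₂)
    (f₁ : X₁ × X₁ → ℝ≥0∞) (hf₁ : Measurable f₁) (f₂ : X₂ × X₂ → ℝ≥0∞) (hf₂ : Measurable f₂) :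
    ∃ π : Measure ((X₁ × X₂) × (X₁ × X₂)), π.map Prod.fst = ν ∧ π.map Prod.snd = μ₁.prod μ₂ ∧
      ∫⁻ p, (f₁ (p.1.1, p.2.1) + f₂ (p.1.2, p.2.2)) ∂π
        = ∫⁻ p, f₁ p ∂π₁ + ∫⁻ x, ∫⁻ p, f₂ p ∂(γ x) ∂ν.fst := by
  let K : Kernel (X₁ × X₁) (X₂ × X₂) := γ.comap Prod.fst measurable_fst
  let T : (X₁ × X₁) × (X₂ × X₂) → (X₁ × X₂) × (X₁ × X₂) :=
    fun p => ((p.1.1, p.2.1), (p.1.2, p.2.2))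
  have hT : Measurable T := by fun_prop
  have key : ∀ F : (X₁ × X₂) × (X₁ × X₂) → ℝ≥0∞, Measurable F →
      ∫⁻ p, F p ∂((π₁.compProd K).map T)
        = ∫⁻ p, ∫⁻ q, F ((p.1, q.1), (p.2, q.2)) ∂(γ p.1) ∂π₁ := by
    intro F hF
    rw [lintegral_map hF hT, Measure.lintegral_compProd (f := fun a => F (T a)) (hF.comp hT)]
    rfl
  refine ⟨(π₁.compProd K).map T, ?_, ?_, ?_⟩
  · refine Measure.ext_of_lintegral _ fun F hF => ?_
    rw [lintegral_map hF measurable_fst, key (fun a => F a.1) (hF.comp measurable_fst)]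
    conv_rhs => rw [hκ, Measure.lintegral_compProd hF, ← h1]
    rw [lintegral_map (by exact hF.lintegral_kernel_prod_right') measurable_fst]
    refine lintegral_congr fun p => ?_
    rw [← hf, lintegral_map (by fun_prop) measurable_fst]
  · refine Measure.ext_of_lintegral _ fun F hF => ?_
    rw [lintegral_map hF measurable_snd, key (fun a => F a.2) (hF.comp measurable_snd)]
    conv_rhs => rw [lintegral_prod _ hF.aemeasurable, ← h2]
    rw [lintegral_map (by exact hF.lintegral_prod_right') measurable_snd]
    refine lintegral_congr fun p => ?_
    rw [← hs p.1, lintegral_map (by fun_prop) measurable_snd]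
  · rw [key _ (by fun_prop), ← h1, lintegral_map (hf₂.lintegral_kernel) measurable_fst,
      ← lintegral_add_left hf₁]
    refine lintegral_congr fun p => ?_
    rw [lintegral_add_left (by fun_prop)]
    simp

/-- Lipschitz regularisation of a nonnegative lsc function. -/
lemma lip_approx {Y : Type*} [PseudoMetricSpace Y] (f : Y → ℝ) (h0 : ∀ y, 0 ≤ f y)
    (hf : LowerSemicontinuous f) :
    ∃ g : ℕ → Y → ℝ, (∀ n p q, g n p ≤ g n q + n * dist p q) ∧ (∀ n p, 0 ≤ g n p) ∧
      (∀ n p, g n p ≤ n) ∧ (∀ n p, g n p ≤ f p) ∧ (∀ p, Monotone fun n => g n p) ∧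
      ∀ p, Tendsto (fun n => g n p) atTop (𝓝 (f p)) := by
  have hb : ∀ (n : ℕ) p, BddBelow (Set.range fun q => f q + n * dist p q) := fun n p =>
    ⟨0, by rintro _ ⟨q, rfl⟩; have := h0 q; positivity⟩
  have hle : ∀ (n : ℕ) p q, ⨅ q, (f q + n * dist p q) ≤ f q + n * dist p q :=
    fun n p q => ciInf_le (hb n p) q
  refine ⟨fun n p => min (n : ℝ) (⨅ q, (f q + n * dist p q)), ?_, ?_, ?_, ?_, ?_, ?_⟩
  · intro n p q
    have : Nonempty Y := ⟨p⟩
    rw [← min_add_add_right]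
    refine min_le_min (by have := dist_nonneg (x := p) (y := q); nlinarith [n.cast_nonneg (α := ℝ), mul_nonneg (n.cast_nonneg (α := ℝ)) this]) ?_
    rw [← sub_le_iff_le_add]
    refine le_ciInf fun r => ?_
    have h1 := hle n p r
    have h2 := mul_le_mul_of_nonneg_left (dist_triangle p q r) (n.cast_nonneg (α := ℝ))
    linarith
  · intro n p
    exact le_min (by positivity) (Real.iInf_nonneg fun q => by have := h0 q; positivity)
  · intro n p; exact min_le_left _ _
  · intro n p; exact (min_le_right _ _).trans (by simpa using hle n p p)
  · intro p n m hnm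
    have : Nonempty Y := ⟨p⟩
    have : (n : ℝ) ≤ m := by exact_mod_cast hnm
    refine min_le_min this (ciInf_mono (hb n p) fun q => ?_)
    gcongr
  · intro p
    have : Nonempty Y := ⟨p⟩
    rw [tendsto_order]
    constructor
    · intro a ha
      obtain ⟨b, hab, hbf⟩ := exists_between ha
      obtain ⟨δ, hδ, hball⟩ := Metric.eventually_nhds_iff.1 (hf p b hbf)
      obtain ⟨N, hN⟩ := exists_nat_gt (max b (b / δ))
      filter_upwards [eventually_ge_atTop N] with n hn
      have hn' : (N : ℝ) ≤ n := by exact_mod_cast hn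
      have hbn : b < n := (le_max_left _ _).trans_lt (hN.trans_le hn')
      have hbn2 : b / δ < n := (le_max_right _ _).trans_lt (hN.trans_le hn')
      refine hab.trans_le (le_min hbn.le (le_ciInf fun q => ?_))
      by_cases hq : dist q p < δ
      · have := hball hq
        have : 0 ≤ (n : ℝ) * dist p q := by positivity
        linarith
      · push Not at hq
        rw [dist_comm] at hq
        rw [div_lt_iff₀ hδ] at hbn2
        have := mul_le_mul_of_nonneg_left hq (n.cast_nonneg (α := ℝ))
        linarith [h0 q]
    · intro a ha
      refine Eventually.of_forall fun n => lt_of_le_of_lt ?_ ha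
      exact (min_le_right _ _).trans (by simpa using hle n p p)

lemma exists_cells {X : Type*} [PseudoMetricSpace X] [TopologicalSpace.SeparableSpace X]
    [Nonempty X] [MeasurableSpace X] [BorelSpace X] (δ : ℝ) (hδ : 0 < δ) :
    ∃ j : X → ℕ, Measurable j ∧ ∀ z z', j z = j z' → dist z z' < δ := by
  classical
  have h : ∀ z : X, ∃ n, dist z (TopologicalSpace.denseSeq X n) < δ / 2 := by
    intro z
    obtain ⟨n, hn⟩ := (TopologicalSpace.denseRange_denseSeq X).exists_dist_lt z (half_pos hδ)
    exact ⟨n, hn⟩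
  refine ⟨fun z => Nat.find (h z), ?_, ?_⟩
  · refine measurable_find h fun n => ?_
    exact (isOpen_lt (by fun_prop) continuous_const).measurableSet
  · intro z z' hz
    have h1 := Nat.find_spec (h z)
    have h2 := Nat.find_spec (h z')
    simp only at hz
    rw [← hz] at h2
    have := dist_triangle_right z z' (TopologicalSpace.denseSeq X (Nat.find (h z)))
    linarith


lemma exists_rat_below (s : ℕ → ℝ≥0∞) (hs : ∑' j, s j = 1) (ε : ℝ≥0∞) (hε : ε ≠ 0) :
    ∃ q : ℕ →₀ ℚ≥0, (∀ j, (((q j : ℚ≥0) : NNReal) : ℝ≥0∞) ≤ s j) ∧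
      1 ≤ ∑' j, (((q j : ℚ≥0) : NNReal) : ℝ≥0∞) + ε := by
  classical
  have hε2 : ε / 2 ≠ 0 := by simpa using hε
  obtain ⟨e, he0, hesum⟩ := ENNReal.exists_pos_sum_of_countable' hε2 ℕ
  have hsfin : ∀ j, s j ≠ ∞ := fun j =>
    ne_top_of_le_ne_top one_ne_top (hs ▸ ENNReal.le_tsum j)
  have hq : ∀ j, ∃ r : ℚ≥0, ((r : NNReal) : ℝ≥0∞) ≤ s j ∧ s j ≤ ((r : NNReal) : ℝ≥0∞) + e j := by
    intro j
    by_cases h : s j = 0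
    · exact ⟨0, by simp [h]⟩
    · have hlt : s j - e j < s j := ENNReal.sub_lt_self (hsfin j) h (he0 j).ne'
      obtain ⟨r, hr0, hr1, hr2⟩ := ENNReal.lt_iff_exists_rat_btwn.1 hlt
      lift r to ℚ≥0 using hr0
      have e1 : (r : NNReal) = Real.toNNReal ((r : ℚ) : ℝ) := by
        apply NNReal.coe_injective
        rw [Real.coe_toNNReal _ (by positivity)]
        rfl
      refine ⟨r, ?_, ?_⟩
      · rw [e1]; exact hr2.le
      · rw [e1]; exact tsub_le_iff_right.1 hr1.le
  choose r hr1 hr2 using hq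
  have hlt : 1 - ε / 2 < ∑' j, s j := by
    rw [hs]; exact ENNReal.sub_lt_self one_ne_top one_ne_zero hε2
  rw [ENNReal.tsum_eq_iSup_sum] at hlt
  obtain ⟨F, hF⟩ := lt_iSup_iff.1 hlt
  refine ⟨Finsupp.onFinset F (fun j => if j ∈ F then r j else 0) (by intro j; simp; tauto), ?_, ?_⟩
  · intro j
    simp only [Finsupp.onFinset_apply]
    split_ifs
    · exact hr1 j
    · simp
  · have h1 : ∑ j ∈ F, s j ≤ ∑ j ∈ F, ((r j : NNReal) : ℝ≥0∞) + ε / 2 := by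
      calc ∑ j ∈ F, s j ≤ ∑ j ∈ F, (((r j : NNReal) : ℝ≥0∞) + e j) := Finset.sum_le_sum fun j _ => hr2 j
        _ = ∑ j ∈ F, ((r j : NNReal) : ℝ≥0∞) + ∑ j ∈ F, e j := Finset.sum_add_distrib
        _ ≤ _ := by gcongr; exact (ENNReal.sum_le_tsum F).trans hesum.le
    have h2 : ∑ j ∈ F, ((r j : NNReal) : ℝ≥0∞) ≤ ∑' j, (((Finsupp.onFinset F (fun j => if j ∈ F then r j else 0) (by intro j; simp; tauto) j : ℚ≥0) : NNReal) : ℝ≥0∞) := by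
      refine le_trans (le_of_eq ?_) (ENNReal.sum_le_tsum F)
      refine Finset.sum_congr rfl fun j hj => ?_
      simp [hj]
    calc (1 : ℝ≥0∞) ≤ ∑ j ∈ F, s j + ε / 2 := tsub_le_iff_right.1 hF.le
      _ ≤ (∑ j ∈ F, ((r j : NNReal) : ℝ≥0∞) + ε / 2) + ε / 2 := by gcongr
      _ = ∑ j ∈ F, ((r j : NNReal) : ℝ≥0∞) + ε := by rw [add_assoc, ENNReal.add_halves]
      _ ≤ _ := by gcongr

lemma lintegral_cells {X : Type*} [MeasurableSpace X] (σ : Measure X) (j : X → ℕ)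
    (hj : Measurable j) (g : ℕ → ℝ≥0∞) :
    ∫⁻ z, g (j z) ∂σ = ∑' n, g n * σ (j ⁻¹' {n}) := by
  rw [← lintegral_map (f := g) (measurable_of_countable g) hj, lintegral_countable']
  refine tsum_congr fun n => ?_
  rw [Measure.map_apply hj (measurableSet_singleton n)]

lemma sum_cells {X : Type*} [MeasurableSpace X] (σ : Measure X) [IsProbabilityMeasure σ]
    (j : X → ℕ) (hj : Measurable j) : ∑' n, σ (j ⁻¹' {n}) = 1 := by
  have := lintegral_cells σ j hj (fun _ => 1)
  simpa using this.symm

/-- Decomposition of a coupling along cells. -/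
lemma decomp {X : Type*} [MeasurableSpace X] (π : Measure (X × X)) [IsProbabilityMeasure π]
    (μ : Measure X) (hμ : π.map Prod.snd = μ)
    (f : X × X → ℝ≥0∞) (hf : Measurable f) (ε : ℝ≥0∞)
    (j : X → ℕ) (hj : Measurable j) (hjf : ∀ z z' y, j z = j z' → f (z, y) ≤ f (z', y) + ε)
    (q : ℕ → ℝ≥0∞) (hq : ∀ n, q n ≤ π.map Prod.fst (j ⁻¹' {n})) :
    ∃ (P : ℕ → Measure X) (η : Measure X), (∀ n, IsProbabilityMeasure (P n)) ∧
      IsProbabilityMeasure η ∧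
      (∀ S, MeasurableSet S → ∑' n, q n * P n S + (1 - ∑' n, q n) * η S = μ S) ∧
      ∃ a : ℕ → ℝ≥0∞, (∀ z, q (j z) * ∫⁻ y, f (z, y) ∂(P (j z)) ≤ a (j z)) ∧
        ∑' n, a n = ∫⁻ p, f p ∂π + ε := by
  classical
  have hpμ : IsProbabilityMeasure μ := hμ ▸ Measure.isProbabilityMeasure_map measurable_snd.aemeasurable
  let B : ℕ → Set (X × X) := fun n => (fun p : X × X => j p.1) ⁻¹' {n}
  have hjm : Measurable (fun p : X × X => j p.1) := hj.comp measurable_fst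
  have hB : ∀ n, MeasurableSet (B n) := fun n => hjm (measurableSet_singleton n)
  have hBr : ∀ n, π.map Prod.fst (j ⁻¹' {n}) = π (B n) := fun n => by
    rw [Measure.map_apply measurable_fst (hj (measurableSet_singleton n))]; rfl
  simp only [hBr] at hq
  have hBdisj : Pairwise (Function.onFun Disjoint B) := fun m n hmn =>
    Disjoint.preimage _ (by simpa using hmn)
  have hBU : ⋃ n, B n = Set.univ := by ext p; simp [B]
  let P : ℕ → Measure X := fun n => if π (B n) = 0 then μ else (π[|B n]).map Prod.snd
  have hP : ∀ n, IsProbabilityMeasure (P n) := by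
    intro n
    by_cases h : π (B n) = 0
    · simpa [P, h] using hpμ
    · have := cond_isProbabilityMeasure (μ := π) h
      simp only [P, h, if_false]
      exact Measure.isProbabilityMeasure_map measurable_snd.aemeasurable
  have hPS : ∀ n S, MeasurableSet S → π (B n) * P n S = π (B n ∩ Prod.snd ⁻¹' S) := by
    intro n S hS
    by_cases h : π (B n) = 0
    · rw [h, zero_mul, measure_mono_null Set.inter_subset_left h]
    · simp only [P, h, if_false]
      rw [Measure.map_apply measurable_snd hS, cond_apply (hB n), ← mul_assoc,
        ENNReal.mul_inv_cancel h (measure_ne_top _ _), one_mul]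
  have hPI : ∀ n (g : X → ℝ≥0∞), Measurable g →
      π (B n) * ∫⁻ y, g y ∂(P n) = ∫⁻ p in B n, g p.2 ∂π := by
    intro n g hg
    by_cases h : π (B n) = 0
    · rw [h, zero_mul, Measure.restrict_eq_zero.2 h, lintegral_zero_measure]
    · simp only [P, h, if_false]
      rw [lintegral_map hg measurable_snd, ProbabilityTheory.cond, lintegral_smul_measure,
        smul_eq_mul, ← mul_assoc, ENNReal.mul_inv_cancel h (measure_ne_top _ _), one_mul]
  have hsumB : ∑' n, π (B n) = 1 := by
    rw [← measure_iUnion hBdisj hB, hBU, measure_univ]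
  have hQ1 : ∑' n, q n ≤ 1 := hsumB ▸ ENNReal.tsum_le_tsum hq
  have hμS : ∀ S, MeasurableSet S → ∑' n, π (B n) * P n S = μ S := by
    intro S hS
    simp only [hPS _ S hS]
    rw [← hμ, Measure.map_apply measurable_snd hS, ← measure_iUnion
      (fun m n hmn => (hBdisj hmn).mono Set.inter_subset_left Set.inter_subset_left)
      (fun n => (hB n).inter (measurable_snd hS)), ← Set.iUnion_inter, hBU, Set.univ_inter]
  have hη : ∃ η : Measure X, IsProbabilityMeasure η ∧
      ∀ S, MeasurableSet S → ∑' n, q n * P n S + (1 - ∑' n, q n) * η S = μ S := by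
    have hdiff : 1 - ∑' n, q n = ∑' n, (π (B n) - q n) := by
      rw [ENNReal.tsum_sub (ne_top_of_le_ne_top one_ne_top hQ1) hq, hsumB]
    have hsplit : ∀ S, MeasurableSet S →
        ∑' n, q n * P n S + ∑' n, (π (B n) - q n) * P n S = μ S := by
      intro S hS
      rw [← ENNReal.tsum_add, ← hμS S hS]
      refine tsum_congr fun n => ?_
      rw [← add_mul, add_tsub_cancel_of_le (hq n)]
    by_cases h1 : 1 - ∑' n, q n = 0
    · refine ⟨μ, hpμ, fun S hS => ?_⟩
      rw [h1, zero_mul, add_zero, ← hsplit S hS]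
      rw [hdiff, ENNReal.tsum_eq_zero] at h1
      simp [h1]
    · have hfin : 1 - ∑' n, q n ≠ ∞ := by finiteness
      let ζ : Measure X := Measure.sum fun n => (π (B n) - q n) • P n
      have hζ : ∀ S, MeasurableSet S → ζ S = ∑' n, (π (B n) - q n) * P n S := fun S hS => by
        simp [ζ, Measure.sum_apply _ hS]
      refine ⟨(1 - ∑' n, q n)⁻¹ • ζ, ⟨?_⟩, fun S hS => ?_⟩
      · rw [Measure.smul_apply, hζ _ MeasurableSet.univ, smul_eq_mul]
        simp only [measure_univ, mul_one]
        rw [← hdiff, ENNReal.inv_mul_cancel h1 hfin]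
      · rw [Measure.smul_apply, smul_eq_mul, ← mul_assoc, ENNReal.mul_inv_cancel h1 hfin, one_mul,
          hζ S hS, hsplit S hS]
  obtain ⟨η, hη1, hη2⟩ := hη
  refine ⟨P, η, hP, hη1, hη2, fun n => ∫⁻ p in B n, (f p + ε) ∂π, ?_, ?_⟩
  · intro z
    calc q (j z) * ∫⁻ y, f (z, y) ∂(P (j z)) ≤ π (B (j z)) * ∫⁻ y, f (z, y) ∂(P (j z)) := by
          gcongr; exact hq _
      _ = ∫⁻ p in B (j z), f (z, p.2) ∂π := hPI _ _ (by fun_prop)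
      _ ≤ _ := by
          refine setLIntegral_mono (by fun_prop) fun p hp => ?_
          exact hjf z p.1 p.2 (by simpa [B] using Eq.symm hp)
  · rw [← lintegral_iUnion hB hBdisj, hBU, Measure.restrict_univ, lintegral_add_right _ measurable_const]
    simp

/-- Assembling a measurable family of couplings. -/
lemma assemble {X₁ X : Type*} [MeasurableSpace X₁] [MeasurableSpace X]
    (κ : Kernel X₁ X) [IsMarkovKernel κ] (μ : Measure X) [IsProbabilityMeasure μ]
    (f : X × X → ℝ≥0∞) (hf : Measurable f) (C : ℝ≥0∞) (hC : ∀ p, f p ≤ C)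
    (j : X → ℕ) (hj : Measurable j) (i : X₁ → ℕ) (hi : Measurable i)
    (q : ℕ → ℕ → ℝ≥0∞) (hq : ∀ x n, q (i x) n ≤ κ x (j ⁻¹' {n}))
    (P : ℕ → ℕ → Measure X) (η : ℕ → Measure X) (hP : ∀ m n, IsProbabilityMeasure (P m n))
    (hη : ∀ m, IsProbabilityMeasure (η m))
    (hsum : ∀ x S, MeasurableSet S →
      ∑' n, q (i x) n * P (i x) n S + (1 - ∑' n, q (i x) n) * η (i x) S = μ S)
    (a : ℕ → ℕ → ℝ≥0∞)
    (ha : ∀ x z, q (i x) (j z) * ∫⁻ y, f (z, y) ∂(P (i x) (j z)) ≤ a (i x) (j z)) :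
    ∃ γ : Kernel X₁ (X × X), IsMarkovKernel γ ∧ (∀ x, (γ x).map Prod.fst = κ x) ∧
      (∀ x, (γ x).map Prod.snd = μ) ∧
      ∀ x, ∫⁻ p, f p ∂(γ x) ≤ ∑' n, a (i x) n + (1 - ∑' n, q (i x) n) * C := by
  let s : X₁ → ℕ → ℝ≥0∞ := fun x n => κ x (j ⁻¹' {n})
  let w : X₁ → ℕ → ℝ≥0∞ := fun x n => q (i x) n / s x n
  have hs1 : ∀ x n, s x n ≤ 1 := fun x n => prob_le_one
  have hws : ∀ x n, w x n * s x n = q (i x) n := by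
    intro x n
    by_cases h : s x n = 0
    · have : q (i x) n = 0 := le_antisymm ((hq x n).trans h.le) zero_le
      simp [h, this]
    · exact ENNReal.div_mul_cancel h (ne_top_of_le_ne_top one_ne_top (hs1 x n))
  have hw1 : ∀ x n, w x n ≤ 1 := fun x n => ENNReal.div_le_of_le_mul (by simpa using hq x n)
  have hws' : ∀ x n, (1 - w x n) * s x n = s x n - q (i x) n := by
    intro x n
    rw [ENNReal.sub_mul (fun _ _ => ne_top_of_le_ne_top one_ne_top (hs1 x n)), one_mul, hws]
  have hrest : ∀ x, ∑' n, (1 - w x n) * s x n = 1 - ∑' n, q (i x) n := by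
    intro x
    simp only [hws']
    have hs := sum_cells (κ x) j hj
    rw [ENNReal.tsum_sub _ (hq x), hs]
    exact ne_top_of_le_ne_top one_ne_top (hs ▸ ENNReal.tsum_le_tsum (hq x))
  have hsm : ∀ n, Measurable fun x => s x n := fun n =>
    Kernel.measurable_coe κ (hj (measurableSet_singleton n))
  have hwm : Measurable fun p : X₁ × X => w p.1 (j p.2) := by
    have h1 : Measurable fun p : X₁ × ℕ => w p.1 p.2 := by
      refine measurable_from_prod_countable_left fun n => ?_
      exact ((measurable_of_countable fun m => q m n).comp hi).div (hsm n)
    exact h1.comp (measurable_fst.prodMk (hj.comp measurable_snd))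
  let L : Kernel (X₁ × X) X :=
    { toFun := fun p => w p.1 (j p.2) • P (i p.1) (j p.2) + (1 - w p.1 (j p.2)) • η (i p.1)
      measurable' := by
        refine Measure.measurable_of_measurable_coe _ fun S hS => ?_
        simp only [Measure.add_apply, Measure.smul_apply, smul_eq_mul]
        refine (hwm.mul ?_).add ((measurable_const.sub hwm).mul ?_)
        · exact (measurable_of_countable fun m : ℕ × ℕ => P m.1 m.2 S).comp
            ((hi.comp measurable_fst).prodMk (hj.comp measurable_snd))
        · exact (measurable_of_countable fun m : ℕ => η m S).comp (hi.comp measurable_fst) }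
  have hLa : ∀ x z, L (x, z) = w x (j z) • P (i x) (j z) + (1 - w x (j z)) • η (i x) :=
    fun x z => rfl
  have hL : IsMarkovKernel L := by
    refine ⟨fun p => ⟨?_⟩⟩
    obtain ⟨x, z⟩ := p
    rw [hLa]
    simp [add_tsub_cancel_of_le (hw1 x (j z))]
  refine ⟨κ.compProd L, inferInstance, fun x => ?_, fun x => ?_, fun x => ?_⟩
  · have := Kernel.fst_compProd κ L
    rw [← Kernel.fst_apply, this]
  · ext S hS
    rw [Measure.map_apply measurable_snd hS, Kernel.compProd_apply (measurable_snd hS)]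
    have : ∀ z, L (x, z) (Prod.mk z ⁻¹' (Prod.snd ⁻¹' S)) =
        (fun n => w x n * P (i x) n S + (1 - w x n) * η (i x) S) (j z) := fun z => by
      rw [hLa]; rfl
    simp only [this]
    rw [lintegral_cells (κ x) j hj (fun n => w x n * P (i x) n S + (1 - w x n) * η (i x) S),
      ← hsum x S hS, ← hrest, ← ENNReal.tsum_mul_right, ← ENNReal.tsum_add]
    refine tsum_congr fun n => ?_
    rw [← hws x n]
    simp only [s]
    ring
  · rw [Kernel.lintegral_compProd _ _ _ hf]
    have : ∀ z, ∫⁻ y, f (z, y) ∂(L (x, z)) ≤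
        (fun n => (s x n)⁻¹ * a (i x) n + (1 - w x n) * C) (j z) := fun z => by
      rw [hLa, lintegral_add_measure, lintegral_smul_measure, lintegral_smul_measure]
      simp only [smul_eq_mul]
      refine add_le_add ?_ (mul_le_mul_right ?_ _)
      · simp only [w, div_eq_mul_inv]
        rw [mul_comm (q _ _), mul_assoc]
        exact mul_le_mul_right (ha x z) _
      · calc ∫⁻ y, f (z, y) ∂(η (i x)) ≤ ∫⁻ y, C ∂(η (i x)) := lintegral_mono fun y => hC _
          _ = C := by simp
    refine (lintegral_mono this).trans ?_
    rw [lintegral_cells (κ x) j hj (fun n => (s x n)⁻¹ * a (i x) n + (1 - w x n) * C),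
      ← hrest, ← ENNReal.tsum_mul_right, ← ENNReal.tsum_add]
    refine ENNReal.tsum_le_tsum fun n => ?_
    change _ * s x n ≤ _
    rw [add_mul]
    refine add_le_add ?_ (le_of_eq (by ring))
    calc (s x n)⁻¹ * a (i x) n * s x n = (s x n)⁻¹ * s x n * a (i x) n := by ring
      _ ≤ 1 * a (i x) n := by gcongr; exact ENNReal.inv_mul_le_one _
      _ = _ := one_mul _

lemma optCost_le_of_bound {X : Type*} [MeasurableSpace X] (c : X → X → ℝ) (C : ℝ≥0∞)
    (hC : ∀ x y, ENNReal.ofReal (c x y) ≤ C) (ν μ : Measure X) [IsProbabilityMeasure ν]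
    [IsProbabilityMeasure μ] : optCost c ν μ ≤ C := by
  refine (iInf₂_le (ν.prod μ) ⟨by simp, by simp⟩).trans ?_
  refine (lintegral_mono fun p => hC _ _).trans ?_
  simp

/-- Approximate measurable selection of couplings. -/
lemma select {X₁ X : Type*} [MeasurableSpace X₁] [MeasurableSpace X]
    (κ : Kernel X₁ X) [IsMarkovKernel κ] (μ : Measure X) [IsProbabilityMeasure μ]
    (c : X → X → ℝ) (hc : Measurable fun p : X × X => c p.1 p.2) (C : ℝ≥0∞) (hCt : C ≠ ∞)
    (hC : ∀ x y, ENNReal.ofReal (c x y) ≤ C) (ε : ℝ≥0∞) (hε : ε ≠ 0)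
    (j : X → ℕ) (hj : Measurable j)
    (hjf : ∀ z z' y, j z = j z' → ENNReal.ofReal (c z y) ≤ ENNReal.ofReal (c z' y) + ε)
    (ν₁ : Measure X₁) [IsProbabilityMeasure ν₁] :
    ∃ γ : Kernel X₁ (X × X), IsMarkovKernel γ ∧ (∀ x, (γ x).map Prod.fst = κ x) ∧
      (∀ x, (γ x).map Prod.snd = μ) ∧
      ∫⁻ x, ∫⁻ p, ENNReal.ofReal (c p.1 p.2) ∂(γ x) ∂ν₁ ≤
        ∫⁻ x, optCost c (κ x) μ ∂ν₁ + (ε + ε + ε * C) := by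
  classical
  obtain ⟨e, he⟩ := exists_surjective_nat (ℕ →₀ ℚ≥0)
  let q : ℕ → ℕ → ℝ≥0∞ := fun m n => (((e m n : ℚ≥0) : NNReal) : ℝ≥0∞)
  have hex : ∀ x, ∃ m, (∀ n, q m n ≤ κ x (j ⁻¹' {n})) ∧ 1 ≤ ∑' n, q m n + ε := by
    intro x
    obtain ⟨r, hr1, hr2⟩ := exists_rat_below _ (sum_cells (κ x) j hj) ε hε
    obtain ⟨m, rfl⟩ := he r
    exact ⟨m, hr1, hr2⟩
  let i : X₁ → ℕ := fun x => Nat.find (hex x)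
  have hi : Measurable i := by
    refine measurable_find hex fun m => ?_
    refine MeasurableSet.inter ?_ (MeasurableSet.const _)
    refine MeasurableSet.congr (s := ⋂ n, {x | q m n ≤ κ x (j ⁻¹' {n})}) ?_ ?_
    · exact MeasurableSet.iInter fun n => measurableSet_le measurable_const
        (Kernel.measurable_coe κ (hj (measurableSet_singleton n)))
    · ext x
      simp only [Set.mem_iInter]
      exact Iff.rfl
  have hi1 : ∀ x n, q (i x) n ≤ κ x (j ⁻¹' {n}) := fun x => (Nat.find_spec (hex x)).1
  have hi2 : ∀ x, 1 ≤ ∑' n, q (i x) n + ε := fun x => (Nat.find_spec (hex x)).2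
  let G : ℕ → ℝ≥0∞ := fun m => ⨅ (x : X₁) (_ : i x = m), optCost c (κ x) μ
  have hf : Measurable fun p : X × X => ENNReal.ofReal (c p.1 p.2) := hc.ennreal_ofReal
  have hdata : ∀ m, ∃ (P : ℕ → Measure X) (η : Measure X) (a : ℕ → ℝ≥0∞),
      (∀ n, IsProbabilityMeasure (P n)) ∧ IsProbabilityMeasure η ∧ ∀ x, i x = m →
      ((∀ S, MeasurableSet S → ∑' n, q m n * P n S + (1 - ∑' n, q m n) * η S = μ S) ∧
      (∀ z, q m (j z) * ∫⁻ y, ENNReal.ofReal (c z y) ∂(P (j z)) ≤ a (j z)) ∧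
      ∑' n, a n ≤ G m + (ε + ε)) := by
    intro m
    by_cases hm : ∃ x, i x = m
    · obtain ⟨x₁, hx₁⟩ := hm
      have hGt : G m ≠ ∞ := ne_top_of_le_ne_top hCt
        ((iInf₂_le x₁ hx₁).trans (optCost_le_of_bound c C hC _ _))
      have hlt : G m < G m + ε := ENNReal.lt_add_right hGt hε
      obtain ⟨x₀, hx₀, hlt⟩ := by simpa only [iInf_lt_iff, optCost, G] using hlt
      obtain ⟨π, ⟨hπ1, hπ2⟩, hlt⟩ := by simpa only [iInf_lt_iff, optCost, exists_prop] using hlt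
      have hπp : IsProbabilityMeasure π := by
        have : IsProbabilityMeasure (π.map Prod.snd) := by rw [hπ2]; infer_instance
        exact Measure.isProbabilityMeasure_of_map Prod.snd
      obtain ⟨P, η, h1, h2, h3, a, h4, h5⟩ := decomp π μ hπ2 _ hf ε j hj hjf (q m)
        (by rw [hπ1, ← hx₀]; exact hi1 x₀)
      refine ⟨P, η, a, h1, h2, fun x hx => ⟨h3, h4, ?_⟩⟩
      rw [h5, ← add_assoc]
      exact add_le_add_left (le_of_lt hlt) ε
    · exact ⟨fun _ => μ, μ, 0, fun _ => inferInstance, inferInstance, fun x hx => (hm ⟨x, hx⟩).elim⟩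
  choose P η a h1 h2 h3 using hdata
  obtain ⟨γ, g1, g2, g3, g4⟩ := assemble κ μ _ hf C (fun p => hC _ _) j hj i hi q hi1 P η h1 h2
    (fun x => (h3 _ x rfl).1) a (fun x => (h3 _ x rfl).2.1)
  refine ⟨γ, g1, g2, g3, ?_⟩
  calc ∫⁻ x, ∫⁻ p, ENNReal.ofReal (c p.1 p.2) ∂(γ x) ∂ν₁
      ≤ ∫⁻ x, (G (i x) + (ε + ε + ε * C)) ∂ν₁ := by
        refine lintegral_mono fun x => (g4 x).trans ?_
        rw [← add_assoc]
        refine add_le_add (h3 _ x rfl).2.2 ?_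
        gcongr
        exact tsub_le_iff_left.2 (hi2 x)
    _ = ∫⁻ x, G (i x) ∂ν₁ + (ε + ε + ε * C) := by
        rw [lintegral_add_right _ measurable_const]; simp
    _ ≤ _ := by
        gcongr with x
        exact iInf₂_le (f := fun (y : X₁) (_ : i y = i x) => optCost c (κ y) μ) x rfl

/-- The statement for a bounded, uniformly continuous second cost. -/
lemma bounded_case {X₁ : Type*} [MeasurableSpace X₁]
    {X₂ : Type*} [PseudoMetricSpace X₂] [SecondCountableTopology X₂] [MeasurableSpace X₂] [BorelSpace X₂]
    (c₁ : X₁ → X₁ → ℝ) (c₂ : X₂ → X₂ → ℝ)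
    (hc₁ : Measurable fun p : X₁ × X₁ => c₁ p.1 p.2) (hc₂ : Measurable fun p : X₂ × X₂ => c₂ p.1 p.2)
    (h1 : ∀ x y, 0 ≤ c₁ x y) (h2 : ∀ x y, 0 ≤ c₂ x y)
    (M : ℕ) (hM : ∀ x y, c₂ x y ≤ M) (hL : ∀ z z' y, c₂ z y ≤ c₂ z' y + M * dist z z')
    (ν : Measure (X₁ × X₂)) [IsProbabilityMeasure ν]
    (κ : Kernel X₁ X₂) [IsMarkovKernel κ] (hκ : ν = ν.fst.compProd κ)
    (μ₁ : Measure X₁) [IsProbabilityMeasure μ₁] (μ₂ : Measure X₂) [IsProbabilityMeasure μ₂] :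
    optCost (fun p q => c₁ p.1 q.1 + c₂ p.2 q.2) ν (μ₁.prod μ₂) ≤
      optCost c₁ ν.fst μ₁ + ∫⁻ x₁, optCost c₂ (κ x₁) μ₂ ∂ν.fst := by
  have hne : Nonempty X₂ := nonempty_of_isProbabilityMeasure μ₂
  have main : ∀ ε : NNReal, 0 < ε → optCost (fun p q => c₁ p.1 q.1 + c₂ p.2 q.2) ν (μ₁.prod μ₂) ≤
      optCost c₁ ν.fst μ₁ + ∫⁻ x₁, optCost c₂ (κ x₁) μ₂ ∂ν.fst +
        ((ε : ℝ≥0∞) + ε + ε * (M : ℝ≥0∞)) := by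
    intro ε hε
    obtain ⟨j, hj, hjd⟩ := exists_cells (X := X₂) ((ε : ℝ) / (M + 1)) (by positivity)
    obtain ⟨γ, g1, g2, g3, g4⟩ := select κ μ₂ c₂ hc₂ M (by simp)
      (fun x y => ENNReal.ofReal_le_of_le_toReal (by simpa using hM x y)) ε (by simpa using hε.ne') j hj
      (by
        intro z z' y hz
        have hd := hjd z z' hz
        rw [lt_div_iff₀ (by positivity)] at hd
        have : c₂ z y ≤ c₂ z' y + ε := by
          have := hL z z' y
          have := dist_nonneg (x := z) (y := z')
          nlinarith
        refine (ENNReal.ofReal_le_ofReal this).trans ?_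
        rw [ENNReal.ofReal_add (h2 _ _) ε.coe_nonneg]
        simp) ν.fst
    rw [add_assoc]
    refine le_trans ?_ (add_le_add_right g4 _)
    conv_rhs => rw [optCost]
    rw [ENNReal.iInf_add]
    refine le_iInf fun π₁ => ?_
    rw [ENNReal.iInf_add]
    refine le_iInf fun hπ => ?_
    have hπp : IsProbabilityMeasure π₁ := by
      have : IsProbabilityMeasure (π₁.map Prod.snd) := by rw [hπ.2]; infer_instance
      exact Measure.isProbabilityMeasure_of_map Prod.snd
    obtain ⟨π, p1, p2, p3⟩ := glue ν κ hκ μ₁ μ₂ π₁ hπ.1 hπ.2 γ g2 g3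
      (fun p => ENNReal.ofReal (c₁ p.1 p.2)) hc₁.ennreal_ofReal
      (fun p => ENNReal.ofReal (c₂ p.1 p.2)) hc₂.ennreal_ofReal
    rw [← p3]
    refine (iInf₂_le π ⟨p1, p2⟩).trans (le_of_eq (lintegral_congr fun p => ?_))
    exact ENNReal.ofReal_add (h1 _ _) (h2 _ _)
  refine ENNReal.le_of_forall_pos_le_add fun δ hδ _ => ?_
  refine (main (δ / (M + 2)) (by positivity)).trans ?_
  gcongr
  have : (δ / (M + 2) + δ / (M + 2) + δ / (M + 2) * M : NNReal) = δ := by field_simp; ring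
  exact_mod_cast this.le

lemma isProb_of_map_fst {X Y : Type*} [MeasurableSpace X] [MeasurableSpace Y]
    (π : Measure (X × Y)) (ν : Measure X) [IsProbabilityMeasure ν] (h : π.map Prod.fst = ν) :
    IsProbabilityMeasure π := by
  have : IsProbabilityMeasure (π.map Prod.fst) := by rw [h]; infer_instance
  exact Measure.isProbabilityMeasure_of_map Prod.fst

/-- Stability of the optimal cost under increasing continuous bounded approximations. -/
lemma limit_case {X : Type*} [TopologicalSpace X] [PolishSpace X] [MeasurableSpace X] [BorelSpace X]
    (ν μ : Measure X) [IsProbabilityMeasure ν] [IsProbabilityMeasure μ]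
    (c : X → X → ℝ) (g : ℕ → X × X → ℝ) (hg : ∀ n, Continuous (g n)) (hg0 : ∀ n p, 0 ≤ g n p)
    (B : ℕ → ℝ) (hgB : ∀ n p, g n p ≤ B n) (hmono : ∀ p, Monotone fun n => g n p)
    (hlim : ∀ p : X × X, Tendsto (fun n => g n p) atTop (𝓝 (c p.1 p.2)))
    (R : ℝ≥0∞) (hR : ∀ n, optCost (fun x y => g n (x, y)) ν μ ≤ R) :
    optCost c ν μ ≤ R := by
  by_cases hRt : R = ∞
  · simp [hRt]
  let u : ℕ → ℝ≥0∞ := fun n => (n : ℝ≥0∞)⁻¹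
  have hu0 : ∀ n, u n ≠ 0 := fun n => by simp [u]
  have hu : Tendsto u atTop (𝓝 0) := ENNReal.tendsto_inv_nat_nhds_zero
  have hch : ∀ n, ∃ π : ProbabilityMeasure (X × X), ((π : Measure (X × X)).map Prod.fst = ν ∧
      (π : Measure (X × X)).map Prod.snd = μ) ∧
      ∫⁻ p, ENNReal.ofReal (g n p) ∂(π : Measure (X × X)) ≤ R + u n := by
    intro n
    have hlt : optCost (fun x y => g n (x, y)) ν μ < R + u n :=
      (hR n).trans_lt (ENNReal.lt_add_right hRt (hu0 n))
    obtain ⟨π, hπ, hlt⟩ := by simpa only [iInf_lt_iff, optCost, exists_prop] using hlt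
    exact ⟨⟨π, isProb_of_map_fst π ν hπ.1⟩, hπ, hlt.le⟩
  choose π hπ hπR using hch
  let S : Set (ProbabilityMeasure (X × X)) := {ρ | (ρ : Measure (X × X)).map Prod.fst = ν ∧
      (ρ : Measure (X × X)).map Prod.snd = μ}
  have hS : IsCompact (closure S) := by
    refine isCompact_closure_of_isTightMeasureSet ?_
    letI := TopologicalSpace.upgradeIsCompletelyMetrizable X
    refine IsTightMeasureSet.prodMk ?_ ?_
    · refine (isTightMeasureSet_singleton (μ := ν)).subset ?_
      rintro _ ⟨_, ⟨ρ, hρ, rfl⟩, rfl⟩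
      exact hρ.1
    · refine (isTightMeasureSet_singleton (μ := μ)).subset ?_
      rintro _ ⟨_, ⟨ρ, hρ, rfl⟩, rfl⟩
      exact hρ.2
  have hSc : IsClosed S := by
    have e : S = {ρ | ρ.map (f := Prod.fst) measurable_fst.aemeasurable = ⟨ν, inferInstance⟩} ∩
        {ρ | ρ.map (f := Prod.snd) measurable_snd.aemeasurable = ⟨μ, inferInstance⟩} := by
      ext ρ
      refine and_congr ?_ ?_
      · exact (Subtype.ext_iff (a1 := ρ.map (f := Prod.fst) measurable_fst.aemeasurable)
          (a2 := ⟨ν, inferInstance⟩)).symm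
      · exact (Subtype.ext_iff (a1 := ρ.map (f := Prod.snd) measurable_snd.aemeasurable)
          (a2 := ⟨μ, inferInstance⟩)).symm
    letI := TopologicalSpace.upgradeIsCompletelyMetrizable X
    rw [e]
    exact (isClosed_eq (ProbabilityMeasure.continuous_map continuous_fst) continuous_const).inter
      (isClosed_eq (ProbabilityMeasure.continuous_map continuous_snd) continuous_const)
  rw [hSc.closure_eq] at hS
  have hle : ((Ultrafilter.map π (hyperfilter ℕ) : Ultrafilter _) : Filter (ProbabilityMeasure (X × X))) ≤ 𝓟 S := by
    rw [Ultrafilter.coe_map, le_principal_iff]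
    exact Filter.Eventually.of_forall (f := (hyperfilter ℕ : Filter ℕ)) hπ
  obtain ⟨ρ, hρS, hρ⟩ := hS.ultrafilter_le_nhds _ hle
  have hρ' : Tendsto π (hyperfilter ℕ : Filter ℕ) (𝓝 ρ) := hρ
  have hyp : (hyperfilter ℕ : Filter ℕ) ≤ atTop := by
    rw [← Nat.cofinite_eq_atTop]; exact hyperfilter_le_cofinite
  have hk : ∀ k, ∫⁻ p, ENNReal.ofReal (g k p) ∂(ρ : Measure (X × X)) ≤ R := by
    intro k
    let G : BoundedContinuousFunction (X × X) NNReal :=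
      BoundedContinuousFunction.mkOfBound
        ⟨fun p => (g k p).toNNReal, continuous_real_toNNReal.comp (hg k)⟩ (B k) (by
          intro p r
          simp only [ContinuousMap.coe_mk, NNReal.dist_eq, Real.coe_toNNReal _ (hg0 k _)]
          rw [abs_le]
          constructor <;> linarith [hg0 k p, hg0 k r, hgB k p, hgB k r])
    have ht := (ProbabilityMeasure.tendsto_iff_forall_lintegral_tendsto.1 hρ') G
    have hR' : Tendsto (fun n => R + u n) (hyperfilter ℕ : Filter ℕ) (𝓝 R) := by
      simpa using (tendsto_const_nhds (x := R)).add (hu.mono_left hyp)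
    refine le_of_tendsto_of_tendsto ht hR' ?_
    filter_upwards [hyp (eventually_ge_atTop k)] with n hn
    refine le_trans (lintegral_mono fun p => ?_) (hπR n)
    exact ENNReal.ofReal_le_ofReal (hmono p hn)
  refine (iInf₂_le (ρ : Measure (X × X)) hρS).trans ?_
  have hmc := lintegral_tendsto_of_tendsto_of_monotone (μ := (ρ : Measure (X × X)))
    (f := fun n p => ENNReal.ofReal (g n p)) (F := fun p => ENNReal.ofReal (c p.1 p.2))
    (fun n => (hg n).measurable.ennreal_ofReal.aemeasurable)
    (Eventually.of_forall fun p n m h => ENNReal.ofReal_le_ofReal (hmono p h))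
    (Eventually.of_forall fun p => ENNReal.tendsto_ofReal (hlim p))
  exact le_of_tendsto' hmc hk

end Helpers

open ProbabilityTheory in
/-- Subadditivity of transport costs under disintegration: if `ν` on `X₁ × X₂`
disintegrates as `dν(x₁,x₂) = dν₁(x₁) dν₂^{x₁}(x₂)`, where `ν₁ = ν.fst` is the first
marginal and `κ x₁ = ν₂^{x₁}` a regular conditional distribution of the second
coordinate given the first, then
`𝒯_{c₁⊕c₂}(ν, μ₁⊗μ₂) ≤ 𝒯_{c₁}(ν₁, μ₁) + ∫ 𝒯_{c₂}(ν₂^{x₁}, μ₂) dν₁(x₁)`. -/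
theorem optCost_tensor_le_of_disintegration
    {X₁ : Type*} [TopologicalSpace X₁] [PolishSpace X₁] [MeasurableSpace X₁] [BorelSpace X₁]
    {X₂ : Type*} [TopologicalSpace X₂] [PolishSpace X₂] [MeasurableSpace X₂] [BorelSpace X₂]
    (c₁ : X₁ → X₁ → ℝ) (c₂ : X₂ → X₂ → ℝ)
    (hc₁_nonneg : ∀ x y, 0 ≤ c₁ x y) (hc₂_nonneg : ∀ x y, 0 ≤ c₂ x y)
    (hc₁_lsc : LowerSemicontinuous fun p : X₁ × X₁ => c₁ p.1 p.2)
    (hc₂_lsc : LowerSemicontinuous fun p : X₂ × X₂ => c₂ p.1 p.2)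
    (ν : Measure (X₁ × X₂)) [IsProbabilityMeasure ν]
    (κ : Kernel X₁ X₂) [IsMarkovKernel κ] (hκ : ν = ν.fst.compProd κ)
    (μ₁ : Measure X₁) [IsProbabilityMeasure μ₁] (μ₂ : Measure X₂) [IsProbabilityMeasure μ₂] :
    optCost (fun p q => c₁ p.1 q.1 + c₂ p.2 q.2) ν (μ₁.prod μ₂) ≤
      optCost c₁ ν.fst μ₁ + ∫⁻ x₁, optCost c₂ (κ x₁) μ₂ ∂ν.fst := by
  letI := TopologicalSpace.upgradeIsCompletelyMetrizable X₁
  letI := TopologicalSpace.upgradeIsCompletelyMetrizable X₂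
  obtain ⟨g₁, a1, a2, a3, a4, a5, a6⟩ := lip_approx _ (fun p : X₁ × X₁ => hc₁_nonneg p.1 p.2) hc₁_lsc
  obtain ⟨g₂, b1, b2, b3, b4, b5, b6⟩ := lip_approx _ (fun p : X₂ × X₂ => hc₂_nonneg p.1 p.2) hc₂_lsc
  have hcont₁ : ∀ n, Continuous (g₁ n) := fun n => (LipschitzWith.of_le_add_mul n (a1 n)).continuous
  have hcont₂ : ∀ n, Continuous (g₂ n) := fun n => (LipschitzWith.of_le_add_mul n (b1 n)).continuous
  refine limit_case ν (μ₁.prod μ₂) _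
    (fun n p => g₁ n (p.1.1, p.2.1) + g₂ n (p.1.2, p.2.2)) ?_ ?_ (fun n => n + n) ?_ ?_ ?_ _ ?_
  · intro n
    have := hcont₁ n
    have := hcont₂ n
    fun_prop
  · intro n p; exact add_nonneg (a2 _ _) (b2 _ _)
  · intro n p; exact add_le_add (a3 _ _) (b3 _ _)
  · intro p n m h; exact add_le_add (a5 _ h) (b5 _ h)
  · intro p; exact (a6 (p.1.1, p.2.1)).add (b6 (p.1.2, p.2.2))
  · intro n
    refine (bounded_case (fun x y => g₁ n (x, y)) (fun x y => g₂ n (x, y))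
      (hcont₁ n).measurable (hcont₂ n).measurable (fun _ _ => a2 _ _) (fun _ _ => b2 _ _)
      n (fun _ _ => b3 _ _) ?_ ν κ hκ μ₁ μ₂).trans ?_
    · intro z z' y
      have := b1 n (z, y) (z', y)
      simpa [Prod.dist_eq] using this
    · refine add_le_add ?_ (lintegral_mono fun x => ?_)
      · exact iInf₂_mono fun π _ => lintegral_mono fun p => ENNReal.ofReal_le_ofReal (a4 n p)
      · exact iInf₂_mono fun π _ => lintegral_mono fun p => ENNReal.ofReal_le_ofReal (b4 n p)
end

section
/- (Bobkov–Götze dual characterization) Let c be a lower semicontinuous cost function on a Polish space 𝒳, α ∈ 𝒜, and μ ∈ P(𝒳). The following are equivalent: (1) α(𝒯_c(ν,μ)) ≤ H(ν|μ) for all ν ∈ P(𝒳); (2) for all bounded continuous functions u, v on 𝒳 satisfying u(x) + v(y) ≤ c(x,y) for all x,y ∈ 𝒳, and all s ≥ 0, ∫ e^{s u} dμ ≤ exp( −s ∫ v dμ + α⊛(s) ). -/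
open MeasureTheory ENNReal

/-- The natural extension to `ℝ≥0∞` of a function `α : [0,∞) → [0,∞)`.
For an increasing `α` and `x < ∞` it equals `ENNReal.ofReal (α x.toReal)`,
and at `x = ∞` it is the limit of `α` at `+∞` (so `∞` when `α` is unbounded). -/
noncomputable def extRealFun (α : ℝ → ℝ) (x : ℝ≥0∞) : ℝ≥0∞ :=
  ⨆ (t : ℝ) (_ : 0 ≤ t ∧ ENNReal.ofReal t ≤ x), ENNReal.ofReal (α t)


lemma lsc_approx {Z W : Type*} [TopologicalSpace Z] [Nonempty Z] [PseudoMetricSpace W]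
    (e : Z → W) (he : Topology.IsInducing e) (c : Z → ℝ) (h0 : ∀ z, 0 ≤ c z)
    (hc : LowerSemicontinuous c) :
    ∃ f : ℕ → C(W, ℝ), Monotone f ∧ (∀ n w, 0 ≤ f n w) ∧ (∀ n z, f n (e z) ≤ c z) ∧
      ∀ z, ∀ a < c z, ∃ n, a ≤ f n (e z) := by
  have hnn : ∀ (n : ℕ) (w : W) (z : Z), 0 ≤ min (c z) n + n * dist w (e z) := by
    intro n w z
    have := h0 z
    positivity
  have hb : ∀ (n : ℕ) (w : W), BddBelow (Set.range fun z => min (c z) n + n * dist w (e z)) := by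
    intro n w
    exact ⟨0, by rintro _ ⟨z, rfl⟩; exact hnn n w z⟩
  have hl : ∀ n : ℕ, LipschitzWith n (fun w => ⨅ z, (min (c z) n + n * dist w (e z))) := by
    intro n
    refine LipschitzWith.of_le_add_mul _ fun x y => ?_
    rw [← sub_le_iff_le_add]
    refine le_ciInf fun z => ?_
    rw [sub_le_iff_le_add]
    refine (ciInf_le (hb n x) z).trans ?_
    have := dist_triangle_left x (e z) y
    have h2 : (n : ℝ) * dist x (e z) ≤ n * (dist y x + dist y (e z)) := by gcongr
    rw [dist_comm y x] at h2
    push_cast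
    linarith
  refine ⟨fun n => ⟨_, (hl n).continuous⟩, ?_, ?_, ?_, ?_⟩
  · intro n m hnm w
    refine ciInf_mono (hb n w) fun z => ?_
    have : (n : ℝ) ≤ m := by exact_mod_cast hnm
    gcongr
  · intro n w
    exact le_ciInf fun z => hnn n w z
  · intro n z
    refine (ciInf_le (hb n (e z)) z).trans ?_
    simp
  · intro z a ha
    by_cases ha0 : a ≤ 0
    · exact ⟨0, ha0.trans (le_ciInf fun z' => hnn 0 (e z) z')⟩
    push Not at ha0
    have hU := hc z a ha
    rw [he.nhds_eq_comap, Filter.eventually_comap, Metric.eventually_nhds_iff] at hU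
    obtain ⟨δ, hδ, hU⟩ := hU
    obtain ⟨n, hn⟩ := exists_nat_ge (max a (a / δ))
    refine ⟨n, le_ciInf fun z' => ?_⟩
    have hn1 : a ≤ n := (le_max_left _ _).trans hn
    have hn2 : a ≤ n * δ := by
      rw [← div_le_iff₀ hδ]; exact (le_max_right _ _).trans hn
    by_cases hd : dist (e z') (e z) < δ
    · have := hU hd z' rfl
      have h3 : a ≤ min (c z') n := le_min this.le hn1
      have : 0 ≤ (n : ℝ) * dist (e z) (e z') := by positivity
      linarith
    · push Not at hd
      rw [dist_comm] at hd
      have h3 : 0 ≤ min (c z') (n : ℝ) := le_min (h0 z') (by positivity)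
      have : (n : ℝ) * δ ≤ n * dist (e z) (e z') := by gcongr
      linarith

lemma exists_subgrad (α : ℝ → ℝ)
    (hα_cvx : ConvexOn ℝ (Set.Ici 0) α) (hα_mono : MonotoneOn α (Set.Ici 0))
    (t : ℝ) (ht : 0 < t) : ∃ s : ℝ, 0 ≤ s ∧ ∀ r, 0 ≤ r → s * r - α r ≤ s * t - α t := by
  have hi : t ∈ interior (Set.Ici (0:ℝ)) := by simpa using ht
  have h1 : ∀ y, t < y → derivWithin α (Set.Ioi t) t ≤ slope α t y := fun y hy =>
    hα_cvx.rightDeriv_le_slope_of_mem_interior hi (by simp; linarith) hy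
  have h2 : ∀ y, 0 ≤ y → y < t → slope α y t ≤ derivWithin α (Set.Ioi t) t := fun y hy hyt =>
    (hα_cvx.slope_le_leftDeriv_of_mem_interior (by simpa using hy) hi hyt).trans
      (hα_cvx.leftDeriv_le_rightDeriv_of_mem_interior hi)
  refine ⟨derivWithin α (Set.Ioi t) t, ?_, ?_⟩
  · refine le_trans ?_ (h2 0 le_rfl ht)
    rw [slope_def_field]
    have := hα_mono (a := 0) (b := t) (by simp) (by simpa using ht.le) ht.le
    apply div_nonneg <;> linarith
  · intro r hr
    rcases lt_trichotomy r t with h | h | h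
    · have := h2 r hr h
      rw [slope_def_field, div_le_iff₀ (by linarith)] at this
      linarith
    · rw [h]
    · have := h1 r h
      rw [slope_def_field, le_div_iff₀ (by linarith)] at this
      linarith

lemma compact_dual {K : Type*} [TopologicalSpace K] [CompactSpace K]
    [TopologicalSpace.MetrizableSpace K]
    [SecondCountableTopology K] [MeasurableSpace K] [BorelSpace K]
    (ν μ : Measure K) [IsProbabilityMeasure ν] [IsProbabilityMeasure μ]
    (f : ℕ → C(K × K, ℝ)) (hf : Monotone f) (T : ℝ)
    (h : ∀ n, ∀ u v : C(K, ℝ), (∀ x y, u x + v y ≤ f n (x, y)) →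
      ∫ x, u x ∂ν + ∫ y, v y ∂μ ≤ T) :
    ∃ π : Measure (K × K), IsFiniteMeasure π ∧ π.map Prod.fst = ν ∧ π.map Prod.snd = μ ∧
      ∀ n, ∫ p, f n p ∂π ≤ T := by
  have hInt : ∀ (m : Measure (K × K)) [IsFiniteMeasure m] (k : C(K × K, ℝ)), Integrable k m :=
    fun m _ k => (BoundedContinuousFunction.mkOfCompact k).integrable m
  have hInt1 : ∀ (m : Measure K) [IsFiniteMeasure m] (k : C(K, ℝ)), Integrable k m :=
    fun m _ k => (BoundedContinuousFunction.mkOfCompact k).integrable m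
  let cone : PointedCone ℝ C(K × K, ℝ) :=
    { carrier := {k | ∃ a : ℝ, 0 ≤ a ∧ ∃ n, ∀ p, a * (T - f n p) ≤ k p}
      zero_mem' := ⟨0, le_rfl, 0, fun p => by simp⟩
      add_mem' := by
        rintro k l ⟨a, ha, n, hk⟩ ⟨b, hb, m, hl⟩
        refine ⟨a + b, by positivity, max n m, fun p => ?_⟩
        have h1 : f n p ≤ f (max n m) p := hf (le_max_left n m) p
        have h2 : f m p ≤ f (max n m) p := hf (le_max_right n m) p
        have h3 := mul_le_mul_of_nonneg_left h1 ha
        have h4 := mul_le_mul_of_nonneg_left h2 hb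
        have := hk p
        have := hl p
        simp only [ContinuousMap.add_apply]
        linarith
      smul_mem' := by
        rintro ⟨r, hr⟩ k ⟨a, ha, n, hk⟩
        refine ⟨r * a, by positivity, n, fun p => ?_⟩
        have := mul_le_mul_of_nonneg_left (hk p) hr
        change _ ≤ r * k p
        linarith }
  have hcone : ∀ k, k ∈ cone ↔ ∃ a : ℝ, 0 ≤ a ∧ ∃ n, ∀ p, a * (T - f n p) ≤ k p :=
    fun k => Iff.rfl
  let φ : (C(K, ℝ) × C(K, ℝ)) →ₗ[ℝ] C(K × K, ℝ) :=
    { toFun := fun w => w.1.comp ⟨Prod.fst, continuous_fst⟩ + w.2.comp ⟨Prod.snd, continuous_snd⟩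
      map_add' := by
        intro x y; ext p; simp only [ContinuousMap.add_apply, ContinuousMap.comp_apply, Prod.fst_add, Prod.snd_add]; ring
      map_smul' := by
        intro r x; ext p; simp }
  have hφ : ∀ u v p, φ (u, v) p = u p.1 + v p.2 := fun u v p => rfl
  let I : C(K × K, ℝ) →ₗ[ℝ] ℝ :=
    { toFun := fun k => ∫ p, k p ∂(ν.prod μ)
      map_add' := fun k l => integral_add (hInt _ k) (hInt _ l)
      map_smul' := fun r k => integral_smul r k }
  have hI : ∀ u v, I (φ (u, v)) = ∫ x, u x ∂ν + ∫ y, v y ∂μ := by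
    intro u v
    change ∫ p : K × K, (u p.1 + v p.2) ∂(ν.prod μ) = _
    have h1 : Integrable (fun p : K × K => u p.1) (ν.prod μ) :=
      hInt _ (u.comp ⟨Prod.fst, continuous_fst⟩)
    have h2 : Integrable (fun p : K × K => v p.2) (ν.prod μ) :=
      hInt _ (v.comp ⟨Prod.snd, continuous_snd⟩)
    rw [integral_add h1 h2, integral_fun_fst, integral_fun_snd]
    simp
  obtain ⟨g, hg1, hg2⟩ := riesz_extension cone ⟨LinearMap.range φ, I.comp (LinearMap.range φ).subtype⟩
    (by
      rintro ⟨_, ⟨⟨u, v⟩, rfl⟩⟩ hx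
      obtain ⟨a, ha, n, hk⟩ := (hcone _).1 hx
      change 0 ≤ I (φ (u, v))
      rcases ha.eq_or_lt with rfl | ha
      · refine integral_nonneg fun p => ?_
        simpa using hk p
      · rw [hI]
        have := h n (ContinuousMap.const _ T - a⁻¹ • u) (- (a⁻¹ • v)) (fun x y => by
          have h1 := hk (x, y)
          simp only [hφ] at h1
          rw [← le_div_iff₀' ha] at h1
          simp
          rw [div_eq_inv_mul] at h1
          linarith)
        simp only [ContinuousMap.sub_apply, ContinuousMap.const_apply, ContinuousMap.neg_apply,
          ContinuousMap.smul_apply, smul_eq_mul] at this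
        rw [integral_sub (by fun_prop) ((hInt1 ν u).const_mul _), integral_neg,
          integral_const_mul, integral_const_mul] at this
        simp at this
        have h3 : 0 ≤ a⁻¹ * (∫ x, u x ∂ν + ∫ y, v y ∂μ) := by linarith
        exact nonneg_of_mul_nonneg_right h3 (inv_pos.2 ha))
    (by
      intro y
      refine ⟨⟨φ (ContinuousMap.const _ ‖y‖, 0), ⟨_, rfl⟩⟩, (hcone _).2 ⟨0, le_rfl, 0, fun p => ?_⟩⟩
      have := neg_le_of_abs_le (y.norm_coe_le_norm p)
      simp only [ContinuousMap.add_apply, hφ]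
      simp
      linarith)
  have hgφ : ∀ u v, g (φ (u, v)) = ∫ x, u x ∂ν + ∫ y, v y ∂μ := by
    intro u v
    rw [← hI]
    exact hg1 ⟨φ (u, v), ⟨_, rfl⟩⟩
  have hgpos : ∀ k : C(K × K, ℝ), (∀ p, 0 ≤ k p) → 0 ≤ g k := by
    intro k hk
    exact hg2 k ((hcone _).2 ⟨0, le_rfl, 0, fun p => by simpa using hk p⟩)
  let Λ : CompactlySupportedContinuousMap (K × K) ℝ →ₚ[ℝ] ℝ :=
    { toFun k := g k.toContinuousMap
      map_add' k l := map_add g k.toContinuousMap l.toContinuousMap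
      map_smul' r k := map_smul g r k.toContinuousMap
      monotone' k l hkl := by
        have := hgpos (l.toContinuousMap - k.toContinuousMap) (fun p => sub_nonneg.2 (hkl p))
        rw [map_sub] at this
        linarith }
  have hΛ : ∀ k : C(K × K, ℝ), ∫ p, k p ∂(RealRMK.rieszMeasure Λ) = g k := by
    intro k
    exact RealRMK.integral_rieszMeasure Λ ⟨k, HasCompactSupport.of_compactSpace _⟩
  refine ⟨RealRMK.rieszMeasure Λ, inferInstance, ?_, ?_, ?_⟩
  · refine ext_of_forall_integral_eq_of_IsFiniteMeasure fun u => ?_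
    rw [integral_map (by fun_prop) (by fun_prop)]
    have := hΛ (φ (u.toContinuousMap, 0))
    rw [hgφ] at this
    simpa [hφ] using this
  · refine ext_of_forall_integral_eq_of_IsFiniteMeasure fun u => ?_
    rw [integral_map (by fun_prop) (by fun_prop)]
    have := hΛ (φ (0, u.toContinuousMap))
    rw [hgφ] at this
    simpa [hφ] using this
  · intro n
    rw [hΛ]
    have h1 := hg2 (φ (ContinuousMap.const _ T, 0) - f n)
      ((hcone _).2 ⟨1, zero_le_one, n, fun p => by simp [hφ]⟩)
    rw [map_sub, hgφ] at h1
    simp at h1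
    linarith

lemma kantorovich
    {X : Type*} [TopologicalSpace X] [PolishSpace X] [MeasurableSpace X] [BorelSpace X]
    (c : X → X → ℝ) (hc_nonneg : ∀ x y, 0 ≤ c x y)
    (hc_lsc : LowerSemicontinuous fun p : X × X => c p.1 p.2)
    (ν μ : Measure X) [IsProbabilityMeasure ν] [IsProbabilityMeasure μ] (T : ℝ)
    (h : ∀ u v : BoundedContinuousFunction X ℝ, (∀ x y, u x + v y ≤ c x y) →
      ∫ x, u x ∂ν + ∫ y, v y ∂μ ≤ T) :
    optCost c ν μ ≤ ENNReal.ofReal T := by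
  obtain ⟨F, hF⟩ : ∃ F : X → ℕ → unitInterval, Topology.IsEmbedding F := by
    let := TopologicalSpace.upgradeIsCompletelyMetrizable X
    exact Metric.PiNatEmbed.exists_embedding_to_hilbert_cube
  have hFm : MeasurableEmbedding F := hF.continuous.measurableEmbedding hF.injective
  have hE : Topology.IsEmbedding (Prod.map F F) := hF.prodMap hF
  have hEm : MeasurableEmbedding (Prod.map F F) :=
    hE.continuous.measurableEmbedding hE.injective
  have : Nonempty X := nonempty_of_isProbabilityMeasure ν
  let : MetricSpace ((ℕ → unitInterval) × (ℕ → unitInterval)) :=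
    TopologicalSpace.metrizableSpaceMetric _
  obtain ⟨f, hf1, hf2, hf3, hf4⟩ := lsc_approx (Prod.map F F) hE.isInducing
    (fun p : X × X => c p.1 p.2) (fun p => hc_nonneg _ _) hc_lsc
  have : IsProbabilityMeasure (ν.map F) := Measure.isProbabilityMeasure_map hFm.measurable.aemeasurable
  have : IsProbabilityMeasure (μ.map F) := Measure.isProbabilityMeasure_map hFm.measurable.aemeasurable
  obtain ⟨π', hπf, hπ1, hπ2, hπ3⟩ := compact_dual (ν.map F) (μ.map F) f hf1 T (by
    intro n u v huv
    have := h ((BoundedContinuousFunction.mkOfCompact u).compContinuous ⟨F, hF.continuous⟩)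
      ((BoundedContinuousFunction.mkOfCompact v).compContinuous ⟨F, hF.continuous⟩)
      (fun x y => (huv _ _).trans (hf3 n (x, y)))
    rw [hFm.integral_map, hFm.integral_map]
    simpa using this)
  have hr : ∀ m : Measure X, ∀ᵐ x ∂(m.map F), x ∈ Set.range F := by
    intro m
    rw [hFm.ae_map_iff]
    exact Filter.Eventually.of_forall fun x => ⟨x, rfl⟩
  have hae : ∀ᵐ p ∂π', p ∈ Set.range (Prod.map F F) := by
    have h1 := hr ν
    have h2 := hr μ
    rw [← hπ1] at h1
    rw [← hπ2] at h2
    filter_upwards [ae_of_ae_map (by fun_prop) h1, ae_of_ae_map (by fun_prop) h2] with p hp1 hp2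
    rw [Set.range_prodMap]
    exact ⟨hp1, hp2⟩
  have hmap : (π'.comap (Prod.map F F)).map (Prod.map F F) = π' := by
    rw [hEm.map_comap]
    exact Measure.restrict_eq_self_of_ae_mem hae
  have hm1 : (π'.comap (Prod.map F F)).map Prod.fst = ν := by
    rw [← hFm.comap_map ν, ← hπ1, ← hFm.comap_map ((π'.comap (Prod.map F F)).map Prod.fst)]
    congr 1
    conv_rhs => rw [← hmap]
    rw [Measure.map_map hFm.measurable measurable_fst, Measure.map_map measurable_fst hEm.measurable]
    rfl
  have hm2 : (π'.comap (Prod.map F F)).map Prod.snd = μ := by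
    rw [← hFm.comap_map μ, ← hπ2, ← hFm.comap_map ((π'.comap (Prod.map F F)).map Prod.snd)]
    congr 1
    conv_rhs => rw [← hmap]
    rw [Measure.map_map hFm.measurable measurable_snd, Measure.map_map measurable_snd hEm.measurable]
    rfl
  refine le_trans (iInf₂_le (π'.comap (Prod.map F F)) ⟨hm1, hm2⟩) ?_
  · calc ∫⁻ p, ENNReal.ofReal (c p.1 p.2) ∂(π'.comap (Prod.map F F))
        ≤ ∫⁻ p, ⨆ n, ENNReal.ofReal (f n (Prod.map F F p)) ∂(π'.comap (Prod.map F F)) := by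
          refine lintegral_mono fun p => ?_
          refine le_of_forall_lt fun b hb => ?_
          obtain ⟨b', hb1, hb2⟩ := exists_between hb
          have hb3 : b' ≠ ∞ := (hb2.trans ENNReal.ofReal_lt_top).ne
          rw [← ENNReal.ofReal_toReal hb3, ENNReal.ofReal_lt_ofReal_iff_of_nonneg
            ENNReal.toReal_nonneg] at hb2
          obtain ⟨n, hn⟩ := hf4 p _ hb2
          refine hb1.trans_le (le_trans ?_ (le_iSup _ n))
          rw [← ENNReal.ofReal_toReal hb3]
          exact ENNReal.ofReal_le_ofReal hn
      _ = ⨆ n, ∫⁻ p, ENNReal.ofReal (f n (Prod.map F F p)) ∂(π'.comap (Prod.map F F)) := by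
          refine lintegral_iSup (fun n => ?_) ?_
          · exact ((f n).continuous.measurable.comp hEm.measurable).ennreal_ofReal
          · intro n m hnm p
            exact ENNReal.ofReal_le_ofReal (hf1 hnm _)
      _ ≤ ENNReal.ofReal T := by
          refine iSup_le fun n => ?_
          have hfi : Integrable (fun q => f n q) π' :=
            (BoundedContinuousFunction.mkOfCompact (f n)).integrable π'
          rw [← hEm.lintegral_map (fun q => ENNReal.ofReal (f n q)), hmap,
            ← ofReal_integral_eq_lintegral_ofReal hfi
              (Filter.Eventually.of_forall (hf2 n))]
          exact ENNReal.ofReal_le_ofReal (hπ3 n)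

lemma young (h g : ℝ) (hh : 0 ≤ h) : h * g ≤ (h * Real.log h - h + 1) + (Real.exp g - 1) := by
  rcases hh.eq_or_lt with rfl | hh
  · have := Real.exp_pos g
    simp
    linarith
  · have h1 := Real.add_one_le_exp (g - Real.log h)
    rw [Real.exp_sub, Real.exp_log hh, le_div_iff₀ hh] at h1
    linarith

lemma ent_nonneg (h : ℝ) (hh : 0 ≤ h) : 0 ≤ h * Real.log h - h + 1 := by
  have := young h 0 hh
  simpa using this

lemma exp_integrable {X : Type*} [TopologicalSpace X] [MeasurableSpace X] [BorelSpace X]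
    (μ : Measure X) [IsProbabilityMeasure μ] (w : BoundedContinuousFunction X ℝ) :
    Integrable (fun x => Real.exp (w x)) μ := by
  refine Integrable.of_bound (C := Real.exp ‖w‖)
    (Real.continuous_exp.comp w.continuous).measurable.aestronglyMeasurable
    (Filter.Eventually.of_forall fun x => ?_)
  rw [Real.norm_eq_abs, Real.abs_exp]
  exact Real.exp_le_exp.2 ((le_abs_self _).trans (w.norm_coe_le_norm x))

lemma donsker_varadhan {X : Type*} [TopologicalSpace X] [MeasurableSpace X] [BorelSpace X]
    (μ ν : Measure X) [IsProbabilityMeasure μ] [IsProbabilityMeasure ν]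
    (hH : relEntropy ν μ ≠ ∞) (w : BoundedContinuousFunction X ℝ) :
    ∫ x, w x ∂ν ≤ (relEntropy ν μ).toReal + Real.log (∫ x, Real.exp (w x) ∂μ) := by
  unfold relEntropy at hH ⊢
  split_ifs at hH ⊢ with hac
  swap
  · exact absurd rfl hH
  have hZ : 0 < ∫ x, Real.exp (w x) ∂μ := integral_exp_pos (exp_integrable μ w)
  set Z := ∫ x, Real.exp (w x) ∂μ with hZdef
  have hmeas : Measurable fun x => (ν.rnDeriv μ x).toReal * Real.log (ν.rnDeriv μ x).toReal
      - (ν.rnDeriv μ x).toReal + 1 := by fun_prop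
  have hnn : ∀ x, 0 ≤ (ν.rnDeriv μ x).toReal * Real.log (ν.rnDeriv μ x).toReal
      - (ν.rnDeriv μ x).toReal + 1 := fun x => ent_nonneg _ ENNReal.toReal_nonneg
  have hInt : Integrable (fun x => (ν.rnDeriv μ x).toReal * Real.log (ν.rnDeriv μ x).toReal
      - (ν.rnDeriv μ x).toReal + 1) μ :=
    (lintegral_ofReal_ne_top_iff_integrable hmeas.aestronglyMeasurable
      (Filter.Eventually.of_forall hnn)).1 hH
  rw [← integral_eq_lintegral_of_nonneg_ae (Filter.Eventually.of_forall hnn)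
    hmeas.aestronglyMeasurable]
  have hgi : Integrable (fun x => w x - Real.log Z) ν := (w.integrable ν).sub (integrable_const _)
  have hexp : ∀ x, Real.exp (w x - Real.log Z) = Real.exp (w x) / Z := by
    intro x
    rw [Real.exp_sub, Real.exp_log hZ]
  have hei : Integrable (fun x => Real.exp (w x - Real.log Z)) μ := by
    simp_rw [hexp]
    exact (exp_integrable μ w).div_const _
  have h1 : ∫ x, (w x - Real.log Z) ∂ν = ∫ x, w x ∂ν - Real.log Z := by
    rw [integral_sub (w.integrable ν) (integrable_const _)]
    simp
  have h2 : ∫ x, (Real.exp (w x - Real.log Z) - 1) ∂μ = 0 := by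
    rw [integral_sub hei (integrable_const _)]
    simp_rw [hexp]
    rw [integral_div, ← hZdef, div_self hZ.ne']
    simp
  have h3 : ∫ x, (w x - Real.log Z) ∂ν =
      ∫ x, (ν.rnDeriv μ x).toReal * (w x - Real.log Z) ∂μ :=
    (integral_rnDeriv_smul hac (f := fun x => w x - Real.log Z)).symm
  have h4 : ∫ x, (ν.rnDeriv μ x).toReal * (w x - Real.log Z) ∂μ ≤
      ∫ x, (((ν.rnDeriv μ x).toReal * Real.log (ν.rnDeriv μ x).toReal
      - (ν.rnDeriv μ x).toReal + 1) + (Real.exp (w x - Real.log Z) - 1)) ∂μ := by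
    refine integral_mono ?_ (hInt.add (hei.sub (integrable_const _))) fun x =>
      young _ _ ENNReal.toReal_nonneg
    exact (integrable_rnDeriv_smul_iff hac (f := fun x => w x - Real.log Z)).2 hgi
  have h5 : Integrable (fun x => Real.exp (w x - Real.log Z) - 1) μ :=
    hei.sub (integrable_const _)
  rw [integral_add hInt h5, h2] at h4
  linarith

lemma gibbs {X : Type*} [TopologicalSpace X] [MeasurableSpace X] [BorelSpace X]
    (μ : Measure X) [IsProbabilityMeasure μ] (w : BoundedContinuousFunction X ℝ) :
    0 ≤ ∫ x, w x ∂(μ.tilted w) - Real.log (∫ x, Real.exp (w x) ∂μ) ∧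
    relEntropy (μ.tilted w) μ =
      ENNReal.ofReal (∫ x, w x ∂(μ.tilted w) - Real.log (∫ x, Real.exp (w x) ∂μ)) := by
  have hwi := exp_integrable μ w
  have : IsProbabilityMeasure (μ.tilted w) := isProbabilityMeasure_tilted hwi
  have hac := tilted_absolutelyContinuous μ w
  unfold relEntropy
  rw [if_pos hac]
  have hZ : 0 < ∫ x, Real.exp (w x) ∂μ := integral_exp_pos hwi
  set Z := ∫ x, Real.exp (w x) ∂μ with hZdef
  set r := fun x => ((μ.tilted w).rnDeriv μ x).toReal with hr
  have hri : Integrable r μ := Measure.integrable_toReal_rnDeriv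
  have hri1 : ∫ x, r x ∂μ = 1 := by
    rw [hr, Measure.integral_toReal_rnDeriv hac]; simp
  have hlog : (fun x => r x * (w x - Real.log Z) - r x + 1) =ᵐ[μ]
      fun x => r x * Real.log (r x) - r x + 1 := by
    filter_upwards [log_rnDeriv_tilted_left_self hwi] with x hx
    simp only [hr]
    rw [hx]
  have hgi : Integrable (fun x => w x - Real.log Z) (μ.tilted w) :=
    (w.integrable _).sub (integrable_const _)
  have hrg : Integrable (fun x => r x * (w x - Real.log Z)) μ :=
    (integrable_rnDeriv_smul_iff hac (f := fun x => w x - Real.log Z)).2 hgi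
  have hi : Integrable (fun x => r x * Real.log (r x) - r x + 1) μ :=
    ((hrg.sub hri).add (integrable_const 1)).congr hlog
  have e1 : ∫ x, (r x * (w x - Real.log Z) - r x + 1) ∂μ =
      ∫ x, r x * (w x - Real.log Z) ∂μ - ∫ x, r x ∂μ + 1 := by
    have h5 : Integrable (fun x => r x * (w x - Real.log Z) - r x) μ := hrg.sub hri
    rw [integral_add h5 (integrable_const 1), integral_sub hrg hri]
    simp
  have e2 : ∫ x, r x * (w x - Real.log Z) ∂μ = ∫ x, (w x - Real.log Z) ∂(μ.tilted w) :=
    integral_rnDeriv_smul hac (f := fun x => w x - Real.log Z)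
  have e3 : ∫ x, (r x * Real.log (r x) - r x + 1) ∂μ = ∫ x, w x ∂(μ.tilted w) - Real.log Z := by
    rw [← integral_congr_ae hlog, e1, e2, hri1, integral_sub (w.integrable _) (integrable_const _)]
    simp
  refine ⟨?_, ?_⟩
  · rw [← e3]
    exact integral_nonneg fun x => ent_nonneg _ ENNReal.toReal_nonneg
  change ∫⁻ x, ENNReal.ofReal (r x * Real.log (r x) - r x + 1) ∂μ = _
  rw [← ofReal_integral_eq_lintegral_ofReal hi
    (Filter.Eventually.of_forall fun x => ent_nonneg _ ENNReal.toReal_nonneg), e3]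

lemma weak_duality {X : Type*} [TopologicalSpace X] [MeasurableSpace X] [BorelSpace X]
    (c : X → X → ℝ) (ν μ : Measure X) [IsProbabilityMeasure ν] [IsProbabilityMeasure μ]
    (u v : BoundedContinuousFunction X ℝ) (huv : ∀ x y, u x + v y ≤ c x y) :
    ENNReal.ofReal (∫ x, u x ∂ν + ∫ y, v y ∂μ) ≤ optCost c ν μ := by
  refine le_iInf₂ fun π hπ => ?_
  obtain ⟨h1, h2⟩ := hπ
  have hui : Integrable (fun p : X × X => u p.1) π := by
    have h := u.integrable ν
    rw [← h1] at h
    exact h.comp_measurable measurable_fst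
  have hvi : Integrable (fun p : X × X => v p.2) π := by
    have h := v.integrable μ
    rw [← h2] at h
    exact h.comp_measurable measurable_snd
  have e1 : ∫ x, u x ∂ν = ∫ p, u p.1 ∂π := by
    rw [← h1]
    exact integral_map measurable_fst.aemeasurable u.continuous.measurable.aestronglyMeasurable
  have e2 : ∫ x, v x ∂μ = ∫ p, v p.2 ∂π := by
    rw [← h2]
    exact integral_map measurable_snd.aemeasurable v.continuous.measurable.aestronglyMeasurable
  rw [e1, e2, ← integral_add hui hvi]
  refine le_trans ?_ (lintegral_mono fun p => ENNReal.ofReal_le_ofReal (huv p.1 p.2))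
  refine ENNReal.ofReal_le_of_le_toReal ?_
  have h5 : Integrable (fun p : X × X => u p.1 + v p.2) π := hui.add hvi
  rw [integral_eq_lintegral_pos_part_sub_lintegral_neg_part h5]
  exact sub_le_self _ ENNReal.toReal_nonneg

/-- Bobkov–Götze dual characterization: for `α` convex increasing with `α(0) = 0`,
`μ` satisfies `α(𝒯_c(·,μ)) ≤ H(·|μ)` if and only if for all bounded continuous `u, v`
with `u(x) + v(y) ≤ c(x,y)` and all `s ≥ 0`,
`∫ e^{su} dμ ≤ exp(−s ∫ v dμ + α⊛(s))`, where `α⊛(s) = sup_{r ≥ 0} (sr − α(r))`.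
(The right-hand side is encoded as `sup_{r ≥ 0} exp(−s ∫ v dμ + sr − α(r))`, which
equals `exp(−s ∫ v dμ + α⊛(s))`, also when `α⊛(s) = ∞`.) -/
theorem bobkov_goetze_dual
    {X : Type*} [TopologicalSpace X] [PolishSpace X] [MeasurableSpace X] [BorelSpace X]
    (c : X → X → ℝ) (hc_nonneg : ∀ x y, 0 ≤ c x y)
    (hc_lsc : LowerSemicontinuous fun p : X × X => c p.1 p.2)
    (α : ℝ → ℝ)
    (hα_cvx : ConvexOn ℝ (Set.Ici 0) α) (hα_mono : MonotoneOn α (Set.Ici 0))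
    (hα_zero : α 0 = 0)
    (μ : Measure X) [IsProbabilityMeasure μ] :
    (∀ ν : Measure X, IsProbabilityMeasure ν →
        extRealFun α (optCost c ν μ) ≤ relEntropy ν μ) ↔
      (∀ u v : BoundedContinuousFunction X ℝ, (∀ x y, u x + v y ≤ c x y) →
        ∀ s : ℝ, 0 ≤ s →
          ENNReal.ofReal (∫ x, Real.exp (s * u x) ∂μ) ≤
            ⨆ (r : ℝ) (_ : 0 ≤ r),
              ENNReal.ofReal (Real.exp (-(s * ∫ y, v y ∂μ) + (s * r - α r)))) := by
  constructor
  · intro H u v huv s hs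
    set w : BoundedContinuousFunction X ℝ := s • u with hw
    have hwx : ∀ x, w x = s * u x := fun x => rfl
    have hwi := exp_integrable μ w
    have hprob : IsProbabilityMeasure (μ.tilted w) := isProbabilityMeasure_tilted hwi
    obtain ⟨hq0, hq⟩ := gibbs μ w
    have hwk := weak_duality c (μ.tilted w) μ u v huv
    have hH := H _ hprob
    rw [hq] at hH
    set a := ∫ x, u x ∂(μ.tilted w) + ∫ y, v y ∂μ with ha
    have h1 : ENNReal.ofReal (α (max a 0)) ≤ extRealFun α (optCost c (μ.tilted w) μ) := by
      refine le_iSup₂ (f := fun (t : ℝ) (_ : 0 ≤ t ∧ ENNReal.ofReal t ≤ _) => ENNReal.ofReal (α t))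
        (max a 0) ⟨le_max_right _ _, ?_⟩
      rw [ENNReal.ofReal_max]
      simpa using hwk
    have h2 := (ENNReal.ofReal_le_ofReal_iff hq0).1 (h1.trans hH)
    have h3 : ∫ x, w x ∂(μ.tilted w) = s * ∫ x, u x ∂(μ.tilted w) := by
      simp_rw [hwx]
      rw [integral_const_mul]
    have hZ : 0 < ∫ x, Real.exp (w x) ∂μ := integral_exp_pos hwi
    refine le_trans (ENNReal.ofReal_le_ofReal ?_) (le_iSup₂ (f := fun (r : ℝ) (_ : 0 ≤ r) =>
      ENNReal.ofReal (Real.exp (-(s * ∫ y, v y ∂μ) + (s * r - α r)))) (max a 0) (le_max_right _ _))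
    change ∫ x, Real.exp (w x) ∂μ ≤ _
    rw [← Real.log_le_iff_le_exp hZ]
    have h4 : s * a ≤ s * max a 0 := mul_le_mul_of_nonneg_left (le_max_left _ _) hs
    rw [ha, mul_add, ← ha] at h4
    linarith
  · intro H ν hν
    by_cases hfin : relEntropy ν μ = ∞
    · rw [hfin]; exact le_top
    refine iSup₂_le fun t ht => ?_
    obtain ⟨ht0, htT⟩ := ht
    rcases ht0.eq_or_lt with rfl | ht0
    · simp [hα_zero]
    refine ENNReal.ofReal_le_of_le_toReal ?_
    obtain ⟨s, hs, hsub⟩ := exists_subgrad α hα_cvx hα_mono t ht0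
    have key : ∀ t', 0 < t' → t' < t → α t - s * (t - t') ≤ (relEntropy ν μ).toReal := by
      intro t' ht' htt'
      have hex : ∃ u v : BoundedContinuousFunction X ℝ, (∀ x y, u x + v y ≤ c x y) ∧
          t' < ∫ x, u x ∂ν + ∫ y, v y ∂μ := by
        by_contra hcon
        push Not at hcon
        have h1 := htT.trans (kantorovich c hc_nonneg hc_lsc ν μ t' hcon)
        rw [ENNReal.ofReal_le_ofReal_iff ht'.le] at h1
        linarith
      obtain ⟨u, v, huv, hlt⟩ := hex
      have hwi := exp_integrable μ (s • u)
      have hZ : 0 < ∫ x, Real.exp ((s • u) x) ∂μ := integral_exp_pos hwi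
      have hdv := donsker_varadhan μ ν hfin (s • u)
      have h3 : ∫ x, (s • u) x ∂ν = s * ∫ x, u x ∂ν := by
        rw [← integral_const_mul]
        rfl
      have h4 := (H u v huv s hs).trans (iSup₂_le (a := ENNReal.ofReal
          (Real.exp (-(s * ∫ y, v y ∂μ) + (s * t - α t)))) fun r hr =>
        ENNReal.ofReal_le_ofReal (Real.exp_le_exp.2 (by have := hsub r hr; linarith)))
      rw [ENNReal.ofReal_le_ofReal_iff (Real.exp_pos _).le] at h4
      have h5 := (Real.log_le_iff_le_exp hZ).2 h4
      have h6 := mul_le_mul_of_nonneg_left hlt.le hs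
      rw [h3] at hdv
      linarith
    have hlim : Filter.Tendsto (fun t' => α t - s * (t - t')) (nhdsWithin t (Set.Iio t))
        (nhds (α t - s * (t - t))) := by
      refine Filter.Tendsto.mono_left ?_ nhdsWithin_le_nhds
      exact Continuous.tendsto (f := fun t' => α t - s * (t - t')) (by fun_prop) t
    simp only [sub_self, mul_zero, sub_zero] at hlim
    refine le_of_tendsto hlim ?_
    filter_upwards [Ioo_mem_nhdsLT ht0] with t' ht'
    exact key t' ht'.1 ht'.2
end

section
/- (Dual characterization for metric costs) Let d be a lower semicontinuous metric on a Polish space 𝒳, α ∈ 𝒜, and μ ∈ P(𝒳). The following are equivalent: (1) α(𝒯_d(ν,μ)) ≤ H(ν|μ) for all ν ∈ P(𝒳); (2) for every bounded Borel measurable function f on 𝒳 with |f(x) − f(y)| ≤ d(x,y) for all x,y ∈ 𝒳, and every s ≥ 0, ∫ e^{s f} dμ ≤ exp( s ∫ f dμ + α⊛(s) ). -/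
open MeasureTheory ENNReal

open Filter Topology CompactlySupported

lemma lsc_approx_s11 {X Y : Type*} [TopologicalSpace X] [PseudoMetricSpace Y] [Nonempty X]
    (j : X → Y) (hj : IsInducing j) (d : X → ℝ) (hd0 : ∀ x, 0 ≤ d x)
    (hd : LowerSemicontinuous d) :
    ∃ h : ℕ → Y → ℝ, (∀ n, Continuous (h n)) ∧ (∀ n x, h n (j x) ≤ d x) ∧
      ∀ x, Tendsto (fun n => h n (j x)) atTop (𝓝 (d x)) := by
  let g : ℕ → Y → X → ℝ := fun n y x => min (d x) n + n * dist y (j x)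
  have g0 : ∀ n y x, 0 ≤ g n y x := fun n y x => by
    have := hd0 x
    have : (0:ℝ) ≤ min (d x) n := le_min this (by positivity)
    positivity
  have gb : ∀ n y, BddBelow (Set.range (g n y)) := fun n y =>
    ⟨0, by rintro _ ⟨x, rfl⟩; exact g0 n y x⟩
  have hle : ∀ n x, (⨅ x', g n (j x) x') ≤ d x := fun n x =>
    (ciInf_le (gb n _) x).trans (by simp [g])
  refine ⟨fun n y => ⨅ x, g n y x, ?_, hle, ?_⟩
  · intro n
    have : LipschitzWith (n : NNReal) (fun y => ⨅ x, g n y x) := by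
      apply LipschitzWith.of_le_add_mul
      intro y y'
      rw [← sub_le_iff_le_add]
      apply le_ciInf
      intro x
      rw [sub_le_iff_le_add]
      refine (ciInf_le (gb n y) x).trans ?_
      have := dist_triangle y y' (j x)
      have h2 : (0:ℝ) ≤ n := by positivity
      simp only [g, NNReal.coe_natCast]
      nlinarith
    exact this.continuous
  · intro x
    rw [tendsto_order]
    constructor
    · intro c hc
      obtain ⟨c', hcc', hc'⟩ := exists_between hc
      have hU : ∀ᶠ x' in 𝓝 x, c' < d x' := hd x c' hc'
      rw [hj.nhds_eq_comap] at hU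
      obtain ⟨U, hU1, hU2⟩ := hU
      obtain ⟨ε, hε, hball⟩ := Metric.mem_nhds_iff.1 hU1
      obtain ⟨N, hN⟩ := exists_nat_ge (max c' (c' / ε))
      filter_upwards [eventually_ge_atTop N] with n hn
      refine hcc'.trans_le (le_ciInf fun x' => ?_)
      have hn' : (N:ℝ) ≤ n := by exact_mod_cast hn
      have h1 : c' ≤ n := (le_max_left _ _).trans (hN.trans hn')
      have h2 : c' / ε ≤ n := (le_max_right _ _).trans (hN.trans hn')
      rw [div_le_iff₀ hε] at h2
      have hn0 : (0:ℝ) ≤ n := by positivity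
      by_cases hx' : dist (j x) (j x') < ε
      · have : c' < d x' := hU2 (hball (by rwa [Metric.mem_ball, dist_comm]))
        have h3 : c' ≤ min (d x') n := le_min this.le h1
        have : 0 ≤ n * dist (j x) (j x') := by positivity
        simp only [g]; linarith
      · push Not at hx'
        have h3 : (0:ℝ) ≤ min (d x') n := le_min (hd0 x') hn0
        have := mul_le_mul_of_nonneg_left hx' hn0
        simp only [g]; linarith
    · intro c hc
      exact Eventually.of_forall fun n => (hle n x).trans_lt hc

lemma hb_plan {X Y : Type*} [TopologicalSpace Y] [CompactSpace Y]
    (ι : X → Y) (I J : C(Y, ℝ) →ₗ[ℝ] ℝ)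
    (hpos : ∀ φ ψ : C(Y, ℝ), (∀ x y, 0 ≤ φ (ι x) + ψ (ι y)) → 0 ≤ I φ + J ψ)
    (d : X → X → ℝ) (V : ℝ)
    (hV : ∀ φ ψ : C(Y, ℝ), (∀ x y, φ (ι x) + ψ (ι y) ≤ d x y) → I φ + J ψ ≤ V) :
    ∃ L : C_c(Y × Y, ℝ) →ₗ[ℝ] ℝ, ∀ (h : C_c(Y × Y, ℝ)) (φ ψ : C(Y, ℝ)) (l : ℝ), 0 ≤ l →
      (∀ x y, h (ι x, ι y) ≤ φ (ι x) + ψ (ι y) + l * d x y) → L h ≤ I φ + J ψ + l * V := by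
  let S : C_c(Y × Y, ℝ) → Set ℝ := fun h => {r | ∃ (φ ψ : C(Y, ℝ)) (l : ℝ), 0 ≤ l ∧
    (∀ x y, h (ι x, ι y) ≤ φ (ι x) + ψ (ι y) + l * d x y) ∧ r = I φ + J ψ + l * V}
  have Sadd : ∀ h h' r r', r ∈ S h → r' ∈ S h' → r + r' ∈ S (h + h') := by
    rintro h h' _ _ ⟨φ, ψ, l, hl, H, rfl⟩ ⟨φ', ψ', l', hl', H', rfl⟩
    refine ⟨φ + φ', ψ + ψ', l + l', by positivity, fun x y => ?_, ?_⟩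
    · have := H x y
      have := H' x y
      simp only [CompactlySupportedContinuousMap.coe_add, ContinuousMap.coe_add, Pi.add_apply]
      linarith
    · simp only [map_add]; ring
  have Ssmul : ∀ (c : ℝ) h r, 0 < c → r ∈ S h → c * r ∈ S (c • h) := by
    rintro c h _ hc ⟨φ, ψ, l, hl, H, rfl⟩
    refine ⟨c • φ, c • ψ, c * l, by positivity, fun x y => ?_, ?_⟩
    · have := mul_le_mul_of_nonneg_left (H x y) hc.le
      simp only [CompactlySupportedContinuousMap.coe_smul, ContinuousMap.coe_smul, Pi.smul_apply,
        smul_eq_mul]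
      linarith
    · simp only [map_smul, smul_eq_mul]; ring
  have S0 : ∀ r ∈ S 0, 0 ≤ r := by
    rintro _ ⟨φ, ψ, l, hl, H, rfl⟩
    rcases hl.eq_or_lt with rfl | hl
    · simpa using hpos φ ψ (fun x y => by simpa using H x y)
    · have := hV (-(l⁻¹ • φ)) (-(l⁻¹ • ψ)) (fun x y => by
        have := H x y
        simp only [CompactlySupportedContinuousMap.coe_zero, Pi.zero_apply] at this
        simp only [ContinuousMap.coe_neg, ContinuousMap.coe_smul, Pi.neg_apply, Pi.smul_apply,
          smul_eq_mul]
        have h2 := mul_nonneg (inv_nonneg.2 hl.le) this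
        have h3 : l⁻¹ * (φ (ι x) + ψ (ι y) + l * d x y) =
          l⁻¹ * φ (ι x) + l⁻¹ * ψ (ι y) + d x y := by field_simp
        linarith)
      simp only [map_neg, map_smul, smul_eq_mul] at this
      have h3 : l * (-(l⁻¹ * I φ) + -(l⁻¹ * J ψ)) = -I φ - J ψ := by field_simp; ring
      have := mul_le_mul_of_nonneg_left this hl.le
      linarith
  have Sne : ∀ h, (S h).Nonempty := by
    intro h
    obtain ⟨C, hC⟩ := (isCompact_range h.continuous).bddAbove
    refine ⟨_, ContinuousMap.const Y C, 0, 0, le_rfl, fun x y => ?_, rfl⟩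
    simpa using hC ⟨(ι x, ι y), rfl⟩
  have Sbdd : ∀ h, BddBelow (S h) := by
    intro h
    obtain ⟨r', hr'⟩ := Sne (-h)
    refine ⟨-r', fun r hr => ?_⟩
    have := S0 (r + r') (by simpa using Sadd _ _ _ _ hr hr')
    linarith
  let N : C_c(Y × Y, ℝ) → ℝ := fun h => sInf (S h)
  have Nle : ∀ (c : ℝ) h, 0 < c → N (c • h) ≤ c * N h := by
    intro c h hc
    rw [← div_le_iff₀' hc]
    refine le_csInf (Sne h) fun r hr => ?_
    rw [div_le_iff₀' hc]
    exact csInf_le (Sbdd _) (Ssmul c h r hc hr)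
  have Nhom : ∀ c : ℝ, 0 < c → ∀ h, N (c • h) = c * N h := by
    intro c hc h
    refine le_antisymm (Nle c h hc) ?_
    have := Nle c⁻¹ (c • h) (by positivity)
    rw [smul_smul, inv_mul_cancel₀ hc.ne', one_smul] at this
    have := mul_le_mul_of_nonneg_left this hc.le
    rwa [← mul_assoc, mul_inv_cancel₀ hc.ne', one_mul] at this
  have Nadd : ∀ h h', N (h + h') ≤ N h + N h' := by
    intro h h'
    rw [← sub_le_iff_le_add]
    refine le_csInf (Sne h) fun r hr => ?_
    rw [sub_le_comm]
    refine le_csInf (Sne h') fun r' hr' => ?_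
    rw [sub_le_iff_le_add']
    exact csInf_le (Sbdd _) (Sadd _ _ _ _ hr hr')
  obtain ⟨L, -, hL⟩ := exists_extension_of_le_sublinear (⊥ : C_c(Y × Y, ℝ) →ₗ.[ℝ] ℝ) N Nhom Nadd (by
    rintro ⟨x, hx⟩
    have hx0 : x = 0 := (Submodule.mem_bot ℝ).1 hx
    subst hx0
    have h0 : (⊥ : C_c(Y × Y, ℝ) →ₗ.[ℝ] ℝ) ⟨0, hx⟩ = 0 :=
      LinearPMap.map_zero _
    rw [h0]
    exact le_csInf (Sne 0) S0)
  refine ⟨L, fun h φ ψ l hl H => (hL h).trans (csInf_le (Sbdd h) ⟨φ, ψ, l, hl, H, rfl⟩)⟩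

lemma exists_plan {X Y : Type*} [MeasurableSpace X] [MetricSpace Y] [CompactSpace Y]
    [MeasurableSpace Y] [BorelSpace Y] (ι : X → Y) (hι : Measurable ι)
    (ν μ : Measure X) [IsProbabilityMeasure ν] [IsProbabilityMeasure μ]
    (d : X → X → ℝ) (V : ℝ)
    (hV : ∀ φ ψ : C(Y, ℝ), (∀ x y, φ (ι x) + ψ (ι y) ≤ d x y) →
      ∫ x, φ (ι x) ∂ν + ∫ y, ψ (ι y) ∂μ ≤ V) :
    ∃ π : Measure (Y × Y), IsFiniteMeasure π ∧ π.map Prod.fst = ν.map ι ∧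
      π.map Prod.snd = μ.map ι ∧
      ∀ h : C(Y × Y, ℝ), (∀ x y, h (ι x, ι y) ≤ d x y) → ∫ z, h z ∂π ≤ V := by
  have hint : ∀ (m : Measure X) [IsProbabilityMeasure m] (φ : C(Y, ℝ)),
      Integrable (fun x => φ (ι x)) m := by
    intro m _ φ
    obtain ⟨C, hC⟩ := (isCompact_range φ.continuous.norm).bddAbove
    exact Integrable.of_bound (φ.continuous.measurable.comp hι).aestronglyMeasurable C
      (ae_of_all _ fun x => hC ⟨ι x, rfl⟩)
  let F : ∀ (m : Measure X) [IsProbabilityMeasure m], C(Y, ℝ) →ₗ[ℝ] ℝ := fun m _ =>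
    { toFun := fun φ => ∫ x, φ (ι x) ∂m
      map_add' := fun φ ψ => integral_add (hint m φ) (hint m ψ)
      map_smul' := fun c φ => integral_const_mul c _ }
  have hX : Nonempty X := nonempty_of_isProbabilityMeasure ν
  have key : ∀ φ ψ : C(Y, ℝ), ∫ x, φ (ι x) ∂ν + ∫ y, ψ (ι y) ∂μ =
      ∫ x, (∫ y, (φ (ι x) + ψ (ι y)) ∂μ) ∂ν := by
    intro φ ψ
    have : ∀ x, ∫ y, (φ (ι x) + ψ (ι y)) ∂μ = φ (ι x) + ∫ y, ψ (ι y) ∂μ := fun x => by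
      rw [integral_add (integrable_const _) (hint μ ψ)]; simp
    simp_rw [this]
    rw [integral_add (hint ν φ) (integrable_const _)]; simp
  obtain ⟨L, hL⟩ := hb_plan ι (F ν) (F μ) (fun φ ψ H => by
      change 0 ≤ ∫ x, φ (ι x) ∂ν + ∫ y, ψ (ι y) ∂μ
      rw [key]
      exact integral_nonneg fun x => integral_nonneg fun y => H x y) d V hV
  let Λ : C_c(Y × Y, ℝ) →ₚ[ℝ] ℝ := PositiveLinearMap.mk₀ L (fun h hh => by
    have := hL (-h) 0 0 0 le_rfl (fun x y => by
      have : 0 ≤ h (ι x, ι y) := hh _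
      simpa using this)
    simpa using this)
  have hΛ : ∀ h, Λ h = L h := fun h => rfl
  let π := RealRMK.rieszMeasure Λ
  let toC : C(Y × Y, ℝ) → C_c(Y × Y, ℝ) := fun h => ⟨h, HasCompactSupport.of_compactSpace _⟩
  have hπ : ∀ h : C(Y × Y, ℝ), ∫ z, h z ∂π = L (toC h) := fun h =>
    RealRMK.integral_rieszMeasure Λ (toC h)
  have fin : IsFiniteMeasure π := by infer_instance
  have := Measure.isProbabilityMeasure_map (μ := ν) hι.aemeasurable
  have := Measure.isProbabilityMeasure_map (μ := μ) hι.aemeasurable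
  refine ⟨π, fin, ?_, ?_, ?_⟩
  · apply ext_of_forall_integral_eq_of_IsFiniteMeasure
    intro f
    rw [integral_map measurable_fst.aemeasurable f.continuous.measurable.aestronglyMeasurable,
      integral_map hι.aemeasurable f.continuous.measurable.aestronglyMeasurable]
    have e := hπ (f.toContinuousMap.comp ⟨Prod.fst, continuous_fst⟩)
    have e1 := hL (toC (f.toContinuousMap.comp ⟨Prod.fst, continuous_fst⟩)) f.toContinuousMap 0 0
      le_rfl (fun x y => by simp [toC])
    have e2 := hL (-toC (f.toContinuousMap.comp ⟨Prod.fst, continuous_fst⟩)) (-f.toContinuousMap) 0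
      0 le_rfl (fun x y => by simp [toC])
    simp only [map_neg, map_zero] at e1 e2
    change _ ≤ (∫ x, f (ι x) ∂ν) + _ + _ at e1
    change _ ≤ -(∫ x, f (ι x) ∂ν) + _ + _ at e2
    change ∫ z : Y × Y, f z.1 ∂π = _ at e
    rw [e]
    linarith
  · apply ext_of_forall_integral_eq_of_IsFiniteMeasure
    intro f
    rw [integral_map measurable_snd.aemeasurable f.continuous.measurable.aestronglyMeasurable,
      integral_map hι.aemeasurable f.continuous.measurable.aestronglyMeasurable]
    have e := hπ (f.toContinuousMap.comp ⟨Prod.snd, continuous_snd⟩)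
    have e1 := hL (toC (f.toContinuousMap.comp ⟨Prod.snd, continuous_snd⟩)) 0 f.toContinuousMap 0
      le_rfl (fun x y => by simp [toC])
    have e2 := hL (-toC (f.toContinuousMap.comp ⟨Prod.snd, continuous_snd⟩)) 0 (-f.toContinuousMap)
      0 le_rfl (fun x y => by simp [toC])
    simp only [map_neg, map_zero] at e1 e2
    change _ ≤ _ + (∫ x, f (ι x) ∂μ) + _ at e1
    change _ ≤ _ + -(∫ x, f (ι x) ∂μ) + _ at e2
    change ∫ z : Y × Y, f z.2 ∂π = _ at e
    rw [e]
    linarith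
  · intro h H
    rw [hπ]
    have := hL (toC h) 0 0 1 zero_le_one (fun x y => by simpa [toC] using H x y)
    simpa using this

lemma duality {X : Type*} [TopologicalSpace X] [PolishSpace X] [MeasurableSpace X] [BorelSpace X]
    (ν μ : Measure X) [IsProbabilityMeasure ν] [IsProbabilityMeasure μ]
    (d : X → X → ℝ) (V : ℝ)
    (hd : ∀ x y, 0 ≤ d x y) (hlsc : LowerSemicontinuous fun p : X × X => d p.1 p.2)
    (hV : ∀ φ ψ : X → ℝ, Continuous φ → Continuous ψ → (∃ M, ∀ x, |φ x| ≤ M) →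
      (∃ M, ∀ x, |ψ x| ≤ M) → (∀ x y, φ x + ψ y ≤ d x y) →
      ∫ x, φ x ∂ν + ∫ y, ψ y ∂μ ≤ V) :
    optCost d ν μ ≤ ENNReal.ofReal V := by
  have hX : Nonempty X := nonempty_of_isProbabilityMeasure ν
  obtain ⟨ι, hι⟩ : ∃ F : X → ℕ → unitInterval, IsEmbedding F := by
    let := TopologicalSpace.upgradeIsCompletelyMetrizable X
    exact Metric.PiNatEmbed.exists_embedding_to_hilbert_cube
  let : MetricSpace (ℕ → unitInterval) := TopologicalSpace.metrizableSpaceMetric _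
  have mι : MeasurableEmbedding ι := hι.continuous.measurableEmbedding hι.injective
  have bdd : ∀ φ : C(ℕ → unitInterval, ℝ), ∃ M, ∀ x, |φ (ι x)| ≤ M := by
    intro φ
    obtain ⟨C, hC⟩ := (isCompact_range φ.continuous.norm).bddAbove
    exact ⟨C, fun x => hC ⟨ι x, rfl⟩⟩
  obtain ⟨π, fin, hπ1, hπ2, hπ⟩ := exists_plan ι mι.measurable ν μ d V (fun φ ψ H =>
    hV _ _ (φ.continuous.comp hι.continuous) (ψ.continuous.comp hι.continuous) (bdd φ) (bdd ψ) H)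
  let j : X × X → (ℕ → unitInterval) × (ℕ → unitInterval) := Prod.map ι ι
  have ej : IsEmbedding j := hι.prodMap hι
  have mj : MeasurableEmbedding j := ej.continuous.measurableEmbedding ej.injective
  have hr : ∀ᵐ z ∂π, z ∈ Set.range j := by
    have h1 : ∀ᵐ z ∂π, z.1 ∈ Set.range ι := by
      have : ∀ᵐ y ∂(π.map Prod.fst), y ∈ Set.range ι := by
        rw [hπ1, mι.ae_map_iff]
        exact ae_of_all _ fun x => ⟨x, rfl⟩
      exact ae_of_ae_map measurable_fst.aemeasurable this
    have h2 : ∀ᵐ z ∂π, z.2 ∈ Set.range ι := by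
      have : ∀ᵐ y ∂(π.map Prod.snd), y ∈ Set.range ι := by
        rw [hπ2, mι.ae_map_iff]
        exact ae_of_all _ fun x => ⟨x, rfl⟩
      exact ae_of_ae_map measurable_snd.aemeasurable this
    filter_upwards [h1, h2] with z ⟨a, ha⟩ ⟨b, hb⟩
    exact ⟨(a, b), Prod.ext ha hb⟩
  let κ := π.comap j
  have hκ : κ.map j = π := by
    rw [mj.map_comap, Measure.restrict_eq_self_of_ae_mem hr]
  have inj : ∀ m m' : Measure X, m.map ι = m'.map ι → m = m' := fun m m' h => by
    rw [← mι.comap_map m, ← mι.comap_map m', h]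
  have hκ1 : κ.map Prod.fst = ν := by
    apply inj
    rw [← hπ1, ← hκ, Measure.map_map mι.measurable measurable_fst,
      Measure.map_map measurable_fst mj.measurable]
    rfl
  have hκ2 : κ.map Prod.snd = μ := by
    apply inj
    rw [← hπ2, ← hκ, Measure.map_map mι.measurable measurable_snd,
      Measure.map_map measurable_snd mj.measurable]
    rfl
  refine (iInf₂_le κ ⟨hκ1, hκ2⟩).trans ?_
  obtain ⟨h, hc, hle, ht⟩ := lsc_approx_s11 j ej.isInducing (fun p : X × X => d p.1 p.2)
    (fun p => hd _ _) hlsc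
  let h' : ℕ → C((ℕ → unitInterval) × (ℕ → unitInterval), ℝ) := fun n => ⟨fun z => max (h n z) 0,
    (hc n).max continuous_const⟩
  have hb : ∀ n, ∫⁻ p, ENNReal.ofReal (h' n (j p)) ∂κ ≤ ENNReal.ofReal V := by
    intro n
    have : ∫⁻ p, ENNReal.ofReal (h' n (j p)) ∂κ = ∫⁻ z, ENNReal.ofReal (h' n z) ∂π := by
      conv_rhs => rw [← hκ]
      rw [mj.lintegral_map]
    rw [this, ← ofReal_integral_eq_lintegral_ofReal]
    · exact ENNReal.ofReal_le_ofReal (hπ (h' n) fun x y => max_le (hle n (x, y)) (hd _ _))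
    · obtain ⟨C, hC⟩ := (isCompact_range (h' n).continuous.norm).bddAbove
      exact Integrable.of_bound (h' n).continuous.measurable.aestronglyMeasurable C
        (ae_of_all _ fun x => hC ⟨x, rfl⟩)
    · exact ae_of_all _ fun z => le_max_right _ _
  have hlim : ∀ p : X × X, ENNReal.ofReal (d p.1 p.2) =
      liminf (fun n => ENNReal.ofReal (h' n (j p))) atTop := by
    intro p
    have h1 : Tendsto (fun n => max (h n (j p)) 0) atTop (𝓝 (max (d p.1 p.2) 0)) :=
      (ht p).max tendsto_const_nhds
    rw [max_eq_left (hd _ _)] at h1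
    exact (ENNReal.tendsto_ofReal h1).liminf_eq.symm
  calc ∫⁻ p, ENNReal.ofReal (d p.1 p.2) ∂κ
      = ∫⁻ p, liminf (fun n => ENNReal.ofReal (h' n (j p))) atTop ∂κ := by
        exact lintegral_congr hlim
    _ ≤ liminf (fun n => ∫⁻ p, ENNReal.ofReal (h' n (j p)) ∂κ) atTop :=
        lintegral_liminf_le fun n => ENNReal.measurable_ofReal.comp
          ((h' n).continuous.measurable.comp mj.measurable)
    _ ≤ liminf (fun n : ℕ => ENNReal.ofReal V) atTop :=
        liminf_le_liminf (Eventually.of_forall hb)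
    _ = ENNReal.ofReal V := by simp

lemma kr_exists {X : Type*} [TopologicalSpace X] [PolishSpace X] [MeasurableSpace X] [BorelSpace X]
    (ν μ : Measure X) [IsProbabilityMeasure ν] [IsProbabilityMeasure μ]
    (d : X → X → ℝ) (hd0 : ∀ x y, 0 ≤ d x y)
    (hd_self : ∀ x, d x x = 0)
    (hd_symm : ∀ x y, d x y = d y x) (hd_triangle : ∀ x y z, d x z ≤ d x y + d y z)
    (hlsc : LowerSemicontinuous fun p : X × X => d p.1 p.2)
    (t : ℝ) (ht : ENNReal.ofReal t < optCost d ν μ) :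
    ∃ f : X → ℝ, Measurable f ∧ (∃ M, ∀ x, |f x| ≤ M) ∧ (∀ x y, |f x - f y| ≤ d x y) ∧
      t < ∫ x, f x ∂ν - ∫ x, f x ∂μ := by
  obtain ⟨φ, ψ, hφ, hψ, ⟨M₁, hM₁⟩, ⟨M₂, hM₂⟩, hle, hgt⟩ : ∃ φ ψ : X → ℝ, Continuous φ ∧
      Continuous ψ ∧ (∃ M, ∀ x, |φ x| ≤ M) ∧
      (∃ M, ∀ x, |ψ x| ≤ M) ∧ (∀ x y, φ x + ψ y ≤ d x y) ∧
      t < ∫ x, φ x ∂ν + ∫ y, ψ y ∂μ := by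
    by_contra hcon
    push Not at hcon
    exact absurd (duality ν μ d t hd0 hlsc hcon) (not_le.2 ht)
  have hX : Nonempty X := nonempty_of_isProbabilityMeasure ν
  obtain ⟨M, hM0, hφM, hψM⟩ : ∃ M : ℝ, 0 ≤ M ∧ (∀ x, |φ x| ≤ M) ∧ (∀ x, |ψ x| ≤ M) := by
    refine ⟨max M₁ M₂, ?_, fun x => (hM₁ x).trans (le_max_left _ _),
      fun x => (hM₂ x).trans (le_max_right _ _)⟩
    obtain ⟨x⟩ := hX
    exact ((abs_nonneg _).trans (hM₁ x)).trans (le_max_left _ _)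
  set gap := ∫ x, φ x ∂ν + ∫ y, ψ y ∂μ - t with hgap
  have hgap0 : 0 < gap := by linarith
  let δ : ℝ := min (gap / (2 * M + 1)) (1 / 2)
  have hδ : 0 < δ := lt_min (by positivity) (by norm_num)
  obtain ⟨K, -, hK, hKμ⟩ := (MeasurableSet.univ (α := X)).exists_isCompact_sdiff_lt
    (μ := μ) (measure_ne_top _ _) (ε := ENNReal.ofReal δ) (by simpa using hδ)
  rw [← Set.compl_eq_univ_sdiff] at hKμ
  have hKr : μ.real Kᶜ < δ := by
    rw [Measure.real]
    exact (ENNReal.lt_ofReal_iff_toReal_lt (measure_ne_top _ _)).1 hKμ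
  have hKne : K.Nonempty := by
    by_contra hne
    rw [Set.not_nonempty_iff_eq_empty] at hne
    subst hne
    have : δ ≤ 1 / 2 := min_le_right _ _
    simp at hKr
    linarith
  have : Nonempty K := hKne.to_subtype
  let g : X → ℝ := fun x => ⨅ y : K, (d x y - ψ y)
  have gb : ∀ x, BddBelow (Set.range fun y : K => d x y - ψ y) := fun x =>
    ⟨-M, by
      rintro _ ⟨y, rfl⟩
      have := hd0 x y
      have := (abs_le.1 (hψM y)).2
      simp only
      linarith⟩
  have gφ : ∀ x, φ x ≤ g x := fun x => le_ciInf fun y => by linarith [hle x y]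
  have gψ : ∀ x ∈ K, g x ≤ -ψ x := fun x hx => by
    have := ciInf_le (gb x) ⟨x, hx⟩
    simpa [hd_self] using this
  have glip : ∀ x y, g x ≤ g y + d x y := by
    intro x y
    rw [← sub_le_iff_le_add]
    refine le_ciInf fun z => ?_
    rw [sub_le_iff_le_add]
    refine (ciInf_le (gb x) z).trans ?_
    have := hd_triangle x y z
    linarith
  have gmeas : Measurable g := by
    apply measurable_of_Iic
    intro c
    have hl : LowerSemicontinuous fun p : X × K => d p.1 p.2 - ψ p.2 := by
      have h1 : LowerSemicontinuous fun p : X × K => d p.1 p.2 :=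
        hlsc.comp (g := fun p : X × K => (p.1, (p.2 : X))) (by fun_prop)
      have h2 : LowerSemicontinuous fun p : X × K => -ψ p.2 :=
        Continuous.lowerSemicontinuous (by fun_prop)
      simpa [sub_eq_add_neg] using h1.add h2
    have hcl : IsClosed ((fun p : X × K => d p.1 p.2 - ψ p.2) ⁻¹' Set.Iic c) :=
      hl.isClosed_preimage c
    have : CompactSpace K := isCompact_iff_compactSpace.1 hK
    have himg := isClosedMap_fst_of_compactSpace (X := X) (Y := K) _ hcl
    have heq : g ⁻¹' Set.Iic c =
        Prod.fst '' ((fun p : X × K => d p.1 p.2 - ψ p.2) ⁻¹' Set.Iic c) := by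
      ext x
      constructor
      · intro hx
        have hlx : LowerSemicontinuous fun y : K => d x y - ψ y :=
          hl.comp (g := fun y : K => (x, y)) (by fun_prop)
        obtain ⟨y, -, hy⟩ := (hlx.lowerSemicontinuousOn Set.univ).exists_isMinOn
          Set.univ_nonempty isCompact_univ
        refine ⟨(x, y), ?_, rfl⟩
        have : d x y - ψ y ≤ g x := le_ciInf fun z => hy (Set.mem_univ z)
        exact this.trans hx
      · rintro ⟨⟨x', y⟩, hy, rfl⟩
        exact (ciInf_le (gb x') y).trans hy
    rw [heq]
    exact himg.measurableSet
  let f : X → ℝ := fun x => min (g x) M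
  have fmeas : Measurable f := gmeas.min measurable_const
  have fφ : ∀ x, φ x ≤ f x := fun x => le_min (gφ x) (abs_le.1 (hφM x)).2
  have fM : ∀ x, |f x| ≤ M := fun x => abs_le.2
    ⟨(abs_le.1 (hφM x)).1.trans (fφ x), min_le_right _ _⟩
  have flip : ∀ x y, f x ≤ f y + d x y := by
    intro x y
    have h1 := glip x y
    have h2 := hd0 x y
    simp only [f]
    rcases le_total (g y) M with h | h
    · rw [min_eq_left h]; exact (min_le_left _ _).trans h1
    · rw [min_eq_right h]; exact (min_le_right _ _).trans (by linarith)
  refine ⟨f, fmeas, ⟨M, fM⟩, fun x y => ?_, ?_⟩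
  · rw [abs_le]
    have h1 := flip x y
    have h2 := flip y x
    rw [hd_symm y x] at h2
    constructor <;> linarith
  · have ib : ∀ (m : Measure X) [IsProbabilityMeasure m] (u : X → ℝ), Measurable u →
        (∀ x, |u x| ≤ M) → Integrable u m := fun m _ u hu hb =>
      Integrable.of_bound hu.aestronglyMeasurable M (ae_of_all _ hb)
    have h1 : ∫ x, φ x ∂ν ≤ ∫ x, f x ∂ν :=
      integral_mono (ib ν φ hφ.measurable hφM) (ib ν f fmeas fM) fφ
    have hind : Integrable (Kᶜ.indicator fun _ => 2 * M) μ :=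
      (integrable_const _).indicator hK.measurableSet.compl
    have h2 : ∫ x, f x ∂μ ≤ ∫ x, (-ψ x + Kᶜ.indicator (fun _ => 2 * M) x) ∂μ := by
      refine integral_mono (ib μ f fmeas fM) ((ib μ ψ hψ.measurable hψM).neg.add hind) fun x => ?_
      by_cases hx : x ∈ K
      · have h5 : f x ≤ -ψ x := (min_le_left _ _).trans (gψ x hx)
        simpa [hx] using h5
      · have := (abs_le.1 (hψM x)).2
        have := (abs_le.1 (fM x)).2
        simp [hx]
        linarith
    have hneg : Integrable (fun x => -ψ x) μ := (ib μ ψ hψ.measurable hψM).neg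
    rw [integral_add hneg hind, integral_neg,
      integral_indicator_const _ hK.measurableSet.compl, smul_eq_mul] at h2
    have h3 : μ.real Kᶜ * (2 * M) < gap := by
      have : δ ≤ gap / (2 * M + 1) := min_le_left _ _
      rw [le_div_iff₀ (by positivity)] at this
      have : μ.real Kᶜ * (2 * M) ≤ δ * (2 * M) := by gcongr
      linarith
    linarith

lemma young_aux (D g : ℝ) (hD : 0 ≤ D) :
    D * g ≤ (D * Real.log D - D + 1) + Real.exp g - 1 := by
  rcases hD.eq_or_lt with rfl | hD
  · simpa using (Real.exp_pos g).le
  · have h := Real.add_one_le_exp (g - Real.log D)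
    rw [Real.exp_sub, Real.exp_log hD, le_div_iff₀ hD] at h
    linarith

lemma young_nonneg (D : ℝ) (hD : 0 ≤ D) : 0 ≤ D * Real.log D - D + 1 := by
  simpa using young_aux D 0 hD

lemma dv_le {X : Type*} [MeasurableSpace X]
    (ν μ : Measure X) [IsProbabilityMeasure ν] [IsProbabilityMeasure μ]
    (g : X → ℝ) (hg : Measurable g) (M : ℝ) (hM : ∀ x, |g x| ≤ M) :
    ENNReal.ofReal (∫ x, g x ∂ν - Real.log (∫ x, Real.exp (g x) ∂μ)) ≤ relEntropy ν μ := by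
  unfold relEntropy
  split_ifs with hac
  swap
  · exact le_top
  set D : X → ℝ := fun x => (ν.rnDeriv μ x).toReal with hD
  have hDm : Measurable D := (Measure.measurable_rnDeriv ν μ).ennreal_toReal
  have hD0 : ∀ x, 0 ≤ D x := fun x => ENNReal.toReal_nonneg
  let k : X → ℝ := fun x => D x * Real.log (D x) - D x + 1
  have hk : Measurable k := ((hDm.mul (Real.measurable_log.comp hDm)).sub hDm).add_const 1
  have hk0 : ∀ x, 0 ≤ k x := fun x => young_nonneg _ (hD0 x)
  change _ ≤ ∫⁻ x, ENNReal.ofReal (k x) ∂μ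
  by_cases htop : ∫⁻ x, ENNReal.ofReal (k x) ∂μ = ⊤
  · rw [htop]; exact le_top
  have hki : Integrable k μ :=
    (lintegral_ofReal_ne_top_iff_integrable hk.aestronglyMeasurable (ae_of_all _ hk0)).1 htop
  rw [← ofReal_integral_eq_lintegral_ofReal hki (ae_of_all _ hk0)]
  apply ENNReal.ofReal_le_ofReal
  have hei : Integrable (fun x => Real.exp (g x)) μ :=
    Integrable.of_bound (Real.measurable_exp.comp hg).aestronglyMeasurable (Real.exp M)
      (ae_of_all _ fun x => by
        rw [Real.norm_eq_abs, Real.abs_exp]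
        exact Real.exp_le_exp.2 (abs_le.1 (hM x)).2)
  set Z := ∫ x, Real.exp (g x) ∂μ with hZ
  have hZ0 : 0 < Z := integral_exp_pos hei
  have hgi : Integrable g ν := Integrable.of_bound hg.aestronglyMeasurable M (ae_of_all _ hM)
  have hgi' : Integrable (fun x => g x - Real.log Z) ν := hgi.sub (integrable_const _)
  have e1 : ∫ x, D x * (g x - Real.log Z) ∂μ = ∫ x, g x ∂ν - Real.log Z := by
    have := integral_rnDeriv_smul (μ := ν) (ν := μ) hac (f := fun x => g x - Real.log Z)
    simp only [smul_eq_mul] at this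
    rw [this, integral_sub hgi (integrable_const _)]
    simp
  have i1 : Integrable (fun x => D x * (g x - Real.log Z)) μ := by
    have := (integrable_rnDeriv_smul_iff (μ := ν) (ν := μ) hac
      (f := fun x => g x - Real.log Z)).2 hgi'
    simpa [smul_eq_mul] using this
  have hexp : ∀ x, Real.exp (g x - Real.log Z) = Real.exp (g x) / Z := fun x => by
    rw [Real.exp_sub, Real.exp_log hZ0]
  have i2 : Integrable (fun x => Real.exp (g x - Real.log Z)) μ := by
    simp_rw [hexp]; exact hei.div_const Z
  have e2 : ∫ x, Real.exp (g x - Real.log Z) ∂μ = 1 := by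
    simp_rw [hexp]
    rw [integral_div, ← hZ, div_self hZ0.ne']
  have := integral_mono i1 ((hki.add i2).sub (integrable_const (1 : ℝ)))
    (fun x => young_aux (D x) (g x - Real.log Z) (hD0 x))
  rw [e1, integral_sub' (hki.add i2) (integrable_const (1 : ℝ)), integral_add' hki i2, e2] at this
  simpa using this

lemma dv_tilted {X : Type*} [MeasurableSpace X]
    (μ : Measure X) [IsProbabilityMeasure μ]
    (g : X → ℝ) (hg : Measurable g) (M : ℝ) (hM : ∀ x, |g x| ≤ M) :
    ∃ ν : Measure X, IsProbabilityMeasure ν ∧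
      0 ≤ ∫ x, g x ∂ν - Real.log (∫ x, Real.exp (g x) ∂μ) ∧
      relEntropy ν μ = ENNReal.ofReal (∫ x, g x ∂ν - Real.log (∫ x, Real.exp (g x) ∂μ)) := by
  have hei : Integrable (fun x => Real.exp (g x)) μ :=
    Integrable.of_bound (Real.measurable_exp.comp hg).aestronglyMeasurable (Real.exp M)
      (ae_of_all _ fun x => by
        rw [Real.norm_eq_abs, Real.abs_exp]
        exact Real.exp_le_exp.2 (abs_le.1 (hM x)).2)
  have hac : μ.tilted g ≪ μ := tilted_absolutelyContinuous μ g
  have hprob := isProbabilityMeasure_tilted hei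
  refine ⟨μ.tilted g, hprob, ?_⟩
  set ν := μ.tilted g with hν
  set Z := ∫ x, Real.exp (g x) ∂μ with hZ
  have hZ0 : 0 < Z := integral_exp_pos hei
  have hgi : Integrable g ν := Integrable.of_bound hg.aestronglyMeasurable M (ae_of_all _ hM)
  have hgi' : Integrable (fun x => g x - Real.log Z) ν := hgi.sub (integrable_const _)
  set D : X → ℝ := fun x => (ν.rnDeriv μ x).toReal with hD
  have hDi : Integrable D μ := Measure.integrable_toReal_rnDeriv
  have hD1 : ∫ x, D x ∂μ = 1 := by
    rw [hD, Measure.integral_toReal_rnDeriv hac]; simp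
  have hD0 : ∀ x, 0 ≤ D x := fun x => ENNReal.toReal_nonneg
  have hDe : ∀ᵐ x ∂μ, D x = Real.exp (g x) / Z := by
    filter_upwards [rnDeriv_tilted_left_self (μ := μ) hg.aemeasurable] with x hx
    simp only [hD, hν, hx]
    exact ENNReal.toReal_ofReal (by positivity)
  let k : X → ℝ := fun x => D x * Real.log (D x) - D x + 1
  have hk0 : ∀ x, 0 ≤ k x := fun x => young_nonneg _ (hD0 x)
  have i1 : Integrable (fun x => D x * (g x - Real.log Z)) μ := by
    have := (integrable_rnDeriv_smul_iff (μ := ν) (ν := μ) hac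
      (f := fun x => g x - Real.log Z)).2 hgi'
    simpa [smul_eq_mul] using this
  have e1 : ∫ x, D x * (g x - Real.log Z) ∂μ = ∫ x, g x ∂ν - Real.log Z := by
    have := integral_rnDeriv_smul (μ := ν) (ν := μ) hac (f := fun x => g x - Real.log Z)
    simp only [smul_eq_mul] at this
    rw [this, integral_sub hgi (integrable_const _)]
    simp
  have hke : k =ᵐ[μ] fun x => D x * (g x - Real.log Z) - D x + 1 := by
    filter_upwards [hDe] with x hx
    simp only [k]
    have : Real.log (D x) = g x - Real.log Z := by
      rw [hx, Real.log_div (Real.exp_pos _).ne' hZ0.ne', Real.log_exp]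
    rw [this]
  have ii : Integrable (fun x => D x * (g x - Real.log Z) - D x + 1) μ :=
    (i1.sub hDi).add (integrable_const 1)
  have hki : Integrable k μ := ii.congr hke.symm
  have hkint : ∫ x, k x ∂μ = ∫ x, g x ∂ν - Real.log Z := by
    have i3 : Integrable (fun x => D x * (g x - Real.log Z) - D x) μ := i1.sub hDi
    rw [integral_congr_ae hke, integral_add i3 (integrable_const 1),
      integral_sub i1 hDi, e1, hD1]
    simp
  refine ⟨hkint ▸ integral_nonneg hk0, ?_⟩
  unfold relEntropy
  rw [if_pos hac, ← hkint, ofReal_integral_eq_lintegral_ofReal hki (ae_of_all _ hk0)]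

lemma subgrad (α : ℝ → ℝ)
    (hα_cvx : ConvexOn ℝ (Set.Ici 0) α) (hα_mono : MonotoneOn α (Set.Ici 0))
    (t : ℝ) (ht : 0 < t) : ∃ s, 0 ≤ s ∧ ∀ u, 0 ≤ u → α t + s * (u - t) ≤ α u := by
  have hi : t ∈ interior (Set.Ici (0:ℝ)) := by rw [interior_Ici]; exact ht
  have lr := hα_cvx.leftDeriv_le_rightDeriv_of_mem_interior hi
  have hL : ∀ u, 0 ≤ u → u < t → (α t - α u) / (t - u) ≤ derivWithin α (Set.Ioi t) t := by
    intro u hu hut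
    have := (hα_cvx.slope_le_leftDeriv_of_mem_interior (x := u) hu hi hut).trans lr
    rwa [slope_def_field] at this
  refine ⟨derivWithin α (Set.Ioi t) t, ?_, ?_⟩
  · refine le_trans ?_ (hL 0 le_rfl ht)
    have := hα_mono (Set.self_mem_Ici) (Set.mem_Ici.2 ht.le) ht.le
    exact div_nonneg (by linarith) (by linarith)
  · intro u hu
    rcases lt_trichotomy u t with h | h | h
    · have := hL u hu h
      rw [div_le_iff₀ (by linarith)] at this
      linarith
    · subst h; simp
    · have := hα_cvx.rightDeriv_le_slope_of_mem_interior hi (y := u) hu h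
      rw [slope_def_field, le_div_iff₀ (by linarith)] at this
      linarith

/-- Dual characterization for metric costs: for a lower semicontinuous metric `d` on a
Polish space and `α` convex increasing with `α(0) = 0`, `μ` satisfies
`α(𝒯_d(·,μ)) ≤ H(·|μ)` if and only if every bounded Borel measurable `d`-Lipschitz(1)
function `f` satisfies, for all `s ≥ 0`,
`∫ e^{sf} dμ ≤ exp(s ∫ f dμ + α⊛(s))`, where `α⊛(s) = sup_{r ≥ 0}(sr − α(r))`.
(The right-hand side is encoded as `sup_{r ≥ 0} exp(s ∫ f dμ + sr − α(r))`.) -/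
theorem dual_characterization_metric_cost
    {X : Type*} [TopologicalSpace X] [PolishSpace X] [MeasurableSpace X] [BorelSpace X]
    (d : X → X → ℝ)
    (hd_self : ∀ x, d x x = 0) (hd_eq : ∀ x y, d x y = 0 → x = y)
    (hd_symm : ∀ x y, d x y = d y x) (hd_triangle : ∀ x y z, d x z ≤ d x y + d y z)
    (hd_lsc : LowerSemicontinuous fun p : X × X => d p.1 p.2)
    (α : ℝ → ℝ)
    (hα_cvx : ConvexOn ℝ (Set.Ici 0) α) (hα_mono : MonotoneOn α (Set.Ici 0))
    (hα_zero : α 0 = 0)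
    (μ : Measure X) [IsProbabilityMeasure μ] :
    (∀ ν : Measure X, IsProbabilityMeasure ν →
        extRealFun α (optCost d ν μ) ≤ relEntropy ν μ) ↔
      (∀ f : X → ℝ, Measurable f → (∃ M : ℝ, ∀ x, |f x| ≤ M) →
        (∀ x y, |f x - f y| ≤ d x y) →
        ∀ s : ℝ, 0 ≤ s →
          ENNReal.ofReal (∫ x, Real.exp (s * f x) ∂μ) ≤
            ⨆ (r : ℝ) (_ : 0 ≤ r),
              ENNReal.ofReal (Real.exp (s * ∫ x, f x ∂μ + (s * r - α r)))) := by
  have hd0 : ∀ x y, 0 ≤ d x y := fun x y => by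
    have h1 := hd_triangle x y x
    rw [hd_self, hd_symm y x] at h1
    linarith
  constructor
  · intro H f hf hfb hfl s hs
    obtain ⟨M, hM⟩ := hfb
    obtain ⟨ν, hν, hnn, hent⟩ := dv_tilted μ (fun x => s * f x) (hf.const_mul s) (s * M)
      (fun x => by
        rw [abs_mul, abs_of_nonneg hs]
        exact mul_le_mul_of_nonneg_left (hM x) hs)
    have hH := H ν hν
    rw [hent] at hH
    rw [integral_const_mul] at hnn hH
    have hei : Integrable (fun x => Real.exp (s * f x)) μ :=
      Integrable.of_bound (Real.measurable_exp.comp (hf.const_mul s)).aestronglyMeasurable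
        (Real.exp (s * M)) (ae_of_all _ fun x => by
          rw [Real.norm_eq_abs, Real.abs_exp]
          exact Real.exp_le_exp.2 (mul_le_mul_of_nonneg_left (abs_le.1 (hM x)).2 hs))
    set Z := ∫ x, Real.exp (s * f x) ∂μ with hZ
    have hZ0 : 0 < Z := integral_exp_pos hei
    -- it suffices to find a suitable `r`
    obtain ⟨r, hr0, hr⟩ : ∃ r : ℝ, 0 ≤ r ∧ Real.log Z ≤ s * ∫ x, f x ∂μ + (s * r - α r) := by
      set r := ∫ x, f x ∂ν - ∫ x, f x ∂μ with hrdef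
      rcases le_total r 0 with hr | hr
      · refine ⟨0, le_rfl, ?_⟩
        have : s * r ≤ 0 := mul_nonpos_of_nonneg_of_nonpos hs hr
        rw [hrdef, mul_sub] at this
        rw [hα_zero]
        linarith
      · refine ⟨r, hr, ?_⟩
        have hrT : ENNReal.ofReal r ≤ optCost d ν μ := by
          refine le_iInf₂ fun π hπ => ?_
          obtain ⟨hπ1, hπ2⟩ := hπ
          have hπp : IsProbabilityMeasure π := by
            constructor
            have : π.map Prod.fst Set.univ = 1 := by rw [hπ1]; exact measure_univ
            rwa [Measure.map_apply measurable_fst MeasurableSet.univ, Set.preimage_univ] at this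
          have i1 : Integrable (fun p : X × X => f p.1) π :=
            Integrable.of_bound (hf.comp measurable_fst).aestronglyMeasurable M
              (ae_of_all _ fun p => hM _)
          have i2 : Integrable (fun p : X × X => f p.2) π :=
            Integrable.of_bound (hf.comp measurable_snd).aestronglyMeasurable M
              (ae_of_all _ fun p => hM _)
          have e1 : ∫ x, f x ∂ν = ∫ p, f p.1 ∂π := by
            rw [← hπ1, integral_map measurable_fst.aemeasurable hf.aestronglyMeasurable]
          have e2 : ∫ x, f x ∂μ = ∫ p, f p.2 ∂π := by
            rw [← hπ2, integral_map measurable_snd.aemeasurable hf.aestronglyMeasurable]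
          rw [hrdef, e1, e2, ← integral_sub i1 i2]
          calc ENNReal.ofReal (∫ p : X × X, (f p.1 - f p.2) ∂π)
              ≤ ENNReal.ofReal (∫ p : X × X, |f p.1 - f p.2| ∂π) :=
                ENNReal.ofReal_le_ofReal (integral_mono (i1.sub i2) (i1.sub i2).abs
                  fun p => le_abs_self _)
            _ = ∫⁻ p : X × X, ENNReal.ofReal |f p.1 - f p.2| ∂π :=
                ofReal_integral_eq_lintegral_ofReal (i1.sub i2).abs
                  (ae_of_all _ fun p => abs_nonneg _)
            _ ≤ ∫⁻ p : X × X, ENNReal.ofReal (d p.1 p.2) ∂π :=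
                lintegral_mono fun p => ENNReal.ofReal_le_ofReal (hfl _ _)
        have h1 : ENNReal.ofReal (α r) ≤ extRealFun α (optCost d ν μ) :=
          le_iSup₂_of_le r ⟨hr, hrT⟩ le_rfl
        have h2 := (ENNReal.ofReal_le_ofReal_iff hnn).1 (h1.trans hH)
        rw [hrdef] at h2 ⊢
        rw [mul_sub]
        linarith
    refine le_iSup₂_of_le r hr0 (ENNReal.ofReal_le_ofReal ?_)
    rwa [← Real.log_le_iff_le_exp hZ0]
  · intro H ν hν
    refine iSup₂_le fun t ht => ?_
    obtain ⟨ht0, htT⟩ := ht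
    rcases ht0.eq_or_lt with rfl | ht0
    · simp [hα_zero]
    have step : ∀ u, 0 < u → u < t → ENNReal.ofReal (α u) ≤ relEntropy ν μ := by
      intro u hu hut
      obtain ⟨f, hf, ⟨M, hM⟩, hfl, hft⟩ := kr_exists ν μ d hd0 hd_self hd_symm hd_triangle hd_lsc u
        (((ENNReal.ofReal_lt_ofReal_iff ht0).2 hut).trans_le htT)
      obtain ⟨s, hs, hsub⟩ := subgrad α hα_cvx hα_mono u hu
      have hdv := dv_le ν μ (fun x => s * f x) (hf.const_mul s) (s * M)
        (fun x => by
          rw [abs_mul, abs_of_nonneg hs]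
          exact mul_le_mul_of_nonneg_left (hM x) hs)
      refine le_trans (ENNReal.ofReal_le_ofReal ?_) hdv
      have h2 := (H f hf ⟨M, hM⟩ hfl s hs).trans (iSup₂_le (a := ENNReal.ofReal
        (Real.exp (s * ∫ x, f x ∂μ + (s * u - α u)))) fun r hr =>
          ENNReal.ofReal_le_ofReal (Real.exp_le_exp.2 (by linarith [hsub r hr])))
      rw [ENNReal.ofReal_le_ofReal_iff (Real.exp_pos _).le] at h2
      have hei : Integrable (fun x => Real.exp (s * f x)) μ :=
        Integrable.of_bound (Real.measurable_exp.comp (hf.const_mul s)).aestronglyMeasurable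
          (Real.exp (s * M)) (ae_of_all _ fun x => by
            rw [Real.norm_eq_abs, Real.abs_exp]
            exact Real.exp_le_exp.2 (mul_le_mul_of_nonneg_left (abs_le.1 (hM x)).2 hs))
      rw [← Real.log_le_iff_le_exp (integral_exp_pos hei)] at h2
      rw [integral_const_mul]
      have h3 := mul_le_mul_of_nonneg_left hft.le hs
      rw [mul_sub] at h3
      linarith
    have hcont : ContinuousAt α t := by
      have := hα_cvx.continuousOn_interior
      rw [interior_Ici] at this
      exact this.continuousAt (Ioi_mem_nhds ht0)
    have hlim : Tendsto (fun u => ENNReal.ofReal (α u)) (𝓝[<] t) (𝓝 (ENNReal.ofReal (α t))) :=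
      ENNReal.tendsto_ofReal (hcont.tendsto.mono_left nhdsWithin_le_nhds)
    refine le_of_tendsto hlim ?_
    filter_upwards [Ioo_mem_nhdsLT ht0] with u hu
    exact step u hu.1 hu.2
end

section
/- (Necessary integrability) Let (𝒳,d) be a Polish metric space, let θ : [0,∞) → [0,∞) be a convex increasing bijection and α : [0,∞) → [0,∞) an increasing bijection. If μ ∈ P(𝒳) satisfies α(𝒯_{θ∘d}(ν,μ)) ≤ H(ν|μ) for all ν ∈ P(𝒳) (where the cost is c(x,y) = θ(d(x,y))), then for every x₀ ∈ 𝒳 there exists ε₀ > 0 such that for all 0 < ε ≤ ε₀, ∫_𝒳 exp( α(θ(ε d(x,x₀))) ) dμ(x) < ∞. -/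
open MeasureTheory ENNReal

lemma aux_h_bound {p : ℝ} (hp : 0 < p) :
    ((1/2 + 1/2 * p⁻¹) * Real.log (1/2 + 1/2 * p⁻¹) - (1/2 + 1/2 * p⁻¹) + 1)
      ≤ 1/2 * (p⁻¹ * (-Real.log p) - p⁻¹ + 1) := by
  have h := Real.convexOn_mul_log.2 (show (1:ℝ) ∈ Set.Ici 0 by simp)
    (show p⁻¹ ∈ Set.Ici 0 by simp [hp.le])
    (show (0:ℝ) ≤ 1/2 by norm_num) (show (0:ℝ) ≤ 1/2 by norm_num) (by norm_num)
  simp only [smul_eq_mul, Real.log_one, Real.log_inv, mul_one, mul_zero, zero_add] at h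
  linarith

/-- The test measure: half of `μ` plus half of `μ` conditioned on `A`. -/
lemma aux_entropy {X : Type*} [MeasurableSpace X] (μ : Measure X) [IsProbabilityMeasure μ]
    (A : Set X) (hA : MeasurableSet A) (hA0 : 0 < μ.real A) :
    ∃ ν : Measure X, IsProbabilityMeasure ν ∧ ν.real Aᶜ ≤ 1/2 ∧
      relEntropy ν μ ≤ ENNReal.ofReal (-(1/2) * Real.log (μ.real A)) := by
  classical
  set p := μ.real A with hp
  have hp1 : p ≤ 1 := measureReal_le_one
  have hpA : μ A = ENNReal.ofReal p := by simp [hp]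
  have hpAc : μ Aᶜ = ENNReal.ofReal (1 - p) := by
    rw [prob_compl_eq_one_sub hA, hpA, ENNReal.ofReal_sub _ hA0.le]; simp
  have hb : 0 ≤ 1/2 + 1/2 * p⁻¹ := by positivity
  have hlog : Real.log p ≤ 0 := Real.log_nonpos hA0.le hp1
  let f : X → ℝ≥0∞ := fun x => ENNReal.ofReal (if x ∈ A then 1/2 + 1/2 * p⁻¹ else 1/2)
  have hf : Measurable f :=
    (Measurable.ite hA measurable_const measurable_const).ennreal_ofReal
  have hfA : μ.withDensity f A = ENNReal.ofReal ((1/2 + 1/2 * p⁻¹) * p) := by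
    rw [withDensity_apply _ hA, setLIntegral_congr_fun (g := fun _ => ENNReal.ofReal (1/2 + 1/2 * p⁻¹)) hA
      (fun x hx => by simp only [f, if_pos hx])]
    rw [setLIntegral_const, hpA, ENNReal.ofReal_mul hb]
  have hfAc : μ.withDensity f Aᶜ = ENNReal.ofReal ((1/2) * (1 - p)) := by
    rw [withDensity_apply _ hA.compl, setLIntegral_congr_fun (g := fun _ => ENNReal.ofReal (1/2)) hA.compl
      (fun x hx => by simp only [f]; rw [if_neg hx])]
    rw [setLIntegral_const, hpAc, ENNReal.ofReal_mul (by norm_num)]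
  refine ⟨μ.withDensity f, ⟨?_⟩, ?_, ?_⟩
  · rw [← measure_add_measure_compl hA, hfA, hfAc, ← ENNReal.ofReal_add (by positivity)
      (mul_nonneg (by norm_num) (by linarith)), ← ENNReal.ofReal_one]
    congr 1
    field_simp
    ring
  · rw [measureReal_def, hfAc, ENNReal.toReal_ofReal (mul_nonneg (by norm_num) (by linarith))]
    linarith
  · rw [relEntropy, if_pos (withDensity_absolutelyContinuous μ f)]
    have h1 : ∀ᵐ x ∂μ, ENNReal.ofReal (((μ.withDensity f).rnDeriv μ x).toReal
          * Real.log ((μ.withDensity f).rnDeriv μ x).toReal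
          - ((μ.withDensity f).rnDeriv μ x).toReal + 1) ≤
        A.indicator (fun _ => ENNReal.ofReal (1/2 * (p⁻¹ * (-Real.log p) - p⁻¹ + 1))) x
          + Aᶜ.indicator (fun _ => ENNReal.ofReal (1/2)) x := by
      filter_upwards [Measure.rnDeriv_withDensity μ hf] with x hx
      rw [hx]
      by_cases hxA : x ∈ A
      · simp only [f, if_pos hxA, Set.indicator_of_mem hxA]
        rw [Set.indicator_of_notMem (by simpa using hxA), add_zero, ENNReal.toReal_ofReal hb]
        exact ENNReal.ofReal_le_ofReal (aux_h_bound hA0)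
      · simp only [f, if_neg hxA]
        rw [Set.indicator_of_notMem hxA, Set.indicator_of_mem (by simpa using hxA), zero_add,
          ENNReal.toReal_ofReal (by norm_num)]
        apply ENNReal.ofReal_le_ofReal
        have : Real.log (1/2) ≤ 0 := Real.log_nonpos (by norm_num) (by norm_num)
        linarith
    have h2 : 0 ≤ 1/2 * (p⁻¹ * (-Real.log p) - p⁻¹ + 1) := by
      have := Real.log_le_sub_one_of_pos hA0
      have h3 : p⁻¹ * Real.log p ≤ p⁻¹ * (p - 1) := by gcongr
      have h4 : p⁻¹ * p = 1 := inv_mul_cancel₀ hA0.ne'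
      nlinarith
    refine (lintegral_mono_ae h1).trans ?_
    rw [lintegral_add_left (measurable_const.indicator hA), lintegral_indicator hA,
      lintegral_indicator hA.compl, setLIntegral_const, setLIntegral_const, hpA, hpAc,
      ← ENNReal.ofReal_mul h2, ← ENNReal.ofReal_mul (by norm_num),
      ← ENNReal.ofReal_add (by positivity) (mul_nonneg (by norm_num) (by linarith))]
    apply ENNReal.ofReal_le_ofReal
    apply le_of_eq
    field_simp
    ring

lemma aux_cost {X : Type*} [MeasurableSpace X] (c : X → X → ℝ)
    (ν μ : Measure X) [IsProbabilityMeasure ν] [IsProbabilityMeasure μ]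
    (A B : Set X) (hA : MeasurableSet A) (hB : MeasurableSet B)
    (hνA : ν.real Aᶜ ≤ 1/2) (hμB : μ.real Bᶜ ≤ 1/4) (m : ℝ) (hm : 0 ≤ m)
    (hc : ∀ x ∈ A, ∀ y ∈ B, m ≤ c x y) :
    ENNReal.ofReal (m / 4) ≤ optCost c ν μ := by
  refine le_iInf₂ fun π hπ => ?_
  obtain ⟨h1, h2⟩ := hπ
  have hprob : IsProbabilityMeasure π := by
    constructor
    have : π.map Prod.fst Set.univ = 1 := by rw [h1]; simp
    rwa [Measure.map_apply measurable_fst MeasurableSet.univ, Set.preimage_univ] at this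
  have hAB : (1/4 : ℝ) ≤ π.real (A ×ˢ B) := by
    have e1 : π.real (Prod.fst ⁻¹' Aᶜ) = ν.real Aᶜ := by
      rw [← h1, map_measureReal_apply measurable_fst hA.compl]
    have e2 : π.real (Prod.snd ⁻¹' Bᶜ) = μ.real Bᶜ := by
      rw [← h2, map_measureReal_apply measurable_snd hB.compl]
    have e3 : (A ×ˢ B)ᶜ ⊆ (Prod.fst ⁻¹' Aᶜ) ∪ (Prod.snd ⁻¹' Bᶜ) := by
      rintro ⟨x, y⟩ h
      by_cases hx : x ∈ A
      · right; intro hy; exact h ⟨hx, hy⟩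
      · left; exact hx
    have e4 := (measureReal_mono e3 (measure_ne_top π _)).trans (measureReal_union_le _ _)
    have e5 := probReal_compl_eq_one_sub (μ := π) (hA.prod hB)
    linarith
  calc ENNReal.ofReal (m / 4) ≤ ENNReal.ofReal (m * π.real (A ×ˢ B)) := by
        apply ENNReal.ofReal_le_ofReal; nlinarith
    _ = ENNReal.ofReal m * π (A ×ˢ B) := by
        rw [ENNReal.ofReal_mul hm, ofReal_measureReal]
    _ = ∫⁻ p in A ×ˢ B, ENNReal.ofReal m ∂π := by rw [setLIntegral_const]
    _ ≤ ∫⁻ p in A ×ˢ B, ENNReal.ofReal (c p.1 p.2) ∂π :=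
        setLIntegral_mono' (hA.prod hB) fun p hp =>
          ENNReal.ofReal_le_ofReal (hc _ hp.1 _ hp.2)
    _ ≤ _ := setLIntegral_le_lintegral _ _

lemma aux_ball {X : Type*} [MetricSpace X] [MeasurableSpace X] [BorelSpace X]
    (μ : Measure X) [IsProbabilityMeasure μ] (x₀ : X) :
    ∃ R : ℝ, 0 < R ∧ μ.real (Metric.closedBall x₀ R)ᶜ ≤ 1/4 := by
  have hmono : Monotone fun n : ℕ => Metric.closedBall x₀ (n : ℝ) := fun a b h =>
    Metric.closedBall_subset_closedBall (by exact_mod_cast h)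
  have h := tendsto_measure_iUnion_atTop (μ := μ) hmono
  rw [Metric.iUnion_closedBall_nat, measure_univ] at h
  have h' := (ENNReal.tendsto_toReal one_ne_top).comp h
  have := (h'.eventually (lt_mem_nhds (a := (3/4 : ℝ)) (by norm_num))).and
    (Filter.eventually_gt_atTop 0)
  obtain ⟨n, hn, hn0⟩ := this.exists
  refine ⟨n, by exact_mod_cast hn0, ?_⟩
  rw [probReal_compl_eq_one_sub Metric.isClosed_closedBall.measurableSet]
  simp only [Function.comp] at hn
  rw [measureReal_def]
  linarith

/-- Necessary integrability: if `μ` satisfies `α(𝒯_{θ∘d}(·,μ)) ≤ H(·|μ)` with `θ` a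
convex increasing bijection of `[0,∞)` and `α` an increasing bijection of `[0,∞)`,
then for every `x₀` there is `ε₀ > 0` such that for all `0 < ε ≤ ε₀`,
`∫ exp(α(θ(ε d(x,x₀)))) dμ(x) < ∞`. -/
theorem transport_entropy_integrability
    {X : Type*} [MetricSpace X] [CompleteSpace X] [TopologicalSpace.SeparableSpace X]
    [MeasurableSpace X] [BorelSpace X]
    (θ : ℝ → ℝ) (hθ_cvx : ConvexOn ℝ (Set.Ici 0) θ) (hθ_mono : MonotoneOn θ (Set.Ici 0))
    (hθ_bij : Set.BijOn θ (Set.Ici 0) (Set.Ici 0))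
    (α : ℝ → ℝ) (hα_mono : MonotoneOn α (Set.Ici 0))
    (hα_bij : Set.BijOn α (Set.Ici 0) (Set.Ici 0))
    (μ : Measure X) [IsProbabilityMeasure μ]
    (hT : ∀ ν : Measure X, IsProbabilityMeasure ν →
      extRealFun α (optCost (fun x y => θ (dist x y)) ν μ) ≤ relEntropy ν μ)
    (x₀ : X) :
    ∃ ε₀ : ℝ, 0 < ε₀ ∧ ∀ ε : ℝ, 0 < ε → ε ≤ ε₀ →
      ∫⁻ x, ENNReal.ofReal (Real.exp (α (θ (ε * dist x x₀)))) ∂μ ≠ ∞ := by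
  have hθ0 : ∀ t, 0 ≤ t → 0 ≤ θ t := fun t ht => hθ_bij.mapsTo ht
  have hα0 : ∀ t, 0 ≤ t → 0 ≤ α t := fun t ht => hα_bij.mapsTo ht
  have hθz : θ 0 = 0 := by
    obtain ⟨z, hz, hz0⟩ := hθ_bij.surjOn (show (0:ℝ) ∈ Set.Ici 0 by simp)
    have := hθ_mono (show (0:ℝ) ∈ Set.Ici 0 by simp) hz hz
    exact le_antisymm (by linarith) (hθ0 0 le_rfl)
  have hθ4 : ∀ t, 0 ≤ t → θ (t / 4) ≤ θ t / 4 := by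
    intro t ht
    have h := hθ_cvx.2 (show (0:ℝ) ∈ Set.Ici 0 by simp) (show t ∈ Set.Ici 0 from ht)
      (show (0:ℝ) ≤ 3/4 by norm_num) (show (0:ℝ) ≤ 1/4 by norm_num) (by norm_num)
    simp only [smul_eq_mul, hθz, mul_zero, zero_add] at h
    rw [show t / 4 = 1/4 * t by ring]; linarith
  set G : ℝ → ℝ := fun t => α (θ t) with hG
  have hG0 : ∀ t, 0 ≤ t → 0 ≤ G t := fun t ht => hα0 _ (hθ0 t ht)
  have hGmono : ∀ s t, 0 ≤ s → s ≤ t → G s ≤ G t := fun s t hs hst =>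
    hα_mono (hθ0 s hs) (hθ0 t (hs.trans hst)) (hθ_mono hs (hs.trans hst) hst)
  have hGbij : Set.BijOn G (Set.Ici 0) (Set.Ici 0) := hα_bij.comp hθ_bij
  obtain ⟨R, hR, hBR⟩ := aux_ball μ x₀
  have hAm : ∀ r : ℝ, MeasurableSet {x : X | r ≤ dist x x₀} := fun r =>
    (isClosed_le continuous_const (continuous_id.dist continuous_const)).measurableSet
  -- tail estimate
  have htail : ∀ r, 2 * R ≤ r → μ.real {x | r ≤ dist x x₀} ≤ Real.exp (-2 * G (r / 8)) := by
    intro r hr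
    rcases (measureReal_nonneg (μ := μ) (s := {x | r ≤ dist x x₀})).eq_or_lt with h0 | hpos
    · rw [← h0]; positivity
    obtain ⟨ν, hν, hνA, hνH⟩ := aux_entropy μ _ (hAm r) hpos
    have hcost := aux_cost (fun x y => θ (dist x y)) ν μ _ _ (hAm r)
      Metric.isClosed_closedBall.measurableSet hνA hBR (θ (r / 2)) (hθ0 _ (by linarith)) (by
        intro x hx y hy
        have h1 : r ≤ dist x x₀ := hx
        have h2 : dist y x₀ ≤ R := hy
        have h3 := dist_triangle x y x₀
        exact hθ_mono (show (0:ℝ) ≤ r / 2 by linarith) dist_nonneg (by linarith))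
    have h1 : ENNReal.ofReal (G (r / 8)) ≤
        extRealFun α (optCost (fun x y => θ (dist x y)) ν μ) := by
      refine le_iSup₂_of_le (θ (r / 8)) ⟨hθ0 _ (by linarith), ?_⟩ le_rfl
      refine le_trans (ENNReal.ofReal_le_ofReal ?_) hcost
      have := hθ4 (r / 2) (by linarith)
      rwa [show r / 2 / 4 = r / 8 by ring] at this
    have h2 := (h1.trans (hT ν hν)).trans hνH
    have hlog : Real.log (μ.real {x | r ≤ dist x x₀}) ≤ 0 :=
      Real.log_nonpos hpos.le measureReal_le_one
    rw [ENNReal.ofReal_le_ofReal_iff (by linarith)] at h2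
    rw [← Real.log_le_iff_le_exp hpos]
    linarith
  refine ⟨1/8, by norm_num, fun ε hε hε8 => ?_⟩
  have hr : ∀ n : ℕ, ∃ r : ℝ, 0 ≤ r ∧ G r = n := fun n =>
    hGbij.surjOn (show (n : ℝ) ∈ Set.Ici 0 by simp)
  choose r hr0 hrn using hr
  set A : ℕ → Set X := fun n => {x | 8 * r n ≤ dist x x₀} with hAdef
  set K : ℝ := Real.exp (2 * G (R / 4)) with hK
  have hAn : ∀ n : ℕ, μ.real (A n) ≤ K * Real.exp (-2 * n) := by
    intro n
    rw [hK, ← Real.exp_add]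
    by_cases h : 2 * R ≤ 8 * r n
    · refine (htail _ h).trans (Real.exp_le_exp.2 ?_)
      rw [show 8 * r n / 8 = r n by ring, hrn]
      have := hG0 (R / 4) (by linarith)
      linarith
    · refine measureReal_le_one.trans (Real.one_le_exp ?_)
      have := hGmono (r n) (R / 4) (hr0 n) (by linarith)
      rw [hrn] at this
      linarith
  have hpt : ∀ x, ENNReal.ofReal (Real.exp (G (ε * dist x x₀))) ≤
      ∑' n : ℕ, (A n).indicator (fun _ => ENNReal.ofReal (Real.exp (n + 1))) x := by
    intro x
    have hd : 0 ≤ dist x x₀ / 8 := by positivity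
    set N := ⌊G (dist x x₀ / 8)⌋₊ with hN
    have hxN : x ∈ A N := by
      by_contra hlt
      have hlt' : dist x x₀ / 8 < r N := by
        have : ¬ (8 * r N ≤ dist x x₀) := hlt
        linarith
      have h1 := hGmono _ _ hd hlt'.le
      have h2 : (N : ℝ) ≤ G (dist x x₀ / 8) := Nat.floor_le (hG0 _ hd)
      have h3 : G (dist x x₀ / 8) = G (r N) := le_antisymm h1 (by rw [hrn]; exact h2)
      exact hlt'.ne (hGbij.injOn hd (hr0 N) h3)
    refine le_trans ?_ (ENNReal.le_tsum N)
    rw [Set.indicator_of_mem hxN]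
    apply ENNReal.ofReal_le_ofReal
    apply Real.exp_le_exp.2
    have h1 : G (ε * dist x x₀) ≤ G (dist x x₀ / 8) :=
      hGmono _ _ (by positivity) (by nlinarith [dist_nonneg (x := x) (y := x₀)])
    exact h1.trans (Nat.lt_floor_add_one _).le
  have hsum : Summable fun n : ℕ => K * Real.exp 1 * Real.exp (-(n : ℝ)) :=
    Real.summable_exp_neg_nat.mul_left _
  refine ne_top_of_le_ne_top (b := ∑' n : ℕ, ENNReal.ofReal (K * Real.exp 1 * Real.exp (-(n : ℝ))))
    hsum.tsum_ofReal_ne_top ?_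
  calc ∫⁻ x, ENNReal.ofReal (Real.exp (G (ε * dist x x₀))) ∂μ
      ≤ ∫⁻ x, ∑' n : ℕ, (A n).indicator (fun _ => ENNReal.ofReal (Real.exp (n + 1))) x ∂μ :=
        lintegral_mono hpt
    _ = ∑' n : ℕ, ∫⁻ x, (A n).indicator (fun _ => ENNReal.ofReal (Real.exp (n + 1))) x ∂μ :=
        lintegral_tsum fun n => (measurable_const.indicator (hAm _)).aemeasurable
    _ ≤ _ := by
        refine ENNReal.tsum_le_tsum fun n => ?_
        rw [lintegral_indicator (hAm _), setLIntegral_const, ← ofReal_measureReal (μ := μ) (h := measure_ne_top μ _),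
          ← ENNReal.ofReal_mul (Real.exp_pos _).le]
        apply ENNReal.ofReal_le_ofReal
        calc Real.exp (n + 1) * μ.real (A n) ≤ Real.exp (n + 1) * (K * Real.exp (-2 * n)) := by
              gcongr; exact hAn n
          _ = K * Real.exp 1 * Real.exp (-(n : ℝ)) := by
              have e : Real.exp (n + 1) * Real.exp (-2 * n)
                  = Real.exp 1 * Real.exp (-(n : ℝ)) := by
                rw [← Real.exp_add, ← Real.exp_add]
                congr 1
                ring
              rw [mul_left_comm, e, mul_assoc]
end

section
/- (Square-exponential moment implies T₁ with explicit constant) Let (𝒳,d) be a Polish metric space, μ ∈ P(𝒳), and b > 0. If M := ∫_{𝒳×𝒳} e^{b² d(x,y)²/2} dμ(x) dμ(y) < ∞, then for every ν ∈ P(𝒳), 𝒯_d(ν,μ) ≤ (1/b)·√(1 + 2 log M)·√(2 H(ν|μ)). -/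
open MeasureTheory ENNReal

theorem aux_u (u m : ℝ) (hu : 0 < u) (hm : 0 < m) (hm1 : m ≤ 1) :
    m * u * Real.log (u / (4 * m)) ≤ (1 + u) * Real.log (1 + u) - u := by
  have hw : (0:ℝ) < 1 + u / 4 := by positivity
  have h1 : Real.log (u / (4 * m)) ≤ Real.log (1 + u/4) + (u / (4 * m * (1 + u/4)) - 1) := by
    have e : u / (4 * m) = (1 + u/4) * (u / (4 * m * (1 + u/4))) := by field_simp
    rw [e, Real.log_mul hw.ne' (by positivity)]
    have := Real.log_le_sub_one_of_pos (x := u / (4 * m * (1 + u/4))) (by positivity)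
    have e2 : (1 + u/4) * (u / (4 * m * (1 + u/4))) = u / (4*m) := by field_simp
    rw [← e] at *
    linarith
  have h2 : m * Real.log (u / (4 * m)) ≤ m * (Real.log (1 + u/4) - 1) + u / (4 + u) := by
    have := mul_le_mul_of_nonneg_left h1 hm.le
    have e : m * (u / (4 * m * (1 + u/4))) = u / (4 + u) := by field_simp
    nlinarith
  -- endpoint bounds
  have h3 : 2 * u / (u + 2) ≤ Real.log (1 + u) := Real.le_log_one_add_of_nonneg hu.le
  have e0 : u * (u / (4 + u)) ≤ (1 + u) * Real.log (1 + u) - u := by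
    have a := mul_le_mul_of_nonneg_left h3 (by linarith : (0:ℝ) ≤ 1 + u)
    have b : u * (u / (4 + u)) ≤ (1 + u) * (2 * u / (u + 2)) - u := by
      rw [← sub_nonneg]
      have : (1 + u) * (2 * u / (u + 2)) - u - u * (u / (4 + u)) = 2 * u^2 / ((u+2) * (4+u)) := by
        field_simp; ring
      rw [this]; positivity
    linarith
  have e1 : u * ((Real.log (1 + u/4) - 1) + u / (4 + u)) ≤ (1 + u) * Real.log (1 + u) - u := by
    have a : 2 * (3 * u / (4 + u)) / (3 * u / (4 + u) + 2) ≤ Real.log (1 + 3 * u / (4 + u)) :=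
      Real.le_log_one_add_of_nonneg (by positivity)
    have b : Real.log (1 + u) = Real.log (1 + u/4) + Real.log (1 + 3 * u / (4 + u)) := by
      rw [← Real.log_mul (by positivity) (by positivity)]
      congr 1; field_simp; ring
    have c : u / (4 + u) ≤ 2 * (3 * u / (4 + u)) / (3 * u / (4 + u) + 2) := by
      rw [← sub_nonneg]
      have : 2 * (3 * u / (4 + u)) / (3 * u / (4 + u) + 2) - u / (4 + u)
         = (u * (u + 16)) / ((5 * u + 8) * (4 + u)) := by
        have : 5 * u + 8 ≠ 0 := by positivity
        have : 3 * u / (4 + u) + 2 = (5 * u + 8) / (4 + u) := by field_simp; ring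
        rw [this]
        field_simp; ring
      rw [this]; positivity
    have d : 0 ≤ Real.log (1 + u) := Real.log_nonneg (by linarith)
    nlinarith
  nlinarith [mul_le_mul_of_nonneg_left h2 hu.le, mul_le_mul_of_nonneg_left e1 hm.le,
    mul_le_mul_of_nonneg_left e0 (sub_nonneg.2 hm1)]

theorem aux_psi (v : ℝ) (hv : 0 ≤ v) (hv1 : v ≤ 1) :
    v ^ 2 / 2 ≤ (1 - v) * Real.log (1 - v) + v := by
  rcases hv1.eq_or_lt with rfl | h
  · norm_num
  have hs : 0 < 1 - v := by linarith
  have h0 : 0 ≤ Real.log (1 - v)⁻¹ := Real.log_nonneg ((one_le_inv₀ hs).2 (by linarith))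
  have h1 := Real.self_le_sinh_iff.2 h0
  rw [Real.sinh_log (by positivity), Real.log_inv, inv_inv] at h1
  have := mul_le_mul_of_nonneg_left h1 hs.le
  have e : (1 - v) * (((1 - v)⁻¹ - (1 - v)) / 2) = (1 - (1 - v)^2) / 2 := by field_simp
  nlinarith

theorem aux_v (v m : ℝ) (hv : 0 < v) (hv1 : v ≤ 1) (hm : 0 < m) :
    m * v * Real.log (v / m) ≤ (1 - v) * Real.log (1 - v) + v := by
  have h := aux_psi v hv.le hv1
  have h1 : Real.log (v / m) ≤ v / m / 2 := by
    have a := Real.log_le_sub_one_of_pos (x := v / m / 2) (by positivity)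
    have b := Real.log_le_sub_one_of_pos (x := 2) (by positivity)
    rw [Real.log_div (by positivity) (by positivity)] at a
    linarith
  have := mul_le_mul_of_nonneg_left h1 (by positivity : 0 ≤ m * v)
  have e : m * v * (v / m / 2) = v ^ 2 / 2 := by field_simp
  linarith

/-- pointwise weak Pinsker -/
theorem aux_pinsker (f m : ℝ) (hf : 0 ≤ f) :
    2 * m * |f - 1| ≤ f * Real.log f - f + 1 + m ^ 2 * (f + 2) := by
  have h : (f - 1) ^ 2 / (f + 2) ≤ f * Real.log f - f + 1 := by
    rcases le_total f 1 with h1 | h1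
    · have := aux_psi (1 - f) (by linarith) (by linarith)
      have b : (f - 1) ^ 2 / (f + 2) ≤ (f - 1)^2 / 2 := by gcongr; linarith
      rw [_root_.sub_sub_cancel] at this
      nlinarith
    · have h3 := Real.le_log_one_add_of_nonneg (x := f - 1) (by linarith)
      rw [show 1 + (f - 1) = f by ring] at h3
      have a := mul_le_mul_of_nonneg_left h3 hf
      have b : (f - 1) ^ 2 / (f + 2) ≤ f * (2 * (f - 1) / (f - 1 + 2)) - f + 1 := by
        have : f * (2 * (f - 1) / (f - 1 + 2)) - f + 1 = (f - 1)^2 / (f + 1) := by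
          have : f + 1 ≠ 0 := by positivity
          rw [show f - 1 + 2 = f + 1 by ring]
          field_simp; ring
        rw [this]; gcongr; linarith
      linarith
  have h2 : 2 * m * |f - 1| ≤ (f - 1) ^ 2 / (f + 2) + m ^ 2 * (f + 2) := by
    have hp : 0 < f + 2 := by linarith
    rw [← sub_nonneg]
    have : (f - 1) ^ 2 / (f + 2) + m ^ 2 * (f + 2) - 2 * m * |f - 1|
       = (|f - 1| - m * (f + 2))^2 / (f + 2) := by
      rw [← sq_abs (f - 1)]; field_simp; ring
    rw [this]; positivity
  linarith

theorem aux_h_nonneg (f : ℝ) (hf : 0 ≤ f) : 0 ≤ f * Real.log f - f + 1 := by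
  have := aux_pinsker f 0 hf
  simpa using this

theorem aux_young (q θ : ℝ) (hq : 0 < q) : q * θ + q ≤ q * Real.log q + Real.exp θ := by
  have := Real.add_one_le_exp (θ - Real.log q)
  rw [Real.exp_sub, Real.exp_log hq, le_div_iff₀ hq] at this
  nlinarith

/-- main pointwise inequality -/
theorem aux_main (f g m θ K : ℝ) (hf : 1 < f) (hg0 : 0 ≤ g) (hg : g < 1) (hm : 0 < m)
    (hm1 : m ≤ 1) (hK : 0 < K) :
    (f - 1) * (1 - g) * θ + (f - 1) * (1 - g) ≤
      m⁻¹ * ((f * Real.log f - f + 1) * (1 - g) + (f - 1) * (g * Real.log g - g + 1))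
      + (f - 1) * (1 - g) * Real.log K + 4 * m ^ 2 / K * Real.exp θ := by
  have hu : 0 < f - 1 := by linarith
  have hv : 0 < 1 - g := by linarith
  have a := aux_u (f - 1) m hu hm hm1
  have b := aux_v (1 - g) m hv (by linarith) hm
  have c := aux_young ((f - 1) * (1 - g) * K / (4 * m^2)) θ (by positivity)
  have e : Real.log ((f - 1) * (1 - g) * K / (4 * m^2)) =
      Real.log ((f - 1) / (4 * m)) + Real.log ((1 - g) / m) + Real.log K := by
    rw [← Real.log_mul (by positivity) (by positivity), ← Real.log_mul (by positivity) (by positivity)]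
    congr 1; field_simp
  rw [e] at c
  rw [_root_.sub_sub_cancel] at b
  rw [show 1 + (f - 1) = f by ring] at a
  have c' := mul_le_mul_of_nonneg_left c (by positivity : 0 ≤ 4 * m^2 / K)
  have e1 : 4 * m^2 / K * ((f - 1) * (1 - g) * K / (4 * m^2)) = (f - 1) * (1 - g) := by
    field_simp
  set A := Real.log ((f - 1) / (4 * m))
  set B := Real.log ((1 - g) / m)
  have a' := mul_le_mul_of_nonneg_left a (by positivity : 0 ≤ m⁻¹ * (1 - g))
  have b' := mul_le_mul_of_nonneg_left b (by positivity : 0 ≤ m⁻¹ * (f - 1))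
  have e2 : m⁻¹ * (1 - g) * (m * (f - 1) * A) = (f - 1) * (1 - g) * A := by field_simp
  have e3 : m⁻¹ * (f - 1) * (m * (1 - g) * B) = (f - 1) * (1 - g) * B := by field_simp
  rw [e2] at a'
  rw [e3] at b'
  rw [mul_add, mul_add, ← mul_assoc, ← mul_assoc, e1] at c'
  linarith

section core
variable {X : Type*} [MeasurableSpace X]

/-- The coupling built from the common part and the product of the excess parts. -/
theorem aux_coupling (μ : Measure X) [IsProbabilityMeasure μ] (c : X → X → ℝ)
    (hc : Measurable (fun p : X × X => c p.1 p.2)) (hc0 : ∀ x, c x x = 0)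
    (f : X → ℝ) (hf : Measurable f) (hf0 : ∀ x, 0 ≤ f x) (m : ℝ) (hm : 0 < m)
    (hU : ∫⁻ x, ENNReal.ofReal (f x - 1) ∂μ = ENNReal.ofReal m)
    (hV : ∫⁻ x, ENNReal.ofReal (1 - f x) ∂μ = ENNReal.ofReal m) :
    optCost c (μ.withDensity (fun x => ENNReal.ofReal (f x))) μ ≤
      (∫⁻ p, ENNReal.ofReal (c p.1 p.2) ^ (2 : ℝ)
        ∂((μ.withDensity (fun x => ENNReal.ofReal (f x - 1))).prod
          (μ.withDensity (fun x => ENNReal.ofReal (1 - f x))))) ^ (1 / 2 : ℝ) := by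
  have mU : Measurable (fun x => ENNReal.ofReal (f x - 1)) := by fun_prop
  have mV : Measurable (fun x => ENNReal.ofReal (1 - f x)) := by fun_prop
  have mC : Measurable (fun x => ENNReal.ofReal (min (f x) 1)) := by fun_prop
  set μU := μ.withDensity (fun x => ENNReal.ofReal (f x - 1)) with hμU
  set μV := μ.withDensity (fun x => ENNReal.ofReal (1 - f x)) with hμV
  set μC := μ.withDensity (fun x => ENNReal.ofReal (min (f x) 1)) with hμC
  have hm0 : ENNReal.ofReal m ≠ 0 := by simpa using hm
  have hmt : ENNReal.ofReal m ≠ ∞ := ENNReal.ofReal_ne_top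
  have tU : μU Set.univ = ENNReal.ofReal m := by simp [hμU, hU]
  have tV : μV Set.univ = ENNReal.ofReal m := by simp [hμV, hV]
  have fU : IsFiniteMeasure μU := ⟨by rw [tU]; exact ENNReal.ofReal_lt_top⟩
  have fV : IsFiniteMeasure μV := ⟨by rw [tV]; exact ENNReal.ofReal_lt_top⟩
  have sU : μC + μU = μ.withDensity (fun x => ENNReal.ofReal (f x)) := by
    rw [hμC, hμU, ← withDensity_add_left mC]
    congr 1
    ext x
    simp only [Pi.add_apply]
    rcases le_total (f x) 1 with h | h
    · rw [min_eq_left h, ENNReal.ofReal_of_nonpos (p := f x - 1) (by linarith), add_zero]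
    · rw [min_eq_right h, ← ENNReal.ofReal_add (by norm_num) (by linarith)]
      congr 1; ring
  have sV : μC + μV = μ := by
    rw [hμC, hμV, ← withDensity_add_left mC]
    conv_rhs => rw [← withDensity_one (μ := μ)]
    congr 1
    ext x
    simp only [Pi.add_apply, Pi.one_apply]
    rcases le_total (f x) 1 with h | h
    · rw [min_eq_left h, ← ENNReal.ofReal_add (hf0 x) (by linarith)]
      simp
    · rw [min_eq_right h, ENNReal.ofReal_of_nonpos (p := 1 - f x) (by linarith)]
      simp
  have mcE : Measurable (fun p : X × X => ENNReal.ofReal (c p.1 p.2)) := hc.ennreal_ofReal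
  have mdiag : Measurable (fun x : X => (x, x)) := by fun_prop
  set κ := μU.prod μV with hκ
  unfold optCost
  refine (iInf₂_le (μC.map (fun x => (x, x)) + (ENNReal.ofReal m)⁻¹ • κ) ⟨?_, ?_⟩).trans ?_
  · rw [lintegral_add_measure, lintegral_map mcE mdiag, lintegral_smul_measure]
    simp only [hc0, ENNReal.ofReal_zero, lintegral_zero, zero_add]
    have := ENNReal.lintegral_mul_le_Lp_mul_Lq κ (p := 2) (q := 2) Real.HolderConjugate.two_two
      (f := fun p => ENNReal.ofReal (c p.1 p.2)) (g := fun _ => 1) mcE.aemeasurable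
      aemeasurable_const
    have tκ : κ Set.univ = ENNReal.ofReal m ^ (2:ℝ) := by
      rw [hκ, ← Set.univ_prod_univ, Measure.prod_prod, tU, tV]
      rw [ENNReal.rpow_two, sq]
    simp only [Pi.mul_apply, mul_one, ENNReal.one_rpow, lintegral_one, tκ] at this
    rw [← ENNReal.rpow_mul, show (2:ℝ) * (1/2) = 1 by norm_num, ENNReal.rpow_one, mul_comm] at this
    rw [smul_eq_mul]
    calc _ ≤ (ENNReal.ofReal m)⁻¹ * (ENNReal.ofReal m * _) := by gcongr
      _ = _ := by rw [← mul_assoc, ENNReal.inv_mul_cancel hm0 hmt, one_mul]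
  · rw [Measure.map_add _ _ measurable_fst, Measure.map_map measurable_fst mdiag,
      Measure.map_smul, hκ, Measure.map_fst_prod, tV, smul_smul, ENNReal.inv_mul_cancel hm0 hmt,
      one_smul, ← sU]
    congr 1
    exact Measure.map_id
  · rw [Measure.map_add _ _ measurable_snd, Measure.map_map measurable_snd mdiag,
      Measure.map_smul, hκ, Measure.map_snd_prod, tU, smul_smul, ENNReal.inv_mul_cancel hm0 hmt,
      one_smul]
    conv_rhs => rw [← sV]
    congr 1
    exact Measure.map_id

/-- The off-diagonal block carries at most half of the mass. -/
theorem aux_block (μ : Measure X) [IsProbabilityMeasure μ] (E : X × X → ℝ≥0∞)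
    (hE : Measurable E) (hsym : ∀ p, E p.swap = E p) (h1 : ∀ p, 1 ≤ E p)
    (P : Set X) (hP : MeasurableSet P) (M : ℝ)
    (hM : ∫⁻ p, E p ∂(μ.prod μ) = ENNReal.ofReal M) (hM1 : 1 ≤ M) :
    ∫⁻ p in P ×ˢ Pᶜ, E p ∂(μ.prod μ) ≤ ENNReal.ofReal ((2 * M - 1) / 4) := by
  set I := ∫⁻ p in P ×ˢ Pᶜ, E p ∂(μ.prod μ) with hI
  have hI' : ∫⁻ p in Pᶜ ×ˢ P, E p ∂(μ.prod μ) = I := by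
    rw [hI, ← lintegral_indicator (hP.compl.prod hP), ← lintegral_indicator (hP.prod hP.compl),
      ← lintegral_prod_swap]
    refine lintegral_congr fun p => ?_
    have : p.swap ∈ Pᶜ ×ˢ P ↔ p ∈ P ×ˢ Pᶜ := by simp [Set.mem_prod, and_comm]
    by_cases hp : p ∈ P ×ˢ Pᶜ
    · rw [Set.indicator_of_mem hp, Set.indicator_of_mem (this.2 hp), hsym]
    · rw [Set.indicator_of_notMem hp, Set.indicator_of_notMem (fun h => hp (this.1 h))]
  have hb : ∀ A : Set X, MeasurableSet A → μ A * μ A ≤ ∫⁻ p in A ×ˢ A, E p ∂(μ.prod μ) := by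
    intro A hA
    calc μ A * μ A = ∫⁻ p in A ×ˢ A, 1 ∂(μ.prod μ) := by simp [Measure.prod_prod]
      _ ≤ _ := lintegral_mono fun p => h1 p
  have hsplit : ∫⁻ p, E p ∂(μ.prod μ) =
      (∫⁻ p in P ×ˢ P, E p ∂(μ.prod μ) + I) + (I + ∫⁻ p in Pᶜ ×ˢ Pᶜ, E p ∂(μ.prod μ)) := by
    have d : ∀ A : Set X, MeasurableSet A → ∫⁻ p in A ×ˢ Set.univ, E p ∂(μ.prod μ) =
        ∫⁻ p in A ×ˢ P, E p ∂(μ.prod μ) + ∫⁻ p in A ×ˢ Pᶜ, E p ∂(μ.prod μ) := by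
      intro A hA
      rw [← lintegral_union (hA.prod hP.compl), ← Set.prod_union, Set.union_compl_self]
      exact Set.disjoint_prod.2 (Or.inr disjoint_compl_right)
    rw [← hI']
    rw [hI', hI, ← d P hP, ← hI, ← hI', ← d _ hP.compl,
      ← lintegral_union (hP.compl.prod MeasurableSet.univ), ← Set.union_prod,
      Set.union_compl_self, Set.univ_prod_univ, setLIntegral_univ]
    exact Set.disjoint_prod.2 (Or.inl disjoint_compl_right)
  have hpq : (1:ℝ≥0∞) ≤ 2 * (μ P * μ P + μ Pᶜ * μ Pᶜ) := by
    have e := prob_add_prob_compl (μ := μ) hP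
    have h1 : μ P ≠ ∞ := measure_ne_top _ _
    have h2 : μ Pᶜ ≠ ∞ := measure_ne_top _ _
    lift μ P to NNReal using h1 with p
    lift μ Pᶜ to NNReal using h2 with q
    norm_cast at e ⊢
    have e' : (p:ℝ) + q = 1 := by exact_mod_cast e
    have : (1:ℝ) ≤ 2 * (p * p + q * q) := by nlinarith [sq_nonneg ((p:ℝ) - q)]
    exact_mod_cast this
  have hfin : I ≠ ∞ := by
    refine ne_top_of_le_ne_top (ENNReal.ofReal_ne_top (r := M)) ?_
    rw [← hM]; exact setLIntegral_le_lintegral _ _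
  have tot : 4 * I + 1 ≤ 2 * ENNReal.ofReal M := by
    rw [← hM, hsplit]
    calc 4 * I + 1 ≤ 4 * I + 2 * (μ P * μ P + μ Pᶜ * μ Pᶜ) := by gcongr
      _ ≤ 4 * I + 2 * (∫⁻ p in P ×ˢ P, E p ∂(μ.prod μ) + ∫⁻ p in Pᶜ ×ˢ Pᶜ, E p ∂(μ.prod μ)) := by
        gcongr
        · exact hb _ hP
        · exact hb _ hP.compl
      _ = _ := by ring
  lift I to NNReal using hfin with i
  rw [ENNReal.le_ofReal_iff_toReal_le ENNReal.coe_ne_top (by linarith)]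
  have := ENNReal.toReal_mono (by finiteness) tot
  rw [ENNReal.toReal_add (by finiteness) (by finiteness)] at this
  simp [ENNReal.toReal_ofReal (by linarith : 0 ≤ M)] at this ⊢
  linarith

theorem aux_core (μ : Measure X) [IsProbabilityMeasure μ] (θ : X × X → ℝ)
    (hθ : Measurable θ) (hθ0 : ∀ p, 0 ≤ θ p) (hsym : ∀ p, θ p.swap = θ p)
    (f : X → ℝ) (hf : Measurable f) (hf0 : ∀ x, 0 ≤ f x) (m : ℝ) (hm : 0 < m)
    (hU : ∫⁻ x, ENNReal.ofReal (f x - 1) ∂μ = ENNReal.ofReal m)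
    (hV : ∫⁻ x, ENNReal.ofReal (1 - f x) ∂μ = ENNReal.ofReal m)
    (hf1 : ∫⁻ x, ENNReal.ofReal (f x) ∂μ = 1)
    (M : ℝ) (hM1 : 1 ≤ M)
    (hM : ∫⁻ p, ENNReal.ofReal (Real.exp (θ p)) ∂(μ.prod μ) = ENNReal.ofReal M) :
    ∫⁻ p, ENNReal.ofReal (θ p)
        ∂((μ.withDensity (fun x => ENNReal.ofReal (f x - 1))).prod
          (μ.withDensity (fun x => ENNReal.ofReal (1 - f x)))) ≤
      ENNReal.ofReal (1 + 2 * Real.log M) *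
        ∫⁻ x, ENNReal.ofReal (f x * Real.log (f x) - f x + 1) ∂μ := by
  have mU : Measurable (fun x => ENNReal.ofReal (f x - 1)) := by fun_prop
  have mV : Measurable (fun x => ENNReal.ofReal (1 - f x)) := by fun_prop
  have mH : Measurable (fun x => ENNReal.ofReal (f x * Real.log (f x) - f x + 1)) := by fun_prop
  have hm1 : m ≤ 1 := by
    rw [← ENNReal.ofReal_le_one, ← hV]
    calc _ ≤ ∫⁻ x, 1 ∂μ := lintegral_mono fun x => by
          rw [ENNReal.ofReal_le_one]; linarith [hf0 x]
      _ = 1 := by simp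
  set H := ∫⁻ x, ENNReal.ofReal (f x * Real.log (f x) - f x + 1) ∂μ with hH
  set U := fun x => ENNReal.ofReal (f x - 1) with hUdef
  set V := fun x => ENNReal.ofReal (1 - f x) with hVdef
  set E := fun p => ENNReal.ofReal (Real.exp (θ p)) with hE
  set L := Real.log M with hL
  have hL0 : 0 ≤ L := Real.log_nonneg hM1
  have hmt : ENNReal.ofReal m ≠ ∞ := ENNReal.ofReal_ne_top
  have hm0 : ENNReal.ofReal m ≠ 0 := by simpa using hm
  -- weak Pinsker
  have hpin : ENNReal.ofReal m * ENNReal.ofReal m ≤ H := by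
    have h1 : ∫⁻ x, ENNReal.ofReal (2 * m) * (U x + V x) ∂μ ≤
        ∫⁻ x, (ENNReal.ofReal (f x * Real.log (f x) - f x + 1) +
          ENNReal.ofReal (m ^ 2) * (ENNReal.ofReal (f x) + 2)) ∂μ := by
      refine lintegral_mono fun x => ?_
      have e1 : U x + V x = ENNReal.ofReal |f x - 1| := by
        simp only [hUdef, hVdef]
        rcases le_total (f x) 1 with h | h
        · rw [abs_of_nonpos (by linarith), ENNReal.ofReal_of_nonpos (p := f x - 1) (by linarith),
            zero_add]
          congr 1; ring
        · rw [abs_of_nonneg (by linarith), ENNReal.ofReal_of_nonpos (p := 1 - f x) (by linarith),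
            add_zero]
      have e2 : ENNReal.ofReal (f x) + 2 = ENNReal.ofReal (f x + 2) := by
        rw [ENNReal.ofReal_add (hf0 x) (by norm_num)]; simp
      have p2 : 0 ≤ f x + 2 := by linarith [hf0 x]
      simp only [e1, e2]
      rw [← ENNReal.ofReal_mul (by positivity), ← ENNReal.ofReal_mul (by positivity),
        ← ENNReal.ofReal_add (aux_h_nonneg _ (hf0 x)) (by positivity)]
      exact ENNReal.ofReal_le_ofReal (aux_pinsker _ _ (hf0 x))
    rw [lintegral_const_mul _ (by fun_prop), lintegral_add_left mU, hU, hV, lintegral_add_left mH,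
      lintegral_const_mul _ (by fun_prop), lintegral_add_left (by fun_prop), hf1, ← hH] at h1
    simp only [lintegral_const, measure_univ, mul_one] at h1
    have e3 : ENNReal.ofReal (2 * m) * (ENNReal.ofReal m + ENNReal.ofReal m) =
        ENNReal.ofReal m * ENNReal.ofReal m + ENNReal.ofReal (m ^ 2) * (1 + 2) := by
      rw [ENNReal.ofReal_mul (by norm_num), ENNReal.ofReal_pow hm.le, ENNReal.ofReal_ofNat]
      ring
    rw [e3] at h1
    exact (ENNReal.add_le_add_iff_right (by finiteness)).1 h1
  set P : Set X := {x | 1 < f x} with hPdef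
  have hP : MeasurableSet P := measurableSet_lt measurable_const hf
  have hblock := aux_block μ E (by fun_prop) (fun p => by simp only [hE, hsym])
    (fun p => by simp only [hE]; rw [ENNReal.one_le_ofReal]; exact Real.one_le_exp (hθ0 p))
    P hP M hM hM1
  have hK : 0 < 2 * M - 1 := by linarith
  have hlogK : Real.log (2 * M - 1) ≤ 2 * L := by
    rw [hL, show 2 * Real.log M = Real.log (M ^ 2) by rw [Real.log_pow]; norm_num]
    exact Real.log_le_log hK (by nlinarith [sq_nonneg (M - 1)])
  set h : X → ℝ≥0∞ := fun x => ENNReal.ofReal (f x * Real.log (f x) - f x + 1) with hh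
  -- pointwise
  have hpt : ∀ p : X × X, U p.1 * V p.2 * ENNReal.ofReal (θ p) + U p.1 * V p.2 ≤
      ENNReal.ofReal m⁻¹ * (P.indicator h p.1 * V p.2 + U p.1 * Pᶜ.indicator h p.2)
      + ENNReal.ofReal (2 * L) * (U p.1 * V p.2)
      + ENNReal.ofReal (4 * m ^ 2 / (2 * M - 1)) * (P ×ˢ Pᶜ).indicator E p := by
    rintro ⟨x, y⟩
    by_cases hx : 1 < f x
    swap
    · have : U x = 0 := ENNReal.ofReal_of_nonpos (by linarith)
      simp [this]
    by_cases hy : f y < 1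
    swap
    · have : V y = 0 := ENNReal.ofReal_of_nonpos (by linarith)
      simp [this]
    have hxP : x ∈ P := hx
    have hyP : y ∈ Pᶜ := fun (h : 1 < f y) => by linarith
    have hxy : (x, y) ∈ P ×ˢ Pᶜ := ⟨hxP, hyP⟩
    simp only [Set.indicator_of_mem hxP, Set.indicator_of_mem hyP, Set.indicator_of_mem hxy]
    have hu : 0 ≤ f x - 1 := by linarith
    have hv : 0 ≤ 1 - f y := by linarith
    have hhx := aux_h_nonneg _ (hf0 x)
    have hhy := aux_h_nonneg _ (hf0 y)
    have ht := hθ0 (x, y)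
    have key := aux_main (f x) (f y) m (θ (x, y)) (2 * M - 1) hx (hf0 y) hy hm hm1 hK
    have key2 := mul_le_mul_of_nonneg_left hlogK (mul_nonneg hu hv)
    simp only [hUdef, hVdef, hh, hE]
    rw [← ENNReal.ofReal_mul hu, ← ENNReal.ofReal_mul (by positivity),
      ← ENNReal.ofReal_add (by positivity) (by positivity), ← ENNReal.ofReal_mul hhx,
      ← ENNReal.ofReal_mul hu, ← ENNReal.ofReal_add (by positivity) (by positivity),
      ← ENNReal.ofReal_mul (by positivity), ← ENNReal.ofReal_mul (by positivity),
      ← ENNReal.ofReal_mul (by positivity), ← ENNReal.ofReal_add (by positivity) (by positivity),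
      ← ENNReal.ofReal_add (by positivity) (by positivity)]
    apply ENNReal.ofReal_le_ofReal
    linarith
  have hint := lintegral_mono (μ := μ.prod μ) hpt
  have mh : Measurable h := mH
  have mE : Measurable E := by fun_prop
  have m1 : Measurable (fun p : X × X => U p.1 * V p.2) := by fun_prop
  have mPi : Measurable (P.indicator h) := mh.indicator hP
  have mNi : Measurable (Pᶜ.indicator h) := mh.indicator hP.compl
  have m2 : Measurable (fun p : X × X => P.indicator h p.1 * V p.2) := by fun_prop
  have m3 : Measurable (fun p : X × X => U p.1 * Pᶜ.indicator h p.2) := by fun_prop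
  have i1 : ∫⁻ p : X × X, U p.1 * V p.2 ∂(μ.prod μ) = ENNReal.ofReal m * ENNReal.ofReal m := by
    rw [lintegral_prod_mul mU.aemeasurable mV.aemeasurable, hU, hV]
  rw [lintegral_add_right _ m1, lintegral_add_left (by fun_prop), lintegral_add_left (by fun_prop),
    lintegral_const_mul _ (by fun_prop), lintegral_const_mul _ (by fun_prop),
    lintegral_const_mul _ (mE.indicator (hP.prod hP.compl)), lintegral_add_left m2,
    lintegral_prod_mul mPi.aemeasurable mV.aemeasurable,
    lintegral_prod_mul mU.aemeasurable mNi.aemeasurable, i1, hU, hV,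
    lintegral_indicator (hP.prod hP.compl), lintegral_indicator hP, lintegral_indicator hP.compl]
    at hint
  have eH : ENNReal.ofReal m⁻¹ * ((∫⁻ x in P, h x ∂μ) * ENNReal.ofReal m +
      ENNReal.ofReal m * ∫⁻ x in Pᶜ, h x ∂μ) = H := by
    rw [mul_comm (∫⁻ x in P, h x ∂μ), ← mul_add, lintegral_add_compl _ hP, ← mul_assoc,
      ← ENNReal.ofReal_mul (by positivity), inv_mul_cancel₀ hm.ne', ENNReal.ofReal_one, one_mul]
  rw [eH] at hint
  have hlast : ENNReal.ofReal (4 * m ^ 2 / (2 * M - 1)) * ∫⁻ p in P ×ˢ Pᶜ, E p ∂(μ.prod μ) ≤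
      ENNReal.ofReal m * ENNReal.ofReal m := by
    calc _ ≤ ENNReal.ofReal (4 * m ^ 2 / (2 * M - 1)) * ENNReal.ofReal ((2 * M - 1) / 4) := by
          gcongr
      _ = _ := by
        rw [← ENNReal.ofReal_mul (by positivity), ← ENNReal.ofReal_mul hm.le]
        congr 1; field_simp
  have h2 := (ENNReal.add_le_add_iff_right (by finiteness)).1 (hint.trans (add_le_add_right hlast _))
  rw [prod_withDensity mU mV, lintegral_withDensity_eq_lintegral_mul _ m1 (by fun_prop)]
  calc _ ≤ H + ENNReal.ofReal (2 * L) * (ENNReal.ofReal m * ENNReal.ofReal m) := h2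
    _ ≤ H + ENNReal.ofReal (2 * L) * H := by gcongr
    _ = _ := by
      rw [ENNReal.ofReal_add (by norm_num) (by positivity), ENNReal.ofReal_one, add_mul, one_mul]

end core

/-- Square-exponential moment implies `T₁` with explicit constant: if
`M = ∫∫ e^{b² d(x,y)²/2} dμ dμ < ∞`, then for every probability measure `ν`,
`𝒯_d(ν,μ) ≤ (1/b) √(1 + 2 log M) √(2 H(ν|μ))`. -/
theorem T1_of_square_exponential_moment
    {X : Type*} [MetricSpace X] [CompleteSpace X] [TopologicalSpace.SeparableSpace X]
    [MeasurableSpace X] [BorelSpace X]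
    (μ : Measure X) [IsProbabilityMeasure μ]
    (b M : ℝ) (hb : 0 < b)
    (hM : ∫⁻ p : X × X, ENNReal.ofReal (Real.exp (b ^ 2 * dist p.1 p.2 ^ 2 / 2))
        ∂(μ.prod μ) = ENNReal.ofReal M)
    (ν : Measure X) [IsProbabilityMeasure ν] :
    optCost (fun x y => dist x y) ν μ ≤
      ENNReal.ofReal ((1 / b) * Real.sqrt (1 + 2 * Real.log M)) *
        (2 * relEntropy ν μ) ^ (1 / 2 : ℝ) := by
  have hEm : Measurable (fun p : X × X =>
      ENNReal.ofReal (Real.exp (b ^ 2 * dist p.1 p.2 ^ 2 / 2))) := by fun_prop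
  have hM1 : 1 ≤ M := by
    rw [← ENNReal.one_le_ofReal, ← hM]
    calc (1:ℝ≥0∞) = ∫⁻ p : X × X, 1 ∂(μ.prod μ) := by simp
      _ ≤ _ := lintegral_mono fun p => by
        rw [ENNReal.one_le_ofReal]; exact Real.one_le_exp (by positivity)
  have hL0 : 0 ≤ Real.log M := Real.log_nonneg hM1
  have hC : 0 < (1 / b) * Real.sqrt (1 + 2 * Real.log M) := by positivity
  by_cases hac : ν ≪ μ
  swap
  · have : relEntropy ν μ = ∞ := by simp [relEntropy, hac]
    rw [this, ENNReal.mul_top (by norm_num), ENNReal.top_rpow_of_pos (by norm_num),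
      ENNReal.mul_top (by simpa using hC)]
    exact le_top
  have hrel : relEntropy ν μ = ∫⁻ x, ENNReal.ofReal ((ν.rnDeriv μ x).toReal *
      Real.log (ν.rnDeriv μ x).toReal - (ν.rnDeriv μ x).toReal + 1) ∂μ := by
    simp [relEntropy, hac]
  obtain ⟨f, hf⟩ : ∃ f : X → ℝ, f = fun x => (ν.rnDeriv μ x).toReal := ⟨_, rfl⟩
  have mf : Measurable f := by rw [hf]; exact (Measure.measurable_rnDeriv ν μ).ennreal_toReal
  have hf0 : ∀ x, 0 ≤ f x := fun x => by rw [hf]; exact ENNReal.toReal_nonneg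
  have hν : ν = μ.withDensity (fun x => ENNReal.ofReal (f x)) := by
    conv_lhs => rw [← Measure.withDensity_rnDeriv_eq ν μ hac]
    refine withDensity_congr_ae ?_
    filter_upwards [Measure.rnDeriv_lt_top ν μ] with x hx
    rw [hf, ENNReal.ofReal_toReal hx.ne]
  have hrel' : relEntropy ν μ =
      ∫⁻ x, ENNReal.ofReal (f x * Real.log (f x) - f x + 1) ∂μ := by rw [hrel, hf]
  have hf1 : ∫⁻ x, ENNReal.ofReal (f x) ∂μ = 1 := by
    have : ν Set.univ = 1 := measure_univ
    rw [hν] at this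
    simpa using this
  have mU : Measurable (fun x => ENNReal.ofReal (f x - 1)) := by fun_prop
  have mV : Measurable (fun x => ENNReal.ofReal (1 - f x)) := by fun_prop
  have hVle : ∫⁻ x, ENNReal.ofReal (1 - f x) ∂μ ≤ 1 := by
    calc _ ≤ ∫⁻ x, 1 ∂μ := lintegral_mono fun x => by
          rw [ENNReal.ofReal_le_one]; linarith [hf0 x]
      _ = 1 := by simp
  have hUV : ∫⁻ x, ENNReal.ofReal (f x - 1) ∂μ = ∫⁻ x, ENNReal.ofReal (1 - f x) ∂μ := by
    have : ∫⁻ x, (ENNReal.ofReal (f x) + ENNReal.ofReal (1 - f x)) ∂μ =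
        ∫⁻ x, (1 + ENNReal.ofReal (f x - 1)) ∂μ := by
      refine lintegral_congr fun x => ?_
      rcases le_total (f x) 1 with h | h
      · rw [ENNReal.ofReal_of_nonpos (p := f x - 1) (by linarith),
          ← ENNReal.ofReal_add (hf0 x) (by linarith)]
        simp
      · rw [ENNReal.ofReal_of_nonpos (p := 1 - f x) (by linarith), ← ENNReal.ofReal_one,
          ← ENNReal.ofReal_add (by norm_num) (by linarith)]
        simp
    rw [lintegral_add_right _ mV, lintegral_add_right _ mU, hf1] at this
    simp only [lintegral_one, measure_univ] at this
    exact ((ENNReal.add_right_inj (by norm_num)).1 this).symm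
  obtain ⟨m, hmdef⟩ : ∃ m : ℝ, m = (∫⁻ x, ENNReal.ofReal (1 - f x) ∂μ).toReal := ⟨_, rfl⟩
  have hV : ∫⁻ x, ENNReal.ofReal (1 - f x) ∂μ = ENNReal.ofReal m := by
    rw [hmdef, ENNReal.ofReal_toReal (ne_top_of_le_ne_top ENNReal.one_ne_top hVle)]
  have hU := hUV.trans hV
  have mdiag : Measurable (fun x : X => (x, x)) := by fun_prop
  have hm0 : 0 ≤ m := by rw [hmdef]; exact ENNReal.toReal_nonneg
  rcases hm0.eq_or_lt with hz | hm
  · -- degenerate case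
    rw [← hz, ENNReal.ofReal_zero] at hU hV
    rw [lintegral_eq_zero_iff mU] at hU
    rw [lintegral_eq_zero_iff mV] at hV
    have hνμ : ν = μ := by
      rw [hν]
      conv_rhs => rw [← withDensity_one (μ := μ)]
      refine withDensity_congr_ae ?_
      filter_upwards [hU, hV] with x h1 h2
      simp only [Pi.zero_apply, ENNReal.ofReal_eq_zero] at h1 h2
      have : f x = 1 := by linarith
      simp [this]
    have : optCost (fun x y => dist x y) ν μ = 0 := by
      rw [hνμ]
      refine le_antisymm ?_ (zero_le)
      unfold optCost
      refine (iInf₂_le (μ.map (fun x => (x, x))) ⟨?_, ?_⟩).trans ?_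
      rotate_left
      · rw [Measure.map_map measurable_fst mdiag]; exact Measure.map_id
      · rw [Measure.map_map measurable_snd mdiag]; exact Measure.map_id
      · rw [lintegral_map (by fun_prop) mdiag]
        simp
    rw [this]; exact zero_le
  have h1 := aux_coupling μ (fun x y : X => dist x y) (by fun_prop) (fun x => dist_self x) f mf hf0
    m hm hU hV
  have h2 := aux_core μ (fun p : X × X => b ^ 2 * dist p.1 p.2 ^ 2 / 2) (by fun_prop)
    (fun p => by positivity) (fun p => by simp [dist_comm]) f mf hf0 m hm hU hV hf1 M hM1 hM
  rw [← hν] at h1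
  rw [← hrel'] at h2
  refine h1.trans ?_
  have e : ∀ p : X × X, ENNReal.ofReal (dist p.1 p.2) ^ (2:ℝ) =
      ENNReal.ofReal (2 / b ^ 2) * ENNReal.ofReal (b ^ 2 * dist p.1 p.2 ^ 2 / 2) := by
    intro p
    rw [← ENNReal.ofReal_mul (by positivity), ENNReal.rpow_two, ← ENNReal.ofReal_pow dist_nonneg]
    congr 1; field_simp
  simp only [e]
  rw [lintegral_const_mul _ (by fun_prop)]
  calc _ ≤ (ENNReal.ofReal (2 / b ^ 2) *
        (ENNReal.ofReal (1 + 2 * Real.log M) * relEntropy ν μ)) ^ (1 / 2 : ℝ) := by gcongr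
    _ = (ENNReal.ofReal ((1 / b) * Real.sqrt (1 + 2 * Real.log M)) ^ (2:ℝ) *
        (2 * relEntropy ν μ)) ^ (1 / 2 : ℝ) := by
      congr 1
      rw [ENNReal.rpow_two, ← ENNReal.ofReal_pow hC.le, mul_pow, Real.sq_sqrt (by positivity),
        ← mul_assoc, ← mul_assoc, ← ENNReal.ofReal_mul (by positivity),
        ← ENNReal.ofReal_ofNat 2, ← ENNReal.ofReal_mul (by positivity)]
      congr 2; field_simp
    _ = _ := by
      rw [ENNReal.mul_rpow_of_nonneg _ _ (by norm_num), ← ENNReal.rpow_mul]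
      norm_num
end
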